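/- arXiv:0708.2684 — 5 statements merged into one kernel-verified Lean document; each statement's English description precedes it below -/
import Mathlib

section
/- Let a > b > 0, let Ω = { x + iy : x²/a² + y²/b² ≤ 1 } ⊂ ℂ, let γ ∈ ℝ with γ ≠ (a − b)/(a + b), and let w ∈ ℂ. Then there is at most one z in the open interior { x + iy : x²/a² + y²/b² < 1 } satisfying conj(z) − (1/π)∫_Ω 1/(z − ζ) dA(ζ) − γ z = conj(w); moreover every such interior solution satisfies the linear equation ((a − b)/(a + b) − γ) z = conj(w). -/
open Complex MeasureTheory

lemma ell_D_pos {a b : ℝ} (hb : 0 < b) (hab : b < a) (θ : ℝ) :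
    0 < b ^ 2 * Real.cos θ ^ 2 + a ^ 2 * Real.sin θ ^ 2 := by
  have h := Real.sin_sq_add_cos_sq θ
  have : b ^ 2 < a ^ 2 := by nlinarith
  nlinarith [sq_nonneg (Real.sin θ), pow_pos hb 2, mul_nonneg (sub_nonneg.2 this.le) (sq_nonneg (Real.sin θ))]

lemma ell_E_pos {a b : ℝ} (hb : 0 < b) (hab : b < a) (θ : ℝ) :
    0 < b * Real.cos θ ^ 2 + a * Real.sin θ ^ 2 := by
  have h := Real.sin_sq_add_cos_sq θ
  nlinarith [sq_nonneg (Real.sin θ), mul_nonneg (sub_nonneg.2 hab.le) (sq_nonneg (Real.sin θ))]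

lemma ell_int_D {a b : ℝ} (hb : 0 < b) (hab : b < a) :
    ∫ θ in (-Real.pi)..Real.pi, (b ^ 2 * Real.cos θ ^ 2 + a ^ 2 * Real.sin θ ^ 2)⁻¹
      = 2 * Real.pi / (a * b) := by
  have ha : 0 < a := hb.trans hab
  have hder : ∀ θ ∈ Set.uIcc (-Real.pi) Real.pi, HasDerivAt (fun θ : ℝ => (θ + Real.arctan
      ((a - b) * (Real.sin θ * Real.cos θ) / (b * Real.cos θ ^ 2 + a * Real.sin θ ^ 2))) / (a * b))
      (b ^ 2 * Real.cos θ ^ 2 + a ^ 2 * Real.sin θ ^ 2)⁻¹ θ := by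
    intro θ _
    have hE := ell_E_pos hb hab θ
    have hD := ell_D_pos hb hab θ
    have hs := Real.hasDerivAt_sin θ
    have hc := Real.hasDerivAt_cos θ
    have h1 := ((((hs.mul hc).const_mul (a - b)).div
      (((hc.pow 2).const_mul b).add ((hs.pow 2).const_mul a)) hE.ne').arctan)
    have h2 := ((hasDerivAt_id θ).add h1).div_const (a * b)
    refine h2.congr_deriv ?_
    have h := Real.sin_sq_add_cos_sq θ
    simp only [Pi.add_apply, Pi.mul_apply, Pi.pow_apply, Pi.div_apply]
    generalize Real.sin θ = s at *
    generalize Real.cos θ = c at *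
    have key : (b * c ^ 2 + a * s ^ 2) ^ 2 + ((a - b) * (s * c)) ^ 2
        = b ^ 2 * c ^ 2 + a ^ 2 * s ^ 2 := by
      linear_combination (b ^ 2 * c ^ 2 + a ^ 2 * s ^ 2) * h
    have key2 : 1 + ((a - b) * (s * c) / (b * c ^ 2 + a * s ^ 2)) ^ 2
      = (b ^ 2 * c ^ 2 + a ^ 2 * s ^ 2) / (b * c ^ 2 + a * s ^ 2) ^ 2 := by
      rw [← key]; field_simp
    rw [key2]
    field_simp
    norm_num
    linear_combination ((a-b)*(b*c^2-a*s^2)+a*b)*h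
  rw [intervalIntegral.integral_eq_sub_of_hasDerivAt hder]
  · simp; field_simp; ring
  · apply Continuous.intervalIntegrable
    exact Continuous.inv₀ (by fun_prop) (fun θ => (ell_D_pos hb hab θ).ne')

lemma antiper_int (f : ℝ → ℂ) (hf : ∀ x, f (x + Real.pi) = - f x) :
    ∫ θ in (-Real.pi)..Real.pi, f θ = 0 := by
  have hp : Function.Periodic f (2 * Real.pi) := by
    intro x
    rw [two_mul, ← add_assoc, hf, hf, neg_neg]
  have h1 := hp.intervalIntegral_add_eq (-Real.pi) 0
  have h2 : ∫ θ in (-Real.pi)..Real.pi, f (θ + Real.pi) = ∫ θ in (0:ℝ)..(0 + 2 * Real.pi), f θ := by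
    rw [intervalIntegral.integral_comp_add_right]
    congr 1 <;> ring
  simp only [hf, intervalIntegral.integral_neg] at h2
  rw [← h1] at h2
  have : -Real.pi + 2 * Real.pi = Real.pi := by ring
  rw [this] at h2
  exact self_eq_neg.1 h2.symm

lemma ell_int_odd {a b : ℝ} :
    ∫ θ in (-Real.pi)..Real.pi, (Real.sin θ * Real.cos θ) *
      (b ^ 2 * Real.cos θ ^ 2 + a ^ 2 * Real.sin θ ^ 2)⁻¹ = 0 := by
  have h := intervalIntegral.integral_comp_neg (a := -Real.pi) (b := Real.pi)
    (fun θ => (Real.sin θ * Real.cos θ) *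
      (b ^ 2 * Real.cos θ ^ 2 + a ^ 2 * Real.sin θ ^ 2)⁻¹)
  simp only [Real.sin_neg, Real.cos_neg, neg_neg, neg_mul, intervalIntegral.integral_neg, neg_sq] at h
  linarith

lemma ell_int_J {a b : ℝ} (hb : 0 < b) (hab : b < a) (x y : ℝ) :
    ∫ θ in (-Real.pi)..Real.pi, (((b ^ 2 * x * Real.cos θ + a ^ 2 * y * Real.sin θ) *
      (b ^ 2 * Real.cos θ ^ 2 + a ^ 2 * Real.sin θ ^ 2)⁻¹ : ℝ) : ℂ) * 
        ((Real.cos θ : ℂ) - (Real.sin θ : ℂ) * I) 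
      = (2 * Real.pi * (b * x) / (a + b) : ℝ) - (2 * Real.pi * (a * y) / (a + b) : ℝ) * I := by
  have ha : 0 < a := hb.trans hab
  have hd : a ^ 2 - b ^ 2 ≠ 0 := by nlinarith
  have hs : a + b ≠ 0 := by positivity
  have hD := fun θ => (ell_D_pos hb hab θ).ne'
  have hci : Continuous fun θ : ℝ => (b ^ 2 * Real.cos θ ^ 2 + a ^ 2 * Real.sin θ ^ 2)⁻¹ := 
    Continuous.inv₀ (by fun_prop) hD
  have e : ∀ θ : ℝ, (((b ^ 2 * x * Real.cos θ + a ^ 2 * y * Real.sin θ) *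
      (b ^ 2 * Real.cos θ ^ 2 + a ^ 2 * Real.sin θ ^ 2)⁻¹ : ℝ) : ℂ) * 
        ((Real.cos θ : ℂ) - (Real.sin θ : ℂ) * I) =
      ((b ^ 2 * x / (a ^ 2 - b ^ 2) * (a ^ 2 * (b ^ 2 * Real.cos θ ^ 2 + a ^ 2 * Real.sin θ ^ 2)⁻¹ - 1)
        + a ^ 2 * y * ((Real.sin θ * Real.cos θ) *
      (b ^ 2 * Real.cos θ ^ 2 + a ^ 2 * Real.sin θ ^ 2)⁻¹) : ℝ) : ℂ)
      - ((a ^ 2 * y / (a ^ 2 - b ^ 2) * (1 - b ^ 2 * (b ^ 2 * Real.cos θ ^ 2 + a ^ 2 * Real.sin θ ^ 2)⁻¹)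
        + b ^ 2 * x * ((Real.sin θ * Real.cos θ) *
      (b ^ 2 * Real.cos θ ^ 2 + a ^ 2 * Real.sin θ ^ 2)⁻¹) : ℝ) : ℂ) * I := by
    intro θ
    have h := Real.sin_sq_add_cos_sq θ
    have h1 : a ^ 2 * (b ^ 2 * Real.cos θ ^ 2 + a ^ 2 * Real.sin θ ^ 2)⁻¹ - 1 = 
      (a^2-b^2) * (Real.cos θ ^ 2 * (b ^ 2 * Real.cos θ ^ 2 + a ^ 2 * Real.sin θ ^ 2)⁻¹) := by
      have := hD θ
      field_simp
      linear_combination -a^2*h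
    have h2 : 1 - b ^ 2 * (b ^ 2 * Real.cos θ ^ 2 + a ^ 2 * Real.sin θ ^ 2)⁻¹ = 
      (a^2-b^2) * (Real.sin θ ^ 2 * (b ^ 2 * Real.cos θ ^ 2 + a ^ 2 * Real.sin θ ^ 2)⁻¹) := by
      have := hD θ
      field_simp
      linear_combination b^2*h
    rw [h1, h2, ← mul_assoc, ← mul_assoc (a ^ 2 * y / (a ^ 2 - b ^ 2)), div_mul_cancel₀ _ hd, div_mul_cancel₀ _ hd]
    push_cast
    ring
  have i1 : IntervalIntegrable (fun θ : ℝ => (b ^ 2 * Real.cos θ ^ 2 + a ^ 2 * Real.sin θ ^ 2)⁻¹) volume (-Real.pi) Real.pi := hci.intervalIntegrable _ _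
  have i2 : IntervalIntegrable (fun θ : ℝ => (Real.sin θ * Real.cos θ) * (b ^ 2 * Real.cos θ ^ 2 + a ^ 2 * Real.sin θ ^ 2)⁻¹) volume (-Real.pi) Real.pi := Continuous.intervalIntegrable (by fun_prop) _ _
  simp_rw [e]
  rw [intervalIntegral.integral_sub (Continuous.intervalIntegrable (by fun_prop) _ _) (Continuous.intervalIntegrable (by fun_prop) _ _),
    intervalIntegral.integral_mul_const, intervalIntegral.integral_ofReal, intervalIntegral.integral_ofReal,
    intervalIntegral.integral_add (Continuous.intervalIntegrable (by fun_prop) _ _) (Continuous.intervalIntegrable (by fun_prop) _ _),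
    intervalIntegral.integral_add (Continuous.intervalIntegrable (by fun_prop) _ _) (Continuous.intervalIntegrable (by fun_prop) _ _)]
  simp only [intervalIntegral.integral_const_mul, ell_int_odd]
  rw [intervalIntegral.integral_sub (Continuous.intervalIntegrable (by fun_prop) _ _) (Continuous.intervalIntegrable (by fun_prop) _ _),
    intervalIntegral.integral_sub (Continuous.intervalIntegrable (by fun_prop) _ _) (Continuous.intervalIntegrable (by fun_prop) _ _)]
  simp only [intervalIntegral.integral_const_mul, ell_int_D hb hab, intervalIntegral.integral_const]
  have e1 : b ^ 2 * x / (a ^ 2 - b ^ 2) * (a ^ 2 * (2 * Real.pi / (a * b)) - (Real.pi - -Real.pi) • 1) + a ^ 2 * y * 0 = 2 * Real.pi * (b * x) / (a + b) := by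
    rw [smul_eq_mul]; field_simp; ring
  have e2 : a ^ 2 * y / (a ^ 2 - b ^ 2) * ((Real.pi - -Real.pi) • 1 - b ^ 2 * (2 * Real.pi / (a * b))) + b ^ 2 * x * 0 = 2 * Real.pi * (a * y) / (a + b) := by
    rw [smul_eq_mul]; field_simp; ring
  rw [e1, e2]

/-- Membership along a ray from an interior point. -/
lemma ray_iff {A B C r : ℝ} (hA : 0 < A) (hC : 0 < C) (hr : 0 < r) :
    A * r ^ 2 + 2 * B * r ≤ C ↔ r ≤ (Real.sqrt (B ^ 2 + A * C) - B) / A := by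
  rw [le_div_iff₀ hA, le_sub_iff_add_le]
  have hAC := mul_pos hA hC
  constructor
  · intro h
    apply Real.le_sqrt_of_sq_le
    nlinarith [mul_le_mul_of_nonneg_left h hA.le]
  · intro h
    have h0 : 0 ≤ Real.sqrt (B ^ 2 + A * C) := Real.sqrt_nonneg _
    have hs : Real.sqrt (B ^ 2 + A * C) ^ 2 = B ^ 2 + A * C := Real.sq_sqrt (by positivity)
    have h3 : -Real.sqrt (B ^ 2 + A * C) < r * A + B := by
      have : |B| < Real.sqrt (B ^ 2 + A * C) := by
        apply Real.lt_sqrt_of_sq_lt; rw [sq_abs]; linarith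
      have := (abs_lt.1 this).1
      nlinarith [mul_pos hr hA]
    have h4 : (r * A + B) ^ 2 ≤ Real.sqrt (B ^ 2 + A * C) ^ 2 := sq_le_sq' h3.le h
    rw [hs] at h4
    have : A * (A * r ^ 2 + 2 * B * r) ≤ A * C := by nlinarith
    exact le_of_mul_le_mul_left this hA

lemma ell_integral {a b : ℝ} (hb : 0 < b) (hab : b < a) (z : ℂ)
    (hz : z.re ^ 2 / a ^ 2 + z.im ^ 2 / b ^ 2 < 1) :
    ∫ ζ in {p : ℂ | p.re ^ 2 / a ^ 2 + p.im ^ 2 / b ^ 2 ≤ 1}, (z - ζ)⁻¹ =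
      (2 * Real.pi * (b * z.re) / (a + b) : ℝ) - (2 * Real.pi * (a * z.im) / (a + b) : ℝ) * I := by
  have ha : 0 < a := hb.trans hab
  obtain ⟨x, y⟩ := z
  simp only at hz ⊢
  set Ω : Set ℂ := {p : ℂ | p.re ^ 2 / a ^ 2 + p.im ^ 2 / b ^ 2 ≤ 1} with hΩ
  have hΩm : MeasurableSet Ω := by
    apply measurableSet_le <;> fun_prop
  set A : ℝ → ℝ := fun θ => b ^ 2 * Real.cos θ ^ 2 + a ^ 2 * Real.sin θ ^ 2 with hAdef
  set B : ℝ → ℝ := fun θ => b ^ 2 * x * Real.cos θ + a ^ 2 * y * Real.sin θ with hBdef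
  set C : ℝ := a ^ 2 * b ^ 2 - b ^ 2 * x ^ 2 - a ^ 2 * y ^ 2 with hCdef
  have hA : ∀ θ, 0 < A θ := ell_D_pos hb hab
  have hC : 0 < C := by
    rw [div_add_div _ _ (by positivity) (by positivity), div_lt_one (by positivity)] at hz
    rw [hCdef]; linarith
  set R : ℝ → ℝ := fun θ => (Real.sqrt (B θ ^ 2 + A θ * C) - B θ) / A θ with hR
  have hAc : Continuous A := by fun_prop
  have hBc : Continuous B := by fun_prop
  have hRc : Continuous R := by
    apply Continuous.div (by fun_prop) hAc (fun θ => (hA θ).ne')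
  have hRpos : ∀ θ, 0 ≤ R θ := by
    intro θ
    apply div_nonneg _ (hA θ).le
    have : B θ ≤ Real.sqrt (B θ ^ 2 + A θ * C) :=
      Real.le_sqrt_of_sq_le (by nlinarith [mul_pos (hA θ) hC])
    linarith
  have hmem : ∀ r θ : ℝ, 0 < r →
      ((r : ℂ) * (Real.cos θ + Real.sin θ * I) + ⟨x, y⟩ ∈ Ω ↔ r ≤ R θ) := by
    intro r θ hr
    rw [hR, ← ray_iff (hA θ) hC hr, hΩ]
    simp only [Set.mem_ofPred_eq, add_re, mul_re, ofReal_re, ofReal_im, I_re, I_im, add_im, mul_im]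
    rw [div_add_div _ _ (by positivity) (by positivity), div_le_one (by positivity), hAdef, hBdef, hCdef]
    constructor <;> intro h <;> nlinarith [h]
  rw [← integral_indicator hΩm, ← integral_add_right_eq_self _ (⟨x, y⟩ : ℂ),
    ← Complex.integral_comp_polarCoord_symm]
  set f : ℝ × ℝ → ℂ := {p : ℝ × ℝ | p.1 ≤ R p.2}.indicator
    (fun p => -((Real.cos p.2 : ℂ) - (Real.sin p.2 : ℂ) * I)) with hf
  have hcs : ∀ θ : ℝ, ((Real.cos θ : ℂ) + (Real.sin θ : ℂ) * I) * 
      ((Real.cos θ : ℂ) - (Real.sin θ : ℂ) * I) = 1 := by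
    intro θ
    have h : (Real.sin θ : ℂ) ^ 2 + (Real.cos θ : ℂ) ^ 2 = 1 := by
      exact_mod_cast Real.sin_sq_add_cos_sq θ
    linear_combination h - (Real.sin θ : ℂ) ^ 2 * I_sq
  have htm : MeasurableSet (Set.Ioi (0 : ℝ) ×ˢ Set.Ioo (-Real.pi) Real.pi) :=
    measurableSet_Ioi.prod measurableSet_Ioo
  have e1 : ∫ p in polarCoord.target, p.1 • Ω.indicator (fun ζ => ((⟨x, y⟩ : ℂ) - ζ)⁻¹)
      (Complex.polarCoord.symm p + ⟨x, y⟩) =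
      ∫ p in Set.Ioi (0 : ℝ) ×ˢ Set.Ioo (-Real.pi) Real.pi, f p := by
    apply setIntegral_congr_fun htm
    rintro ⟨r, θ⟩ ⟨hr, hθ⟩
    have hr : 0 < r := hr
    have hm := hmem r θ hr
    simp only [Complex.polarCoord_symm_apply, hf, Set.indicator, hm, Set.mem_ofPred_eq]
    split_ifs
    · have h0 : (r : ℂ) ≠ 0 := by exact_mod_cast hr.ne'
      rw [sub_add_cancel_right, inv_neg, mul_inv, real_smul, inv_eq_of_mul_eq_one_right (hcs θ)]
      field_simp
    · simp
  rw [e1]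
  have hfm : Measurable f := by
    apply Measurable.indicator
    · fun_prop
    · exact measurableSet_le (by fun_prop) (by fun_prop)
  obtain ⟨M, hM⟩ : ∃ M, ∀ θ ∈ Set.Icc (-Real.pi) Real.pi, R θ ≤ M := by
    obtain ⟨M, hM⟩ := (isCompact_Icc.image_of_continuousOn (hRc.continuousOn (s := Set.Icc (-Real.pi) Real.pi))).bddAbove
    exact ⟨M, fun θ h => hM ⟨θ, h, rfl⟩⟩
  have hfb : ∀ p, ‖f p‖ ≤ 2 := by
    intro p
    rw [hf]
    refine (norm_indicator_le_norm_self _ _).trans ?_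
    rw [norm_neg]
    refine (norm_sub_le _ _).trans ?_
    rw [norm_mul, norm_I, mul_one, norm_real, norm_real, Real.norm_eq_abs, Real.norm_eq_abs]
    linarith [Real.abs_cos_le_one p.2, Real.abs_sin_le_one p.2]
  have hfi : IntegrableOn f (Set.Ioi (0 : ℝ) ×ˢ Set.Ioo (-Real.pi) Real.pi) (volume.prod volume) := by
    have h1 : IntegrableOn f (Set.Ioc (0 : ℝ) M ×ˢ Set.Ioo (-Real.pi) Real.pi) (volume.prod volume) := by
      apply Measure.integrableOn_of_bounded (M := 2)
      · rw [Measure.prod_prod]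
        exact (ENNReal.mul_lt_top (by simp) (by simp)).ne
      · exact hfm.aestronglyMeasurable
      · exact Filter.Eventually.of_forall hfb
    refine h1.of_forall_sdiff_eq_zero htm ?_
    rintro ⟨r, θ⟩ ⟨⟨hr, hθ⟩, hn⟩
    rw [hf]
    apply Set.indicator_of_notMem
    intro hle
    exact hn ⟨⟨hr, le_trans hle (hM θ (Set.Ioo_subset_Icc_self hθ))⟩, hθ⟩
  have hfi' : Integrable f ((volume.restrict (Set.Ioi (0 : ℝ))).prod
      (volume.restrict (Set.Ioo (-Real.pi) Real.pi))) := by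
    rw [Measure.prod_restrict]; exact hfi
  rw [Measure.volume_eq_prod, ← Measure.prod_restrict, integral_prod_symm _ hfi']
  have e2 : ∀ θ : ℝ, ∫ r in Set.Ioi (0 : ℝ), f (r, θ) =
      (R θ : ℂ) * -((Real.cos θ : ℂ) - (Real.sin θ : ℂ) * I) := by
    intro θ
    have : ∀ r, f (r, θ) = (Set.Iic (R θ)).indicator
      (fun _ => -((Real.cos θ : ℂ) - (Real.sin θ : ℂ) * I)) r := by
      intro r; rfl
    simp_rw [this]
    rw [setIntegral_indicator measurableSet_Iic, Set.Ioi_inter_Iic, setIntegral_const, real_smul]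
    simp [Measure.real, hRpos θ]
  simp_rw [e2]
  rw [← integral_Ioc_eq_integral_Ioo, ← intervalIntegral.integral_of_le (by linarith [Real.pi_pos])]
  have e3 : ∀ θ : ℝ, (R θ : ℂ) * -((Real.cos θ : ℂ) - (Real.sin θ : ℂ) * I) =
      ((B θ * (A θ)⁻¹ : ℝ) : ℂ) * ((Real.cos θ : ℂ) - (Real.sin θ : ℂ) * I) - 
      ((Real.sqrt (B θ ^ 2 + A θ * C) * (A θ)⁻¹ : ℝ) : ℂ) * ((Real.cos θ : ℂ) - (Real.sin θ : ℂ) * I) := by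
    intro θ
    simp only [hR, div_eq_mul_inv]
    push_cast
    ring
  have hAi : Continuous fun θ => (A θ)⁻¹ := hAc.inv₀ (fun θ => (hA θ).ne')
  simp_rw [e3]
  rw [intervalIntegral.integral_sub (Continuous.intervalIntegrable (by fun_prop) _ _)
    (Continuous.intervalIntegrable (by fun_prop) _ _), antiper_int (fun θ => 
      ((Real.sqrt (B θ ^ 2 + A θ * C) * (A θ)⁻¹ : ℝ) : ℂ) * ((Real.cos θ : ℂ) - (Real.sin θ : ℂ) * I)), sub_zero]
  · exact ell_int_J hb hab x y
  · intro θ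
    have hA' : A (θ + Real.pi) = A θ := by simp [hAdef]
    have hB' : B (θ + Real.pi) = - B θ := by simp [hBdef]; ring
    rw [hA', hB', Real.cos_add_pi, Real.sin_add_pi, neg_sq]
    push_cast
    ring

/-- A uniform elliptic lens with shear `γ ≠ (a-b)/(a+b)` produces at most one
dim image (image strictly inside the ellipse), and any such image satisfies the
linear equation `((a-b)/(a+b) - γ) z = conj w`. -/
theorem elliptic_lens_at_most_one_dim_image
    (a b : ℝ) (hb : 0 < b) (hab : b < a) (γ : ℝ)
    (hγ : γ ≠ (a - b) / (a + b)) (w : ℂ)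
    (Ω : Set ℂ) (hΩ : Ω = {p : ℂ | p.re ^ 2 / a ^ 2 + p.im ^ 2 / b ^ 2 ≤ 1})
    (intΩ : Set ℂ)
    (hintΩ : intΩ = {p : ℂ | p.re ^ 2 / a ^ 2 + p.im ^ 2 / b ^ 2 < 1}) :
    (∀ z₁ ∈ intΩ, ∀ z₂ ∈ intΩ,
      starRingEnd ℂ z₁ - (Real.pi : ℂ)⁻¹ * (∫ ζ in Ω, (z₁ - ζ)⁻¹) - (γ : ℂ) * z₁
          = starRingEnd ℂ w →
      starRingEnd ℂ z₂ - (Real.pi : ℂ)⁻¹ * (∫ ζ in Ω, (z₂ - ζ)⁻¹) - (γ : ℂ) * z₂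
          = starRingEnd ℂ w →
      z₁ = z₂) ∧
    (∀ z ∈ intΩ,
      starRingEnd ℂ z - (Real.pi : ℂ)⁻¹ * (∫ ζ in Ω, (z - ζ)⁻¹) - (γ : ℂ) * z
          = starRingEnd ℂ w →
      (((a - b) / (a + b) - γ : ℝ) : ℂ) * z = starRingEnd ℂ w) := by
  have ha : 0 < a := hb.trans hab
  have hs : a + b ≠ 0 := by positivity
  have main : ∀ z ∈ intΩ,
      starRingEnd ℂ z - (Real.pi : ℂ)⁻¹ * (∫ ζ in Ω, (z - ζ)⁻¹) - (γ : ℂ) * z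
          = starRingEnd ℂ w →
      (((a - b) / (a + b) - γ : ℝ) : ℂ) * z = starRingEnd ℂ w := by
    intro z hz h
    rw [hintΩ] at hz
    rw [hΩ, ell_integral hb hab z hz] at h
    rw [← h]
    have hpi := Real.pi_ne_zero
    rw [← ofReal_inv]
    apply Complex.ext
    · simp only [sub_re, sub_im, mul_re, mul_im, ofReal_re, ofReal_im, I_re, I_im, conj_re, conj_im]
      field_simp
      ring
    · simp only [sub_re, sub_im, mul_re, mul_im, ofReal_re, ofReal_im, I_re, I_im, conj_re, conj_im]
      field_simp
      ring
  refine ⟨fun z₁ h₁ z₂ h₂ e₁ e₂ => ?_, main⟩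
  have h := (main z₁ h₁ e₁).trans (main z₂ h₂ e₂).symm
  refine mul_left_cancel₀ ?_ h
  exact_mod_cast sub_ne_zero.2 hγ.symm
end

section
/- Let a > b > 0, let Ω = { x + iy : x²/a² + y²/b² ≤ 1 } ⊂ ℂ with boundary ellipse ∂Ω = { x + iy : x²/a² + y²/b² = 1 }, let γ ∈ ℝ and w ∈ ℂ. Consider the set S = { z ∈ ℂ : z ∉ ∂Ω and conj(z) − (1/π)∫_Ω 1/(z − ζ) dA(ζ) − γ z = conj(w) }. If S is finite, then S has at most 5 elements (at most 4 outside Ω and at most 1 inside). -/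
open Complex MeasureTheory

lemma ell_integrable (z : ℂ) (Ω : Set ℂ) (hΩ : MeasurableSet Ω) (hb : Bornology.IsBounded Ω) :
    Integrable (Ω.indicator fun ζ => (z - ζ)⁻¹) := by
  rw [integrable_indicator_iff hΩ]
  have h0 : LocallyIntegrable (fun ζ : ℂ => ζ⁻¹) := by
    refine locallyIntegrable_of_norm_le_rpow (C := 1) (α := 1) (by simp) (by simp) ?_
      (by fun_prop)
    filter_upwards with x
    rw [norm_inv, Real.rpow_neg_one, one_mul]
  obtain ⟨R, hR⟩ := hb.subset_closedBall z
  have h1 : IntegrableOn (fun ζ : ℂ => ζ⁻¹) (Metric.closedBall 0 R) :=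
    h0.integrableOn_isCompact (isCompact_closedBall _ _)
  rw [← integrable_indicator_iff Metric.isClosed_closedBall.measurableSet] at h1
  have h2 := h1.comp_sub_left z
  refine IntegrableOn.mono_set ?_ hR
  rw [← integrable_indicator_iff Metric.isClosed_closedBall.measurableSet]
  refine h2.congr (Filter.Eventually.of_forall fun ζ => ?_)
  simp [Set.indicator, dist_eq_norm, norm_sub_rev]

lemma lin_change (a b : ℝ) (ha : 0 < a) (hb : 0 < b) (f : ℝ × ℝ → ℂ) (hf : Integrable f) :
    Integrable (fun p : ℝ × ℝ => f (a * p.1, b * p.2)) ∧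
    ∫ p, f p = a * b * ∫ p : ℝ × ℝ, f (a * p.1, b * p.2) := by
  let L : (ℝ × ℝ) ≃L[ℝ] (ℝ × ℝ) :=
    (ContinuousLinearEquiv.unitsEquivAut ℝ (Units.mk0 a ha.ne')).prodCongr
      (ContinuousLinearEquiv.unitsEquivAut ℝ (Units.mk0 b hb.ne'))
  let M : (ℝ × ℝ) →ₗ[ℝ] (ℝ × ℝ) := LinearMap.prodMap (a • LinearMap.id) (b • LinearMap.id)
  have hML : (M : ℝ × ℝ → ℝ × ℝ) = L := by
    ext p <;> simp [M, L, mul_comm]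
  have hdet : LinearMap.det M = a * b := by
    simp [M, LinearMap.det_prodMap]
  have hd0 : LinearMap.det M ≠ 0 := by rw [hdet]; positivity
  have hmap := Measure.map_linearMap_addHaar_eq_smul_addHaar (volume : Measure (ℝ × ℝ)) hd0
  rw [hdet, hML] at hmap
  have hLf : (fun p : ℝ × ℝ => f (a * p.1, b * p.2)) = f ∘ L.toHomeomorph.toMeasurableEquiv := by
    ext p; simp [L, mul_comm]
  have hmap' : Measure.map (L.toHomeomorph.toMeasurableEquiv) volume =
    ENNReal.ofReal |(a * b)⁻¹| • (volume : Measure (ℝ × ℝ)) := hmap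
  constructor
  · rw [hLf, ← integrable_map_equiv, hmap']
    exact hf.smul_measure ENNReal.ofReal_ne_top
  · have : ∫ p : ℝ × ℝ, f (a * p.1, b * p.2) = ∫ p, f p ∂(Measure.map (L.toHomeomorph.toMeasurableEquiv) volume) := by
      rw [integral_map_equiv]
      exact congrArg _ hLf
    rw [this, hmap', integral_smul_measure, ENNReal.toReal_ofReal (abs_nonneg _),
      abs_of_pos (by positivity), Complex.real_smul]
    push_cast
    have : (a : ℂ) ≠ 0 := by exact_mod_cast ha.ne'
    have : (b : ℂ) ≠ 0 := by exact_mod_cast hb.ne'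
    field_simp

lemma polar_fubini (f : ℝ × ℝ → ℂ) (hf : Integrable f) :
    ∫ p, f p = ∫ r in Set.Ioi (0:ℝ), ∫ θ in Set.Ioo (-Real.pi) Real.pi,
      r • f (r * Real.cos θ, r * Real.sin θ) := by
  rw [← integral_comp_polarCoord_symm]
  have hint : IntegrableOn (fun p : ℝ × ℝ => p.1 • f (polarCoord.symm p)) polarCoord.target := by
    have h := (integrableOn_image_iff_integrableOn_abs_det_fderiv_smul volume
      (polarCoord.open_target.measurableSet)
      (fun p _ => (hasFDerivAt_polarCoord_symm p).hasFDerivWithinAt) polarCoord.symm.injOn f).1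
      hf.integrableOn
    refine h.congr_fun (fun p hp => ?_) polarCoord.open_target.measurableSet
    simp only [det_fderivPolarCoordSymm]
    rw [abs_of_pos hp.1]
  have := setIntegral_prod (μ := volume) (ν := volume) (s := Set.Ioi (0:ℝ)) (t := Set.Ioo (-Real.pi) Real.pi) (fun p : ℝ × ℝ => p.1 • f (polarCoord.symm p)) hint
  rw [polarCoord_target]
  refine this.trans ?_
  simp

lemma circ_out {v : ℂ} (hv : 1 < ‖v‖) : (∮ u in C(0, 1), (u - v)⁻¹) = 0 := by
  have hne : ∀ u ∈ Metric.closedBall (0:ℂ) 1, u - v ≠ 0 := by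
    intro u hu h
    rw [sub_eq_zero] at h
    subst h
    simp at hu; linarith
  refine circleIntegral_eq_zero_of_differentiable_on_off_countable zero_le_one
    Set.countable_empty ?_ ?_
  · exact ContinuousOn.inv₀ (by fun_prop) hne
  · intro u hu
    exact DifferentiableAt.inv (by fun_prop) (hne u (Metric.ball_subset_closedBall hu.1))

lemma circ_in {v : ℂ} (hv : ‖v‖ < 1) : (∮ u in C(0, 1), (u - v)⁻¹) = 2 * Real.pi * I :=
  circleIntegral.integral_sub_inv_of_mem_ball (by simpa using hv)

lemma inner_gen (a b r : ℝ) (z s : ℂ) (hb : 0 < b) (hab : b < a) (hr : 0 < r)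
    (hs : s ^ 2 = z ^ 2 - (a ^ 2 - b ^ 2 : ℝ) * r ^ 2) (hs0 : s ≠ 0)
    (h1 : ‖(z + s) / ((a + b) * r : ℝ)‖ ≠ 1) (h2 : ‖(z - s) / ((a + b) * r : ℝ)‖ ≠ 1) :
    ∫ θ in Set.Ioo (-Real.pi) Real.pi,
      (z - (⟨a * (r * Real.cos θ), b * (r * Real.sin θ)⟩ : ℂ))⁻¹ =
    I / s * ((∮ u in C(0, 1), (u - (z + s) / ((a + b) * r : ℝ))⁻¹) -
      ∮ u in C(0, 1), (u - (z - s) / ((a + b) * r : ℝ))⁻¹) := by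
  set v1 : ℂ := (z + s) / ((a + b) * r : ℝ) with hv1
  set v2 : ℂ := (z - s) / ((a + b) * r : ℝ) with hv2
  have hci : ∀ v : ℂ, ‖v‖ ≠ 1 → CircleIntegrable (fun u => (u - v)⁻¹) 0 1 := by
    intro v hv
    rw [circleIntegrable_sub_inv_iff]
    right
    simpa using hv
  rw [← circleIntegral.integral_sub (hci _ h1) (hci _ h2)]
  rw [← integral_Ioc_eq_integral_Ioo, ← intervalIntegral.integral_of_le (by linarith [Real.pi_pos])]
  have hper : Function.Periodic (fun θ : ℝ => (z - (⟨a * (r * Real.cos θ), b * (r * Real.sin θ)⟩ : ℂ))⁻¹) (2 * Real.pi) := by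
    intro θ; simp
  have := hper.intervalIntegral_add_eq (-Real.pi) 0
  rw [show -Real.pi + 2 * Real.pi = Real.pi by ring] at this
  rw [this, zero_add, circleIntegral, ← intervalIntegral.integral_const_mul]
  refine intervalIntegral.integral_congr fun θ _ => ?_
  simp only [deriv_circleMap, smul_eq_mul]
  have hu : circleMap 0 1 θ = Real.cos θ + Real.sin θ * I := by
    simp [circleMap, Complex.exp_mul_I]
  set u := circleMap 0 1 θ with hudef
  have hun : ‖u‖ = 1 := by simp [u]
  have hu0 : u ≠ 0 := by intro h; simp [h] at hun
  have hu1 : u - v1 ≠ 0 := by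
    intro h; rw [sub_eq_zero] at h; exact h1 (h ▸ hun)
  have hu2 : u - v2 ≠ 0 := by
    intro h; rw [sub_eq_zero] at h; exact h2 (h ▸ hun)
  have hK : (((a + b) * r : ℝ) : ℂ) ≠ 0 := by
    have : 0 < (a + b) * r := mul_pos (by linarith) hr
    exact_mod_cast this.ne'
  have hcs : (Real.cos θ : ℂ) ^ 2 + (Real.sin θ : ℂ) ^ 2 = 1 := by
    exact_mod_cast Real.cos_sq_add_sin_sq θ
  have key : u * (z - (⟨a * (r * Real.cos θ), b * (r * Real.sin θ)⟩ : ℂ)) =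
      -(((a + b) * r : ℝ) / 2) * (u - v1) * (u - v2) := by
    have e : (⟨a * (r * Real.cos θ), b * (r * Real.sin θ)⟩ : ℂ) =
        a * (r * Real.cos θ) + b * (r * Real.sin θ) * I := by
      apply Complex.ext
      · simp [-Complex.ofReal_cos, -Complex.ofReal_sin]
      · simp [-Complex.ofReal_cos, -Complex.ofReal_sin]
    have p12 : ((a + b) * r : ℝ) * (v1 + v2) = 2 * z := by
      rw [hv1, hv2]; field_simp; ring
    have q12 : ((a + b) * r : ℝ) * (v1 * v2) = (a - b) * r := by
      have : ((a + b) * r : ℝ) * (((a + b) * r : ℝ) * (v1 * v2)) = ((a + b) * r : ℝ) * ((a - b) * r) := by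
        have : ((a + b) * r : ℝ) * (((a + b) * r : ℝ) * (v1 * v2)) = (z + s) * (z - s) := by
          rw [hv1, hv2]; field_simp
        rw [this]
        push_cast at hs ⊢
        linear_combination -hs
      exact mul_left_cancel₀ hK this
    rw [e]
    have hI : I ^ 2 = -1 := I_sq
    have : -(((a + b) * r : ℝ) / 2) * (u - v1) * (u - v2) =
      -(((a + b) * r : ℝ) / 2) * u ^ 2 + z * u - (a - b) * r / 2 := by
      linear_combination (u / 2) * p12 - q12 / 2
    rw [this, hu]
    push_cast at hcs ⊢
    linear_combination (-(a - b) * r / 2) * hcs + (- (b:ℂ) * r * Complex.sin θ ^ 2 + (a+b)*r/2 * Complex.sin θ ^ 2) * hI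
  have hne : z - (⟨a * (r * Real.cos θ), b * (r * Real.sin θ)⟩ : ℂ) ≠ 0 := by
    intro h
    rw [h, mul_zero] at key
    exact mul_ne_zero (mul_ne_zero (neg_ne_zero.2 (div_ne_zero hK two_ne_zero)) hu1) hu2 key.symm
  have hd : v1 - v2 = 2 * s / ((a + b) * r : ℝ) := by
    rw [hv1, hv2]; field_simp; ring
  have e1 : (u - v1)⁻¹ - (u - v2)⁻¹ = (v1 - v2) / ((u - v1) * (u - v2)) := by
    field_simp; ring
  rw [e1, hd]
  rw [inv_eq_iff_eq_inv]
  have : z - (⟨a * (r * Real.cos θ), b * (r * Real.sin θ)⟩ : ℂ) = -(((a + b) * r : ℝ) / 2) * (u - v1) * (u - v2) / u := by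
    rw [← key]; field_simp
  rw [this]
  field_simp
  simp

lemma inner_out (a b r : ℝ) (z s : ℂ) (hb : 0 < b) (hab : b < a) (hr : 0 < r)
    (hs : s ^ 2 = z ^ 2 - (a ^ 2 - b ^ 2 : ℝ) * r ^ 2) (hs0 : s ≠ 0)
    (h1 : (a + b) * r < ‖z + s‖) (h2 : ‖z - s‖ < (a + b) * r) :
    ∫ θ in Set.Ioo (-Real.pi) Real.pi,
      (z - (⟨a * (r * Real.cos θ), b * (r * Real.sin θ)⟩ : ℂ))⁻¹ = 2 * Real.pi / s := by
  have hK : 0 < (a + b) * r := mul_pos (by linarith) hr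
  have h1' : 1 < ‖(z + s) / ((a + b) * r : ℝ)‖ := by
    rw [norm_div, Complex.norm_real, Real.norm_of_nonneg hK.le, one_lt_div hK]; exact h1
  have h2' : ‖(z - s) / ((a + b) * r : ℝ)‖ < 1 := by
    rw [norm_div, Complex.norm_real, Real.norm_of_nonneg hK.le, div_lt_one hK]; exact h2
  rw [inner_gen a b r z s hb hab hr hs hs0 h1'.ne' h2'.ne, circ_out h1', circ_in h2']
  linear_combination (-2 * Real.pi / s) * I_sq

lemma inner_in (a b r : ℝ) (z s : ℂ) (hb : 0 < b) (hab : b < a) (hr : 0 < r)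
    (hs : s ^ 2 = z ^ 2 - (a ^ 2 - b ^ 2 : ℝ) * r ^ 2) (hs0 : s ≠ 0)
    (h1 : ‖z + s‖ < (a + b) * r) (h2 : ‖z - s‖ < (a + b) * r) :
    ∫ θ in Set.Ioo (-Real.pi) Real.pi,
      (z - (⟨a * (r * Real.cos θ), b * (r * Real.sin θ)⟩ : ℂ))⁻¹ = 0 := by
  have hK : 0 < (a + b) * r := mul_pos (by linarith) hr
  have h1' : ‖(z + s) / ((a + b) * r : ℝ)‖ < 1 := by
    rw [norm_div, Complex.norm_real, Real.norm_of_nonneg hK.le, div_lt_one hK]; exact h1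
  have h2' : ‖(z - s) / ((a + b) * r : ℝ)‖ < 1 := by
    rw [norm_div, Complex.norm_real, Real.norm_of_nonneg hK.le, div_lt_one hK]; exact h2
  rw [inner_gen a b r z s hb hab hr hs hs0 h1'.ne h2'.ne, circ_in h1', circ_in h2']
  ring

lemma jouk (a b r : ℝ) (z V : ℂ) (ha : 0 < a) (hb : 0 < b) (hV : V ≠ 0)
    (hz : V ^ 2 - 2 * z * V + (a ^ 2 - b ^ 2 : ℝ) * r ^ 2 = 0) :
    ∃ Q : ℝ, 0 < Q ∧ z.re ^ 2 / a ^ 2 + z.im ^ 2 / b ^ 2 - r ^ 2 =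
      (‖V‖ ^ 2 - ((a + b) * r) ^ 2) * (‖V‖ ^ 2 - ((a - b) * r) ^ 2) * Q := by
  have hT : ‖V‖ ^ 2 = V.re ^ 2 + V.im ^ 2 := by
    rw [← Complex.normSq_eq_norm_sq, Complex.normSq_apply]; ring
  have hTpos : 0 < ‖V‖ ^ 2 := by positivity
  set T := ‖V‖ ^ 2 with hTd
  set k := (a ^ 2 - b ^ 2) * r ^ 2 with hk
  have hVV : V * starRingEnd ℂ V = (T : ℂ) := by
    rw [Complex.mul_conj, Complex.normSq_eq_norm_sq]
  have hmul : 2 * T * z = T * V + k * starRingEnd ℂ V := by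
    have h := congrArg (fun t => t * starRingEnd ℂ V) hz
    simp only [zero_mul] at h
    rw [hk]; push_cast at h ⊢
    linear_combination -h + (V - 2 * z) * hVV
  have hre := congrArg Complex.re hmul
  have him := congrArg Complex.im hmul
  simp at hre him
  have hre' : z.re = (T + k) * V.re / (2 * T) := by field_simp; linarith
  have him' : z.im = (T - k) * V.im / (2 * T) := by field_simp; linarith
  refine ⟨V.re ^ 2 / (4 * T ^ 2 * a ^ 2) + V.im ^ 2 / (4 * T ^ 2 * b ^ 2), ?_, ?_⟩
  · by_cases h : V.re = 0
    · have : V.im ≠ 0 := fun h' => hV (Complex.ext h h')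
      positivity
    · positivity
  · rw [hre', him']
    have h1 : (T - ((a + b) * r) ^ 2) * (T - ((a - b) * r) ^ 2) = (T + k) ^ 2 - 4 * T * a ^ 2 * r ^ 2 := by
      rw [hk]; ring
    have h2 : (T - ((a + b) * r) ^ 2) * (T - ((a - b) * r) ^ 2) = (T - k) ^ 2 - 4 * T * b ^ 2 * r ^ 2 := by
      rw [hk]; ring
    rw [mul_add]
    nth_rewrite 1 [h1]
    rw [h2]
    field_simp
    rw [hT]
    ring

noncomputable def srt (k : ℝ) (z : ℂ) (r : ℝ) : ℂ := z * (1 - k * r ^ 2 / z ^ 2) ^ ((1 : ℂ) / 2)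

lemma cpow_half_re {q : ℂ} (hq : q ∈ slitPlane) : 0 < (q ^ ((1 : ℂ) / 2)).re := by
  rw [Complex.cpow_def_of_ne_zero (slitPlane_ne_zero hq), Complex.exp_re]
  refine mul_pos (Real.exp_pos _) (Real.cos_pos_of_mem_Ioo ?_)
  have h1 := Complex.neg_pi_lt_arg q
  have h2 := lt_of_le_of_ne (Complex.arg_le_pi q) (mem_slitPlane_iff_arg.1 hq).1
  have : (log q * (1 / 2)).im = q.arg / 2 := by
    rw [show log q * (1 / 2) = ((1 / 2 : ℝ) : ℂ) * log q by push_cast; ring, Complex.im_ofReal_mul]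
    simp [Complex.log_im]; ring
  rw [this]
  constructor <;> linarith

lemma srt_sq (k : ℝ) (z : ℂ) (r : ℝ) (hz : z ≠ 0) : srt k z r ^ 2 = z ^ 2 - k * r ^ 2 := by
  rw [srt, mul_pow, ← Complex.cpow_nat_mul]
  norm_num
  field_simp

lemma slit (a b : ℝ) (z : ℂ) (r : ℝ) (hb : 0 < b) (hab : b < a) (hz : z ≠ 0)
    (hr : r ^ 2 ≤ z.re ^ 2 / a ^ 2 + z.im ^ 2 / b ^ 2) :
    1 - ((a ^ 2 - b ^ 2 : ℝ) : ℂ) * r ^ 2 / z ^ 2 ∈ slitPlane := by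
  by_contra hcon
  rw [Complex.mem_slitPlane_iff_not_le_zero, not_not] at hcon
  set q : ℂ := 1 - ((a ^ 2 - b ^ 2 : ℝ) : ℂ) * r ^ 2 / z ^ 2 with hq
  rw [Complex.le_def] at hcon
  obtain ⟨h1, h2⟩ := hcon
  simp only [zero_re, zero_im] at h1 h2
  have hqr : q = (q.re : ℂ) := by apply Complex.ext <;> simp [h2]
  have e : ((a ^ 2 - b ^ 2 : ℝ) : ℂ) * r ^ 2 = ((1 - q.re : ℝ) : ℂ) * z ^ 2 := by
    push_cast
    rw [← hqr, hq]; push_cast; field_simp; ring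
  set t := 1 - q.re with ht
  have ht1 : 1 ≤ t := by linarith
  have er := congrArg Complex.re e
  have ei := congrArg Complex.im e
  rw [← Complex.ofReal_pow, ← Complex.ofReal_mul, Complex.re_ofReal_mul, Complex.ofReal_re] at er
  rw [← Complex.ofReal_pow, ← Complex.ofReal_mul, Complex.im_ofReal_mul, Complex.ofReal_im] at ei
  simp only [pow_two z, Complex.mul_re, Complex.mul_im] at er ei
  have ha : 0 < a := hb.trans hab
  have hxy : z.re * z.im = 0 := by nlinarith
  have hc : 0 < a ^ 2 - b ^ 2 := by nlinarith
  have h0 : 0 ≤ (a ^ 2 - b ^ 2) * r ^ 2 := by positivity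
  rcases mul_eq_zero.1 hxy with hx | hy
  · have hy : z.im ≠ 0 := fun h => hz (Complex.ext hx h)
    have : 0 < z.im ^ 2 := by positivity
    rw [hx] at er
    nlinarith
  · have hx : z.re ≠ 0 := fun h => hz (Complex.ext h hy)
    have : 0 < z.re ^ 2 := by positivity
    rw [hy] at er hr
    have : r ^ 2 * a ^ 2 ≤ z.re ^ 2 := by
      have : z.re ^ 2 / a ^ 2 + 0 ^ 2 / b ^ 2 = z.re ^ 2 / a ^ 2 := by simp
      rw [this, le_div_iff₀ (by positivity)] at hr
      exact hr
    have e2 : (a ^ 2 - b ^ 2) * r ^ 2 = t * z.re ^ 2 := by linarith [er]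
    have hr0 : 0 < r ^ 2 := by
      by_contra h
      have : r ^ 2 = 0 := le_antisymm (not_lt.1 h) (sq_nonneg r)
      rw [this] at e2
      nlinarith
    nlinarith [mul_pos (pow_pos hb 2) hr0]

lemma srt_pos (k : ℝ) (z : ℂ) (r : ℝ) (hz : z ≠ 0)
    (hs : 1 - (k : ℂ) * r ^ 2 / z ^ 2 ∈ slitPlane) :
    srt k z r ≠ 0 ∧ 0 < (srt k z r * starRingEnd ℂ z).re := by
  have h := cpow_half_re hs
  have : (srt k z r * starRingEnd ℂ z).re = normSq z * ((1 - (k : ℂ) * r ^ 2 / z ^ 2) ^ ((1 : ℂ) / 2)).re := by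
    rw [srt, ← Complex.re_ofReal_mul]
    congr 1
    rw [← Complex.mul_conj]; ring
  have h2 : 0 < (srt k z r * starRingEnd ℂ z).re := by
    rw [this]
    exact mul_pos (normSq_pos.2 hz) h
  refine ⟨?_, h2⟩
  intro h0
  rw [h0] at h2
  simp at h2

lemma srt_deriv (k : ℝ) (z : ℂ) (r : ℝ) (hz : z ≠ 0)
    (hs : 1 - (k : ℂ) * r ^ 2 / z ^ 2 ∈ slitPlane) :
    HasDerivAt (srt k z) (-(k * r) / srt k z r) r := by
  have h1 : HasDerivAt (fun r : ℂ => (1 - (k : ℂ) * r ^ 2 / z ^ 2)) (-(k * (2 * r)) / z ^ 2) (r : ℂ) := by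
    have := ((((hasDerivAt_id (r : ℂ)).pow 2).const_mul (k : ℂ)).div_const (z ^ 2)).const_sub 1
    refine this.congr_deriv ?_
    simp; ring
  have h2 := ((h1.cpow_const (c := (1 : ℂ) / 2) hs).const_mul z).comp_ofReal
  refine h2.congr_deriv ?_
  have hs0 := (srt_pos k z r hz hs).1
  have hq0 := slitPlane_ne_zero hs
  rw [eq_div_iff hs0, srt]
  set q := 1 - (k : ℂ) * r ^ 2 / z ^ 2
  have : q ^ ((1 : ℂ) / 2 - 1) * q ^ ((1 : ℂ) / 2) = 1 := by
    rw [← Complex.cpow_add _ _ hq0]; norm_num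
  calc _ = (-(k * r) : ℂ) * (z^2 / z^2) * (q ^ ((1 : ℂ) / 2 - 1) * q ^ ((1 : ℂ) / 2)) := by ring
    _ = _ := by rw [this, div_self (pow_ne_zero 2 hz)]; ring

/-- geometric facts for the root -/
lemma srt_geo (a b : ℝ) (z : ℂ) (r : ℝ) (hb : 0 < b) (hab : b < a) (hz : z ≠ 0) (hr0 : 0 < r)
    (hr : r ^ 2 < z.re ^ 2 / a ^ 2 + z.im ^ 2 / b ^ 2) :
    (a + b) * r < ‖z + srt (a ^ 2 - b ^ 2) z r‖ ∧ ‖z - srt (a ^ 2 - b ^ 2) z r‖ < (a + b) * r := by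
  have hsl := slit a b z r hb hab hz hr.le
  obtain ⟨hs0, hpos⟩ := srt_pos _ z r hz hsl
  have hsq := srt_sq (a ^ 2 - b ^ 2) z r hz
  set s := srt (a ^ 2 - b ^ 2) z r
  have ha : 0 < a := hb.trans hab
  have hp : ‖z + s‖ ^ 2 - ‖z - s‖ ^ 2 = 4 * (s * starRingEnd ℂ z).re := by
    simp only [← Complex.normSq_eq_norm_sq, Complex.normSq_apply]
    simp
    ring
  have hprod : (z + s) * (z - s) = (((a ^ 2 - b ^ 2) * r ^ 2 : ℝ) : ℂ) := by
    push_cast at hsq ⊢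
    linear_combination -hsq
  have hc : 0 < a ^ 2 - b ^ 2 := by nlinarith
  have hn : ‖z + s‖ * ‖z - s‖ = (a ^ 2 - b ^ 2) * r ^ 2 := by
    rw [← norm_mul, hprod, Complex.norm_real, Real.norm_of_nonneg (by positivity)]
  set P := ‖z + s‖ with hP
  set M := ‖z - s‖ with hM
  have hP0 : 0 ≤ P := norm_nonneg _
  have hM0 : 0 ≤ M := norm_nonneg _
  have hMP : M < P := by nlinarith
  have hPpos : 0 < P := lt_of_le_of_lt hM0 hMP
  have hV : z + s ≠ 0 := norm_pos_iff.1 hPpos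
  obtain ⟨Q, hQ, hj⟩ := jouk a b r z (z + s) ha hb hV (by linear_combination hsq)
  rw [← hP] at hj
  have hkr : 0 < (a ^ 2 - b ^ 2) * r ^ 2 := by positivity
  have hPk : (a ^ 2 - b ^ 2) * r ^ 2 ≤ P ^ 2 := by nlinarith
  have hbr : ((a - b) * r) ^ 2 < P ^ 2 := by
    have : 0 < b * (a - b) * r ^ 2 := mul_pos (mul_pos hb (by linarith)) (by positivity)
    nlinarith
  have h1 : 0 < P ^ 2 - ((a + b) * r) ^ 2 := by
    have : 0 < (P ^ 2 - ((a + b) * r) ^ 2) * (P ^ 2 - ((a - b) * r) ^ 2) * Q := by linarith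
    have := (pos_iff_pos_of_mul_pos (show 0 < ((P ^ 2 - ((a + b) * r) ^ 2) * (P ^ 2 - ((a - b) * r) ^ 2)) * Q from this)).2 hQ
    exact (pos_iff_pos_of_mul_pos this).2 (by linarith)
  have hK : 0 < (a + b) * r := mul_pos (by linarith) hr0
  have h2 : (a + b) * r < P := lt_of_pow_lt_pow_left₀ 2 hP0 (by linarith)
  refine ⟨h2, ?_⟩
  by_contra hcon
  push Not at hcon
  have : (a + b) * r * ((a + b) * r) ≤ P * M := mul_le_mul h2.le hcon hK.le hP0
  have : 0 < b * (a + b) * r ^ 2 := by positivity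
  nlinarith

lemma in_geo (a b : ℝ) (z s : ℂ) (r : ℝ) (hb : 0 < b) (hab : b < a) (hr0 : 0 < r)
    (hr : z.re ^ 2 / a ^ 2 + z.im ^ 2 / b ^ 2 < r ^ 2) 
    (hs : s ^ 2 = z ^ 2 - (a ^ 2 - b ^ 2 : ℝ) * r ^ 2) : ‖z + s‖ < (a + b) * r := by
  have ha : 0 < a := hb.trans hab
  have hK : 0 < (a + b) * r := mul_pos (by linarith) hr0
  by_contra hcon
  push Not at hcon
  have hV : z + s ≠ 0 := norm_pos_iff.1 (hK.trans_le hcon)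
  obtain ⟨Q, hQ, hj⟩ := jouk a b r z (z + s) ha hb hV (by linear_combination hs)
  have h1 : ((a + b) * r) ^ 2 ≤ ‖z + s‖ ^ 2 := pow_le_pow_left₀ hK.le hcon 2
  have h2 : ((a - b) * r) ^ 2 ≤ ((a + b) * r) ^ 2 := 
    pow_le_pow_left₀ (mul_nonneg (by linarith) hr0.le) (by nlinarith) 2
  have : 0 ≤ (‖z + s‖ ^ 2 - ((a + b) * r) ^ 2) * (‖z + s‖ ^ 2 - ((a - b) * r) ^ 2) * Q :=
    mul_nonneg (mul_nonneg (by linarith) (by linarith)) hQ.le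
  linarith

lemma radial (a b : ℝ) (z : ℂ) (m : ℝ) (hb : 0 < b) (hab : b < a) (hz : z ≠ 0) (hm0 : 0 ≤ m)
    (hm : m ^ 2 ≤ z.re ^ 2 / a ^ 2 + z.im ^ 2 / b ^ 2) :
    ∫ r in Set.Ioc 0 m, (r : ℂ) * (2 * Real.pi / srt (a ^ 2 - b ^ 2) z r) =
      2 * Real.pi / (a ^ 2 - b ^ 2 : ℝ) * (z - srt (a ^ 2 - b ^ 2) z m) := by
  have hc : 0 < a ^ 2 - b ^ 2 := by nlinarith
  set k := a ^ 2 - b ^ 2 with hk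
  have hkC : (k : ℂ) ≠ 0 := by exact_mod_cast hc.ne'
  have hsl : ∀ r ∈ Set.uIcc 0 m, 1 - ((k : ℝ) : ℂ) * r ^ 2 / z ^ 2 ∈ slitPlane := by
    intro r hr
    rw [Set.uIcc_of_le hm0] at hr
    refine slit a b z r hb hab hz (le_trans ?_ hm)
    exact pow_le_pow_left₀ hr.1 hr.2 2
  rw [← intervalIntegral.integral_of_le hm0]
  have hd : ∀ r ∈ Set.uIcc 0 m, HasDerivAt (fun r => -(2 * Real.pi / k : ℂ) * srt k z r)
      ((r : ℂ) * (2 * Real.pi / srt k z r)) r := by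
    intro r hr
    refine ((srt_deriv k z r hz (hsl r hr)).const_mul _).congr_deriv ?_
    have := (srt_pos k z r hz (hsl r hr)).1
    field_simp
  have hcont : ContinuousOn (fun r : ℝ => (r : ℂ) * (2 * Real.pi / srt k z r)) (Set.uIcc 0 m) := by
    refine ContinuousOn.mul (by fun_prop) (ContinuousOn.div (by fun_prop) ?_ ?_)
    · intro r hr
      exact (srt_deriv k z r hz (hsl r hr)).continuousAt.continuousWithinAt
    · intro r hr
      exact (srt_pos k z r hz (hsl r hr)).1
  rw [intervalIntegral.integral_eq_sub_of_hasDerivAt hd hcont.intervalIntegrable]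
  have : srt k z 0 = z := by simp [srt]
  rw [this]; ring

lemma ell_polar (a b : ℝ) (z : ℂ) (hb : 0 < b) (hab : b < a) :
    ∫ ζ in {p : ℂ | p.re ^ 2 / a ^ 2 + p.im ^ 2 / b ^ 2 ≤ 1}, (z - ζ)⁻¹ =
    a * b * ∫ r in Set.Ioi (0 : ℝ), (Set.Iic (1 : ℝ)).indicator (fun r : ℝ => (r : ℂ) *
      ∫ θ in Set.Ioo (-Real.pi) Real.pi,
        (z - (⟨a * (r * Real.cos θ), b * (r * Real.sin θ)⟩ : ℂ))⁻¹) r := by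
  have ha : 0 < a := hb.trans hab
  set Ω := {p : ℂ | p.re ^ 2 / a ^ 2 + p.im ^ 2 / b ^ 2 ≤ 1} with hΩ
  have hmeas : MeasurableSet Ω := by
    apply IsClosed.measurableSet
    exact isClosed_le (by fun_prop) continuous_const
  have hbd : Bornology.IsBounded Ω := by
    refine (Metric.isBounded_closedBall (x := (0 : ℂ)) (r := a + b)).subset ?_
    intro p hp
    have hp' : p.re ^ 2 / a ^ 2 + p.im ^ 2 / b ^ 2 ≤ 1 := hp
    have h1 : p.re ^ 2 / a ^ 2 ≤ 1 := by
      have : 0 ≤ p.im ^ 2 / b ^ 2 := by positivity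
      linarith
    have h2 : p.im ^ 2 / b ^ 2 ≤ 1 := by
      have : 0 ≤ p.re ^ 2 / a ^ 2 := by positivity
      linarith
    rw [div_le_one (by positivity)] at h1 h2
    have h1' := abs_le_of_sq_le_sq h1 ha.le
    have h2' := abs_le_of_sq_le_sq h2 hb.le
    rw [mem_closedBall_zero_iff]
    refine (Complex.norm_le_abs_re_add_abs_im p).trans ?_
    exact add_le_add h1' h2'
  have hint := ell_integrable z Ω hmeas hbd
  rw [← integral_indicator hmeas]
  have hmp := Complex.volume_preserving_equiv_real_prod.symm
  have hint2 := hmp.integrable_comp_of_integrable hint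
  rw [← hmp.integral_comp measurableEquivRealProd.symm.measurableEmbedding]
  obtain ⟨h3, h4⟩ := lin_change a b ha hb _ hint2
  simp only [Function.comp] at h4 h3
  rw [h4, polar_fubini _ h3]
  congr 1
  refine setIntegral_congr_fun measurableSet_Ioi fun r hr => ?_
  have hr0 : 0 < r := hr
  have hmem : ∀ θ : ℝ, (⟨a * (r * Real.cos θ), b * (r * Real.sin θ)⟩ : ℂ) ∈ Ω ↔ r ≤ 1 := by
    intro θ
    have : (a * (r * Real.cos θ)) ^ 2 / a ^ 2 + (b * (r * Real.sin θ)) ^ 2 / b ^ 2 = r ^ 2 := by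
      field_simp
      rw [Real.cos_sq_add_sin_sq]
    rw [hΩ, Set.mem_ofPred_eq]
    simp only []
    rw [this, sq_le_one_iff₀ hr0.le]
  simp only [measurableEquivRealProd_symm_apply, Set.indicator, hmem, Set.mem_Iic]
  split_ifs
  · rw [← integral_const_mul]
    simp
  · simp

lemma ell_int (a b : ℝ) (z : ℂ) (m : ℝ) (hb : 0 < b) (hab : b < a) (hz : z ≠ 0) (hm0 : 0 ≤ m)
    (hm1 : m ≤ 1) (hm : m ^ 2 ≤ z.re ^ 2 / a ^ 2 + z.im ^ 2 / b ^ 2)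
    (hm' : m = 1 ∨ m ^ 2 = z.re ^ 2 / a ^ 2 + z.im ^ 2 / b ^ 2) :
    ∫ ζ in {p : ℂ | p.re ^ 2 / a ^ 2 + p.im ^ 2 / b ^ 2 ≤ 1}, (z - ζ)⁻¹ =
    a * b * (2 * Real.pi / (a ^ 2 - b ^ 2 : ℝ) * (z - srt (a ^ 2 - b ^ 2) z m)) := by
  have hc : 0 < a ^ 2 - b ^ 2 := by nlinarith
  rw [ell_polar a b z hb hab, ← radial a b z m hb hab hz hm0 hm]
  congr 1
  rw [← integral_indicator measurableSet_Ioi, ← integral_indicator measurableSet_Ioc]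
  apply integral_congr_ae
  have e1 : ∀ᵐ r : ℝ, r ≠ m := by simp [ae_iff]
  have e2 : ∀ᵐ r : ℝ, r ≠ ‖z‖ / Real.sqrt (a ^ 2 - b ^ 2) := by simp [ae_iff]
  filter_upwards [e1, e2] with r h1 h2
  by_cases hr0 : 0 < r
  swap
  · rw [Set.indicator_of_notMem (by simpa using hr0), Set.indicator_of_notMem (by simp; intro h; exact absurd h hr0)]
  rw [Set.indicator_of_mem (by simpa using hr0)]
  rcases lt_or_gt_of_ne h1 with hlt | hgt
  · rw [Set.indicator_of_mem (by simp; linarith), Set.indicator_of_mem (show r ∈ Set.Ioc 0 m from ⟨hr0, hlt.le⟩)]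
    have hrN : r ^ 2 < z.re ^ 2 / a ^ 2 + z.im ^ 2 / b ^ 2 :=
      lt_of_lt_of_le (pow_lt_pow_left₀ hlt hr0.le two_ne_zero) hm
    obtain ⟨g1, g2⟩ := srt_geo a b z r hb hab hz hr0 hrN
    have hs0 := (srt_pos _ z r hz (slit a b z r hb hab hz hrN.le)).1
    rw [inner_out a b r z _ hb hab hr0 (srt_sq _ z r hz) hs0 g1 g2]
  · rw [Set.indicator_of_notMem (s := Set.Ioc 0 m) (by simp; intro _; exact hgt)]
    by_cases hr1 : r ≤ 1
    swap
    · rw [Set.indicator_of_notMem (by simpa using hr1)]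
    rw [Set.indicator_of_mem (by simpa using hr1)]
    rcases hm' with hm' | hm'
    · linarith
    have hrN : z.re ^ 2 / a ^ 2 + z.im ^ 2 / b ^ 2 < r ^ 2 := by
      rw [← hm']; exact pow_lt_pow_left₀ hgt hm0 two_ne_zero
    have hsq := srt_sq (a ^ 2 - b ^ 2) z r hz
    have hs0 : srt (a ^ 2 - b ^ 2) z r ≠ 0 := by
      intro h
      rw [h] at hsq
      have : z ^ 2 = ((a ^ 2 - b ^ 2) * r ^ 2 : ℝ) := by push_cast at hsq ⊢; linear_combination -hsq
      have hn := congrArg norm this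
      rw [norm_pow, Complex.norm_real, Real.norm_of_nonneg (by positivity)] at hn
      apply h2
      rw [eq_div_iff (Real.sqrt_pos.2 hc).ne']
      have h3 := Real.sq_sqrt hc.le
      have : (r * √(a ^ 2 - b ^ 2)) ^ 2 = ‖z‖ ^ 2 := by rw [mul_pow, h3, hn]; ring
      exact (pow_left_inj₀ (by positivity) (norm_nonneg _) two_ne_zero).1 this
    rw [inner_in a b r z _ hb hab hr0 hsq hs0 (in_geo a b z _ r hb hab hr0 hrN hsq)
      (by have := in_geo a b z (-srt (a ^ 2 - b ^ 2) z r) r hb hab hr0 hrN (by rw [neg_sq]; exact hsq)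
          rwa [← sub_eq_add_neg] at this), mul_zero]

lemma ell_int_zero (a b : ℝ) (hb : 0 < b) (hab : b < a) :
    ∫ ζ in {p : ℂ | p.re ^ 2 / a ^ 2 + p.im ^ 2 / b ^ 2 ≤ 1}, ((0 : ℂ) - ζ)⁻¹ = 0 := by
  have hc : 0 < a ^ 2 - b ^ 2 := by nlinarith
  rw [ell_polar a b 0 hb hab]
  rw [setIntegral_congr_fun (g := fun _ => (0 : ℂ)) measurableSet_Ioi, integral_zero, mul_zero]
  intro r hr
  have hr0 : 0 < r := hr
  simp only [Set.indicator, Set.mem_Iic]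
  split_ifs
  swap
  · rfl
  have hsq : (√(a ^ 2 - b ^ 2) * r * I : ℂ) ^ 2 = 0 ^ 2 - (a ^ 2 - b ^ 2 : ℝ) * r ^ 2 := by
    rw [mul_pow, mul_pow, I_sq, ← Complex.ofReal_pow, Real.sq_sqrt hc.le]; ring
  have hs0 : (√(a ^ 2 - b ^ 2) * r * I : ℂ) ≠ 0 := by
    refine mul_ne_zero (mul_ne_zero ?_ ?_) I_ne_zero
    · exact_mod_cast (Real.sqrt_pos.2 hc).ne'
    · exact_mod_cast hr0.ne'
  have hrN : (0 : ℂ).re ^ 2 / a ^ 2 + (0 : ℂ).im ^ 2 / b ^ 2 < r ^ 2 := by simp; positivity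
  rw [inner_in a b r 0 _ hb hab hr0 hsq hs0 (in_geo a b 0 _ r hb hab hr0 hrN hsq)
      (by have := in_geo a b 0 (-(√(a ^ 2 - b ^ 2) * r * I : ℂ)) r hb hab hr0 hrN (by rw [neg_sq]; exact hsq)
          rwa [← sub_eq_add_neg] at this), mul_zero]

lemma cauchy_in (a b : ℝ) (z : ℂ) (hb : 0 < b) (hab : b < a)
    (hz : z.re ^ 2 / a ^ 2 + z.im ^ 2 / b ^ 2 < 1) :
    (Real.pi : ℂ)⁻¹ * ∫ ζ in {p : ℂ | p.re ^ 2 / a ^ 2 + p.im ^ 2 / b ^ 2 ≤ 1}, (z - ζ)⁻¹ =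
      starRingEnd ℂ z - ((a - b) / (a + b) : ℝ) * z := by
  by_cases h0 : z = 0
  · subst h0
    rw [ell_int_zero a b hb hab]; simp
  have ha : 0 < a := hb.trans hab
  have hc : 0 < a ^ 2 - b ^ 2 := by nlinarith
  set N := z.re ^ 2 / a ^ 2 + z.im ^ 2 / b ^ 2 with hN
  have hN0 : 0 ≤ N := by positivity
  have hmN : (√N) ^ 2 = N := Real.sq_sqrt hN0
  have hm1 : √N ≤ 1 := by rw [Real.sqrt_le_one]; exact hz.le
  rw [ell_int a b z (√N) hb hab h0 (Real.sqrt_nonneg _) hm1 hmN.le (Or.inr hmN)]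
  have hsq := srt_sq (a ^ 2 - b ^ 2) z (√N) h0
  have hpos := (srt_pos _ z (√N) h0 (slit a b z _ hb hab h0 hmN.le)).2
  set s := srt (a ^ 2 - b ^ 2) z (√N)
  set t : ℂ := ⟨b / a * z.re, a / b * z.im⟩ with ht
  have htpos : 0 < (t * starRingEnd ℂ z).re := by
    have : (t * starRingEnd ℂ z).re = b / a * z.re ^ 2 + a / b * z.im ^ 2 := by
      simp [t]; ring
    rw [this]
    by_cases h : z.re = 0
    · have : z.im ≠ 0 := fun h' => h0 (Complex.ext h h')
      positivity
    · positivity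
  have htsq : t ^ 2 = z ^ 2 - (a ^ 2 - b ^ 2 : ℝ) * (√N : ℂ) ^ 2 := by
    rw [← Complex.ofReal_pow, hmN, ← Complex.ofReal_mul]
    apply Complex.ext
    · simp only [pow_two, Complex.mul_re, Complex.sub_re, Complex.ofReal_re, t, hN]
      field_simp
      ring
    · simp only [pow_two, Complex.mul_im, Complex.sub_im, Complex.ofReal_im, t]
      field_simp
      ring
  have hst : s = t := by
    rcases sq_eq_sq_iff_eq_or_eq_neg.1 (hsq.trans htsq.symm) with h | h
    · exact h
    · rw [h, neg_mul, Complex.neg_re] at hpos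
      linarith
  rw [hst]
  have hpi : (Real.pi : ℂ) ≠ 0 := by exact_mod_cast Real.pi_ne_zero
  have e : (Real.pi : ℂ)⁻¹ * (a * b * (2 * Real.pi / (a ^ 2 - b ^ 2 : ℝ) * (z - t))) =
      (2 * a * b / (a ^ 2 - b ^ 2) : ℝ) * (z - t) := by
    push_cast; field_simp
  rw [e]
  have hab' : a - b ≠ 0 := by linarith
  have hab2 : a + b ≠ 0 := by linarith
  have hf : a ^ 2 - b ^ 2 = (a - b) * (a + b) := by ring
  rw [hf]
  apply Complex.ext
  · rw [Complex.re_ofReal_mul, Complex.sub_re, Complex.sub_re, Complex.re_ofReal_mul]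
    simp only [Complex.conj_re, t]
    field_simp
    ring
  · rw [Complex.im_ofReal_mul, Complex.sub_im, Complex.sub_im, Complex.im_ofReal_mul]
    simp only [Complex.conj_im, t]
    field_simp
    ring

lemma cauchy_out (a b : ℝ) (z V : ℂ) (hb : 0 < b) (hab : b < a) (hV : a + b < ‖V‖)
    (hz : V ^ 2 - 2 * z * V + (a ^ 2 - b ^ 2 : ℝ) = 0) :
    1 < z.re ^ 2 / a ^ 2 + z.im ^ 2 / b ^ 2 ∧
    (Real.pi : ℂ)⁻¹ * ∫ ζ in {p : ℂ | p.re ^ 2 / a ^ 2 + p.im ^ 2 / b ^ 2 ≤ 1}, (z - ζ)⁻¹ =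
      2 * a * b / V := by
  have ha : 0 < a := hb.trans hab
  have hc : 0 < a ^ 2 - b ^ 2 := by nlinarith
  have hV0 : V ≠ 0 := norm_pos_iff.1 ((by linarith : 0 < a + b).trans hV)
  have hN : 1 < z.re ^ 2 / a ^ 2 + z.im ^ 2 / b ^ 2 := by
    obtain ⟨Q, hQ, hj⟩ := jouk a b 1 z V ha hb hV0 (by simpa using hz)
    have h1 : (a + b) ^ 2 < ‖V‖ ^ 2 := pow_lt_pow_left₀ hV (by linarith) two_ne_zero
    have h2 : (a - b) ^ 2 < ‖V‖ ^ 2 := by nlinarith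
    rw [mul_one, mul_one] at hj
    have := mul_pos (mul_pos (sub_pos.2 h1) (sub_pos.2 h2)) hQ
    linarith
  refine ⟨hN, ?_⟩
  have h0 : z ≠ 0 := by
    intro h; rw [h] at hN; simp at hN; linarith
  have hN' : (1:ℝ) ^ 2 < z.re ^ 2 / a ^ 2 + z.im ^ 2 / b ^ 2 := by rw [one_pow]; exact hN
  rw [ell_int a b z 1 hb hab h0 zero_le_one le_rfl hN'.le (Or.inl rfl)]
  have hsq := srt_sq (a ^ 2 - b ^ 2) z 1 h0
  obtain ⟨g1, g2⟩ := srt_geo a b z 1 hb hab h0 one_pos hN'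
  set s := srt (a ^ 2 - b ^ 2) z 1
  have hVs : (V - z) ^ 2 = s ^ 2 := by
    push_cast at hsq hz ⊢
    linear_combination hz - hsq
  have hVe : V = z + s := by
    rcases sq_eq_sq_iff_eq_or_eq_neg.1 hVs with h | h
    · linear_combination h
    · have : V = z - s := by linear_combination h
      rw [this] at hV
      linarith
  have hpi : (Real.pi : ℂ) ≠ 0 := by exact_mod_cast Real.pi_ne_zero
  have hk : ((a ^ 2 - b ^ 2 : ℝ) : ℂ) ≠ 0 := by exact_mod_cast hc.ne'
  have hzs : z - s = (a ^ 2 - b ^ 2 : ℝ) / V := by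
    rw [eq_div_iff hV0, hVe]
    push_cast at hsq ⊢
    linear_combination -hsq
  rw [hzs]
  field_simp

lemma exists_V (a b : ℝ) (z : ℂ) (hb : 0 < b) (hab : b < a)
    (hN : 1 < z.re ^ 2 / a ^ 2 + z.im ^ 2 / b ^ 2) :
    ∃ V : ℂ, a + b < ‖V‖ ∧ V ^ 2 - 2 * z * V + (a ^ 2 - b ^ 2 : ℝ) = 0 := by
  have h0 : z ≠ 0 := by
    intro h; rw [h] at hN; simp at hN; linarith
  have hN' : (1:ℝ) ^ 2 < z.re ^ 2 / a ^ 2 + z.im ^ 2 / b ^ 2 := by rw [one_pow]; exact hN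
  have hsq := srt_sq (a ^ 2 - b ^ 2) z 1 h0
  obtain ⟨g1, g2⟩ := srt_geo a b z 1 hb hab h0 one_pos hN'
  refine ⟨_, by simpa using g1, ?_⟩
  push_cast at hsq ⊢
  linear_combination hsq

lemma roots_encard (P : Polynomial ℝ) (hP : P ≠ 0) (n : ℕ) (hn : P.natDegree ≤ n) (A : Set ℝ)
    (hA : ∀ x ∈ A, P.eval x = 0) : A.encard ≤ n := by
  classical
  have hsub : A ⊆ (P.roots.toFinset : Set ℝ) := by
    intro x hx
    simp [hP, hA x hx]
  refine (Set.encard_le_encard hsub).trans ?_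
  rw [Set.encard_coe_eq_coe_finsetCard]
  exact_mod_cast (Multiset.toFinset_card_le _).trans ((Polynomial.card_roots' P).trans hn)

lemma quad_encard (A B C : ℝ) (h : A ≠ 0 ∨ B ≠ 0) (s : Set ℝ)
    (hs : ∀ y ∈ s, A * y ^ 2 + B * y + C = 0) : s.encard ≤ 2 := by
  refine roots_encard (Polynomial.C A * Polynomial.X ^ 2 + Polynomial.C B * Polynomial.X + Polynomial.C C)
    ?_ 2 ?_ s ?_
  · intro h0
    have h1 := congrArg (fun p => Polynomial.coeff p 2) h0
    have h2 := congrArg (fun p => Polynomial.coeff p 1) h0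
    simp [Polynomial.coeff_X, Polynomial.coeff_C] at h1 h2
    tauto
  · compute_degree
  · intro y hy
    simpa using hs y hy

lemma count_mixed (e1 e0 g1 g0 q : ℝ) (hE : e1 ≠ 0 ∨ e0 ≠ 0) (hq : q ≠ 0) (W : Set (ℝ × ℝ))
    (hW : ∀ v ∈ W, 0 < v.1 ^ 2 + v.2 ^ 2 ∧ v.1 * (e1 * (v.1 ^ 2 + v.2 ^ 2) + e0) = 0 ∧
      v.2 * (g1 * (v.1 ^ 2 + v.2 ^ 2) + g0) = 2 * q * (v.1 ^ 2 + v.2 ^ 2)) :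
    W.encard ≤ 4 := by
  have hsub : W ⊆ {v ∈ W | v.1 = 0} ∪ {v ∈ W | v.1 ≠ 0} := by
    intro v hv
    by_cases h : v.1 = 0
    · exact Or.inl ⟨hv, h⟩
    · exact Or.inr ⟨hv, h⟩
  refine (Set.encard_le_encard hsub).trans ((Set.encard_union_le _ _).trans ?_)
  have h1 : {v ∈ W | v.1 = 0}.encard ≤ 2 := by
    have hinj : Set.InjOn Prod.snd {v ∈ W | v.1 = 0} := by
      intro v hv v' hv' h
      exact Prod.ext (hv.2.trans hv'.2.symm) h
    rw [← hinj.encard_image]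
    refine quad_encard g1 (-(2 * q)) g0 (Or.inr (by simpa using hq)) _ ?_
    rintro _ ⟨v, ⟨hv, h0⟩, rfl⟩
    obtain ⟨hp, -, h2⟩ := hW v hv
    rw [h0] at hp h2
    have hy : v.2 ≠ 0 := by rintro h; simp [h] at hp
    apply mul_left_cancel₀ hy
    linear_combination h2
  have h2 : {v ∈ W | v.1 ≠ 0}.encard ≤ 2 := by
    have hfix : ∀ v ∈ {v ∈ W | v.1 ≠ 0}, v.1 ^ 2 + v.2 ^ 2 = -e0 / e1 ∧
        v.2 = 2 * q * (-e0 / e1) / (g1 * (-e0 / e1) + g0) := by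
      rintro v ⟨hv, h0⟩
      obtain ⟨hp, h1, h2⟩ := hW v hv
      have hE0 := (mul_eq_zero.1 h1).resolve_left h0
      have he1 : e1 ≠ 0 := by
        intro h
        rw [h] at hE0 hE
        simp at hE0 hE
        exact hE hE0
      have hT : v.1 ^ 2 + v.2 ^ 2 = -e0 / e1 := by
        rw [eq_div_iff he1]; linarith
      refine ⟨hT, ?_⟩
      rw [hT] at h2 hp
      rw [eq_div_iff, h2]
      intro h
      rw [h] at h2
      have : 2 * q * (-e0 / e1) ≠ 0 := mul_ne_zero (mul_ne_zero two_ne_zero hq) hp.ne'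
      apply this; linarith
    have hinj : Set.InjOn Prod.fst {v ∈ W | v.1 ≠ 0} := by
      intro v hv v' hv' h
      exact Prod.ext h ((hfix v hv).2.trans (hfix v' hv').2.symm)
    rw [← hinj.encard_image]
    refine quad_encard 1 0 ((2 * q * (-e0 / e1) / (g1 * (-e0 / e1) + g0)) ^ 2 - (-e0 / e1))
      (Or.inl one_ne_zero) _ ?_
    rintro _ ⟨v, hv, rfl⟩
    obtain ⟨h1, h2⟩ := hfix v hv
    rw [← h2, ← h1]; ring
  calc _ ≤ (2 + 2 : ℕ∞) := add_le_add h1 h2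
    _ = 4 := by norm_num

lemma count_gen (e1 e0 g1 g0 p q : ℝ) (hp : p ≠ 0) (hq : q ≠ 0)
    (hP : ∃ T : ℝ, (e1 * T + e0) ^ 2 * (g1 * T + g0) ^ 2 - 4 * p ^ 2 * T * (g1 * T + g0) ^ 2
      - 4 * q ^ 2 * T * (e1 * T + e0) ^ 2 ≠ 0) (W : Set (ℝ × ℝ))
    (hW : ∀ v ∈ W, 0 < v.1 ^ 2 + v.2 ^ 2 ∧
      v.1 * (e1 * (v.1 ^ 2 + v.2 ^ 2) + e0) = 2 * p * (v.1 ^ 2 + v.2 ^ 2) ∧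
      v.2 * (g1 * (v.1 ^ 2 + v.2 ^ 2) + g0) = 2 * q * (v.1 ^ 2 + v.2 ^ 2)) :
    W.encard ≤ 4 := by
  have hinj : Set.InjOn (fun v : ℝ × ℝ => v.1 ^ 2 + v.2 ^ 2) W := by
    intro v hv v' hv' h
    simp only at h
    obtain ⟨hp1, h1, h2⟩ := hW v hv
    obtain ⟨-, h1', h2'⟩ := hW v' hv'
    rw [← h] at h1' h2'
    set T := v.1 ^ 2 + v.2 ^ 2
    have hE : e1 * T + e0 ≠ 0 := by
      intro h0; rw [h0] at h1
      exact mul_ne_zero (mul_ne_zero two_ne_zero hp) hp1.ne' (by linarith)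
    have hG : g1 * T + g0 ≠ 0 := by
      intro h0; rw [h0] at h2
      exact mul_ne_zero (mul_ne_zero two_ne_zero hq) hp1.ne' (by linarith)
    exact Prod.ext (mul_right_cancel₀ hE (h1.trans h1'.symm)) (mul_right_cancel₀ hG (h2.trans h2'.symm))
  rw [← hinj.encard_image]
  open Polynomial in
  refine roots_encard ((C e1 * X + C e0) ^ 2 * (C g1 * X + C g0) ^ 2
    - C (4 * p ^ 2) * X * (C g1 * X + C g0) ^ 2 - C (4 * q ^ 2) * X * (C e1 * X + C e0) ^ 2)
    ?_ 4 ?_ _ ?_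
  · intro h0
    obtain ⟨T, hT⟩ := hP
    apply hT
    have := congrArg (Polynomial.eval T) h0
    simpa using this
  · compute_degree
  · rintro _ ⟨v, hv, rfl⟩
    obtain ⟨hp1, h1, h2⟩ := hW v hv
    simp only [Polynomial.eval_sub, Polynomial.eval_mul, Polynomial.eval_pow, Polynomial.eval_add,
      Polynomial.eval_C, Polynomial.eval_X]
    have hT : v.1 ^ 2 + v.2 ^ 2 - (v.1 ^ 2 + v.2 ^ 2) = 0 := by ring
    generalize hTd : v.1 ^ 2 + v.2 ^ 2 = T at *
    apply mul_left_cancel₀ hp1.ne'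
    linear_combination (-(e1 * T + e0) ^ 2 * (g1 * T + g0) ^ 2) * hTd
      + (g1 * T + g0) ^ 2 * (v.1 * (e1 * T + e0) + 2 * p * T) * h1
      + (e1 * T + e0) ^ 2 * (v.2 * (g1 * T + g0) + 2 * q * T) * h2

lemma count_zero (e1 e0 g1 g0 : ℝ) (hE : e1 ≠ 0 ∨ e0 ≠ 0) (hG : g1 ≠ 0 ∨ g0 ≠ 0)
    (W : Set (ℝ × ℝ))
    (hno : ∀ v ∈ W, ¬ (e1 * (v.1 ^ 2 + v.2 ^ 2) + e0 = 0 ∧ g1 * (v.1 ^ 2 + v.2 ^ 2) + g0 = 0))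
    (hW : ∀ v ∈ W, 0 < v.1 ^ 2 + v.2 ^ 2 ∧ v.1 * (e1 * (v.1 ^ 2 + v.2 ^ 2) + e0) = 0 ∧
      v.2 * (g1 * (v.1 ^ 2 + v.2 ^ 2) + g0) = 0) :
    W.encard ≤ 4 := by
  have hsub : W ⊆ {v ∈ W | v.1 = 0} ∪ {v ∈ W | v.2 = 0} := by
    intro v hv
    by_cases h : v.1 = 0
    · exact Or.inl ⟨hv, h⟩
    by_cases h' : v.2 = 0
    · exact Or.inr ⟨hv, h'⟩
    obtain ⟨-, h1, h2⟩ := hW v hv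
    exact absurd ⟨(mul_eq_zero.1 h1).resolve_left h, (mul_eq_zero.1 h2).resolve_left h'⟩ (hno v hv)
  refine (Set.encard_le_encard hsub).trans ((Set.encard_union_le _ _).trans ?_)
  have h1 : {v ∈ W | v.1 = 0}.encard ≤ 2 := by
    have hinj : Set.InjOn Prod.snd {v ∈ W | v.1 = 0} := by
      intro v hv v' hv' h
      exact Prod.ext (hv.2.trans hv'.2.symm) h
    rw [← hinj.encard_image]
    by_cases hg1 : g1 = 0
    · have : Prod.snd '' {v ∈ W | v.1 = 0} = ∅ := by
        rw [Set.image_eq_empty, Set.eq_empty_iff_forall_notMem]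
        rintro v ⟨hv, h0⟩
        obtain ⟨hp, -, h2⟩ := hW v hv
        rw [hg1] at h2 hG
        rw [h0] at hp
        have hy : v.2 ≠ 0 := by rintro h; simp [h] at hp
        simp [hy] at h2 hG
        exact hG h2
      rw [this]; simp
    refine quad_encard g1 0 g0 (Or.inl hg1) _ ?_
    rintro _ ⟨v, ⟨hv, h0⟩, rfl⟩
    obtain ⟨hp, -, h2⟩ := hW v hv
    rw [h0] at hp h2
    have hy : v.2 ≠ 0 := by rintro h; simp [h] at hp
    apply mul_left_cancel₀ hy
    linear_combination h2
  have h2 : {v ∈ W | v.2 = 0}.encard ≤ 2 := by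
    have hinj : Set.InjOn Prod.fst {v ∈ W | v.2 = 0} := by
      intro v hv v' hv' h
      exact Prod.ext h (hv.2.trans hv'.2.symm)
    rw [← hinj.encard_image]
    by_cases he1 : e1 = 0
    · have : Prod.fst '' {v ∈ W | v.2 = 0} = ∅ := by
        rw [Set.image_eq_empty, Set.eq_empty_iff_forall_notMem]
        rintro v ⟨hv, h0⟩
        obtain ⟨hp, h2, -⟩ := hW v hv
        rw [he1] at h2 hE
        rw [h0] at hp
        have hy : v.1 ≠ 0 := by rintro h; simp [h] at hp
        simp [hy] at h2 hE
        exact hE h2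
      rw [this]; simp
    refine quad_encard e1 0 e0 (Or.inl he1) _ ?_
    rintro _ ⟨v, ⟨hv, h0⟩, rfl⟩
    obtain ⟨hp, h2, -⟩ := hW v hv
    rw [h0] at hp h2
    have hy : v.1 ≠ 0 := by rintro h; simp [h] at hp
    apply mul_left_cancel₀ hy
    linear_combination h2
  calc _ ≤ (2 + 2 : ℕ∞) := add_le_add h1 h2
    _ = 4 := by norm_num

lemma count_all (e1 e0 g1 g0 p q : ℝ) (hE : e1 ≠ 0 ∨ e0 ≠ 0) (hG : g1 ≠ 0 ∨ g0 ≠ 0)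
    (hP : ∃ T : ℝ, (e1 * T + e0) ^ 2 * (g1 * T + g0) ^ 2 - 4 * p ^ 2 * T * (g1 * T + g0) ^ 2
      - 4 * q ^ 2 * T * (e1 * T + e0) ^ 2 ≠ 0) (W : Set (ℝ × ℝ))
    (hno : p = 0 → q = 0 → ∀ v ∈ W,
      ¬ (e1 * (v.1 ^ 2 + v.2 ^ 2) + e0 = 0 ∧ g1 * (v.1 ^ 2 + v.2 ^ 2) + g0 = 0))
    (hW : ∀ v ∈ W, 0 < v.1 ^ 2 + v.2 ^ 2 ∧
      v.1 * (e1 * (v.1 ^ 2 + v.2 ^ 2) + e0) = 2 * p * (v.1 ^ 2 + v.2 ^ 2) ∧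
      v.2 * (g1 * (v.1 ^ 2 + v.2 ^ 2) + g0) = 2 * q * (v.1 ^ 2 + v.2 ^ 2)) :
    W.encard ≤ 4 := by
  by_cases hp : p = 0
  · by_cases hq : q = 0
    · refine count_zero e1 e0 g1 g0 hE hG W (hno hp hq) ?_
      simpa [hp, hq] using hW
    · refine count_mixed e1 e0 g1 g0 q hE hq W ?_
      simpa [hp] using hW
  · by_cases hq : q = 0
    · have hsw : Set.InjOn Prod.swap W := Prod.swap_injective.injOn
      rw [← hsw.encard_image]
      refine count_mixed g1 g0 e1 e0 p hG hp _ ?_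
      rintro _ ⟨v, hv, rfl⟩
      obtain ⟨h0, h1, h2⟩ := hW v hv
      rw [hq] at h2
      simp only [Prod.fst_swap, Prod.snd_swap, add_comm (v.2 ^ 2)]
      refine ⟨h0, ?_, h1⟩
      rw [h2]; ring
    · exact count_gen e1 e0 g1 g0 p q hp hq hP W hW

lemma nonvanish (a b γ p q : ℝ) (hb : 0 < b) (hab : b < a) :
    ∃ T : ℝ, ((1 - γ) * T + ((1 - γ) * (a ^ 2 - b ^ 2) - 4 * a * b)) ^ 2 *
        ((1 + γ) * T + (-(1 + γ) * (a ^ 2 - b ^ 2) - 4 * a * b)) ^ 2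
      - 4 * p ^ 2 * T * ((1 + γ) * T + (-(1 + γ) * (a ^ 2 - b ^ 2) - 4 * a * b)) ^ 2
      - 4 * q ^ 2 * T * ((1 - γ) * T + ((1 - γ) * (a ^ 2 - b ^ 2) - 4 * a * b)) ^ 2 ≠ 0 := by
  by_contra hcon
  push Not at hcon
  have hc : 0 < a ^ 2 - b ^ 2 := by nlinarith
  have hab0 : 0 < a * b := mul_pos (hb.trans hab) hb
  set k := a ^ 2 - b ^ 2
  have h0 := hcon 0
  have h1 := hcon 1
  have h2 := hcon 2
  have h3 := hcon 3
  have h4 := hcon 4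
  have hm := hcon (-1)
  have hlead : ((1 - γ) * (1 + γ)) ^ 2 = 0 := by
    linear_combination (h4 - 4 * h3 + 6 * h2 - 4 * h1 + h0) / 24
  rcases mul_eq_zero.1 (pow_eq_zero_iff two_ne_zero |>.1 hlead) with h | h
  · have hγ : γ = 1 := by linarith
    subst hγ
    have : (4 * (a * b)) ^ 2 * (2 * k + 4 * (a * b)) ^ 2 = 0 := by linear_combination h0
    have h' : 0 < (4 * (a * b)) ^ 2 * (2 * k + 4 * (a * b)) ^ 2 := by positivity
    linarith
  · have hγ : γ = -1 := by linarith
    subst hγ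
    have : (4 * (a * b)) ^ 2 * (2 * k - 4 * (a * b)) ^ 2 = 0 := by linear_combination h0
    have h5 : 2 * k - 4 * (a * b) = 0 := by
      have h' : (4 * (a * b)) ^ 2 ≠ 0 := by positivity
      exact pow_eq_zero_iff two_ne_zero |>.1 ((mul_eq_zero.1 this).resolve_left h')
    have hk : k = 2 * (a * b) := by linarith
    rw [hk] at h0 h1 hm
    have : 128 * (a * b) ^ 2 = 0 := by linear_combination h1 + hm - 2 * h0
    have h' : 0 < 128 * (a * b) ^ 2 := by positivity
    linarith

lemma phi_root (k : ℝ) (V : ℂ) (hV : V ≠ 0) :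
    V ^ 2 - 2 * ((V + k / V) / 2) * V + (k : ℝ) = 0 := by
  field_simp
  ring

lemma phi_mul (k : ℝ) (V : ℂ) (hV : V ≠ 0) (z : ℂ) (hz : V ^ 2 - 2 * z * V + (k : ℝ) = 0) :
    2 * ((V.re ^ 2 + V.im ^ 2 : ℝ) : ℂ) * z =
      ((V.re ^ 2 + V.im ^ 2 : ℝ) : ℂ) * V + k * starRingEnd ℂ V := by
  have hVV : V * starRingEnd ℂ V = ((V.re ^ 2 + V.im ^ 2 : ℝ) : ℂ) := by
    rw [Complex.mul_conj, Complex.normSq_apply]; congr 1; ring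
  have h := congrArg (fun t => t * starRingEnd ℂ V) hz
  simp only [zero_mul] at h
  linear_combination -h + (V - 2 * z) * hVV

lemma sumsq_pos {V : ℂ} (hV : V ≠ 0) : 0 < V.re ^ 2 + V.im ^ 2 := by
  have := Complex.normSq_pos.2 hV
  rw [Complex.normSq_apply] at this
  nlinarith

lemma lens_iff (a b γ : ℝ) (w V z : ℂ) (hV : V ≠ 0)
    (hz : V ^ 2 - 2 * z * V + (a ^ 2 - b ^ 2 : ℝ) = 0) :
    starRingEnd ℂ z - 2 * a * b / V - γ * z = starRingEnd ℂ w ↔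
    (V.re * ((1 - γ) * (V.re ^ 2 + V.im ^ 2) + ((1 - γ) * (a ^ 2 - b ^ 2) - 4 * a * b)) =
        2 * w.re * (V.re ^ 2 + V.im ^ 2) ∧
     V.im * ((1 + γ) * (V.re ^ 2 + V.im ^ 2) + (-(1 + γ) * (a ^ 2 - b ^ 2) - 4 * a * b)) =
        2 * w.im * (V.re ^ 2 + V.im ^ 2)) := by
  have hm := phi_mul _ V hV z hz
  have hT := sumsq_pos hV
  have hVV : V * starRingEnd ℂ V = ((V.re ^ 2 + V.im ^ 2 : ℝ) : ℂ) := by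
    rw [Complex.mul_conj, Complex.normSq_apply]; congr 1; ring
  have hinv : ((V.re ^ 2 + V.im ^ 2 : ℝ) : ℂ) * (2 * a * b / V) = (2 * a * b : ℝ) * starRingEnd ℂ V := by
    rw [← hVV]; push_cast; field_simp
  set T := V.re ^ 2 + V.im ^ 2 with hTd
  have hTC : (2 * T : ℂ) ≠ 0 := by exact_mod_cast (by positivity : 2 * T ≠ 0)
  have hmc := congrArg (starRingEnd ℂ) hm
  simp only [map_mul, map_add, Complex.conj_ofReal, Complex.conj_conj] at hmc
  rw [show (starRingEnd ℂ) (2:ℂ) = 2 from Complex.conj_ofNat 2] at hmc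
  have e : (2 * T : ℂ) * (starRingEnd ℂ z - 2 * a * b / V - γ * z) =
      T * starRingEnd ℂ V + (a ^ 2 - b ^ 2 : ℝ) * V - ((4 * a * b : ℝ) : ℂ) * starRingEnd ℂ V
      - γ * (T * V + (a ^ 2 - b ^ 2 : ℝ) * starRingEnd ℂ V) := by
    push_cast at hinv hm hmc ⊢
    linear_combination hmc - 2 * hinv - γ * hm
  rw [← mul_right_inj' hTC, e, Complex.ext_iff]
  have : (2 * (T : ℂ)) = ((2 * T : ℝ) : ℂ) := by push_cast; rfl
  rw [this]
  simp only [Complex.sub_re, Complex.add_re, Complex.sub_im, Complex.add_im, Complex.re_ofReal_mul,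
    Complex.im_ofReal_mul, Complex.conj_re, Complex.conj_im]
  constructor
  · rintro ⟨h1, h2⟩
    constructor
    · linear_combination h1
    · linear_combination -h2
  · rintro ⟨h1, h2⟩
    constructor
    · linear_combination h1
    · linear_combination -h2

theorem elliptic_lens_at_most_five_images
    (a b : ℝ) (hb : 0 < b) (hab : b < a) (γ : ℝ) (w : ℂ)
    (Ω : Set ℂ) (hΩ : Ω = {p : ℂ | p.re ^ 2 / a ^ 2 + p.im ^ 2 / b ^ 2 ≤ 1})
    (bdry : Set ℂ) (hbdry : bdry = {p : ℂ | p.re ^ 2 / a ^ 2 + p.im ^ 2 / b ^ 2 = 1})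
    (intΩ : Set ℂ)
    (hintΩ : intΩ = {p : ℂ | p.re ^ 2 / a ^ 2 + p.im ^ 2 / b ^ 2 < 1})
    (S : Set ℂ)
    (hS : S = {z : ℂ | z ∉ bdry ∧
      starRingEnd ℂ z - (Real.pi : ℂ)⁻¹ * (∫ ζ in Ω, (z - ζ)⁻¹) - (γ : ℂ) * z
        = starRingEnd ℂ w})
    (hfin : S.Finite) :
    S.ncard ≤ 5 ∧ {z ∈ S | z ∉ Ω}.ncard ≤ 4 ∧ {z ∈ S | z ∈ intΩ}.ncard ≤ 1 := by
  have ha : 0 < a := hb.trans hab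
  have hc : 0 < a ^ 2 - b ^ 2 := by nlinarith
  have hab0 : 0 < a * b := mul_pos ha hb
  -- membership for points parametrised by V
  have memV : ∀ V z : ℂ, a + b < ‖V‖ → V ^ 2 - 2 * z * V + (a ^ 2 - b ^ 2 : ℝ) = 0 → (z ∈ S ↔
    (V.re * ((1 - γ) * (V.re ^ 2 + V.im ^ 2) + ((1 - γ) * (a ^ 2 - b ^ 2) - 4 * a * b)) =
        2 * w.re * (V.re ^ 2 + V.im ^ 2) ∧
     V.im * ((1 + γ) * (V.re ^ 2 + V.im ^ 2) + (-(1 + γ) * (a ^ 2 - b ^ 2) - 4 * a * b)) =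
        2 * w.im * (V.re ^ 2 + V.im ^ 2))) := by
    intro V z hV hz
    have hV0 : V ≠ 0 := norm_pos_iff.1 ((by linarith : 0 < a + b).trans hV)
    obtain ⟨h1, h2⟩ := cauchy_out a b z V hb hab hV hz
    rw [← lens_iff a b γ w V z hV0 hz, hS, hΩ, Set.mem_ofPred_eq, h2, hbdry]
    refine ⟨fun h => h.2, fun h => ⟨h1.ne', h⟩⟩
  have memI : ∀ z ∈ intΩ, (z ∈ S ↔ (((a - b) / (a + b) - γ : ℝ) : ℂ) * z = starRingEnd ℂ w) := by
    intro z hz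
    rw [hintΩ] at hz
    have hz' : z.re ^ 2 / a ^ 2 + z.im ^ 2 / b ^ 2 < 1 := hz
    rw [hS, hΩ, Set.mem_ofPred_eq, cauchy_in a b z hb hab hz', hbdry]
    have e : starRingEnd ℂ z - (starRingEnd ℂ z - ((a - b) / (a + b) : ℝ) * z) - γ * z =
      (((a - b) / (a + b) - γ : ℝ) : ℂ) * z := by push_cast; ring
    rw [e]
    exact ⟨fun h => h.2, fun h => ⟨hz'.ne, h⟩⟩
  have hOut : {z ∈ S | z ∉ Ω}.encard ≤ 4 := by
    let φ : ℝ × ℝ → ℂ := fun v => ((⟨v.1, v.2⟩ : ℂ) + ((a ^ 2 - b ^ 2 : ℝ) : ℂ) / (⟨v.1, v.2⟩ : ℂ)) / 2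
    let W : Set (ℝ × ℝ) := {v | a + b < ‖(⟨v.1, v.2⟩ : ℂ)‖ ∧ φ v ∈ S}
    have hne : ∀ V : ℂ, a + b < ‖V‖ → V ≠ 0 := fun V hV =>
      norm_pos_iff.1 ((by linarith : 0 < a + b).trans hV)
    have hsub : {z ∈ S | z ∉ Ω} ⊆ φ '' W := by
      rintro z ⟨hz, hzΩ⟩
      rw [hΩ] at hzΩ
      have hzN : 1 < z.re ^ 2 / a ^ 2 + z.im ^ 2 / b ^ 2 := not_le.1 hzΩ
      obtain ⟨V, hV, hVz⟩ := exists_V a b z hb hab hzN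
      have hV0 := hne V hV
      have hφ : φ (V.re, V.im) = z := by
        change (V + ((a ^ 2 - b ^ 2 : ℝ) : ℂ) / V) / 2 = z
        have : ((a ^ 2 - b ^ 2 : ℝ) : ℂ) = 2 * z * V - V ^ 2 := by linear_combination hVz
        rw [this]; field_simp; ring
      exact ⟨(V.re, V.im), ⟨hV, hφ ▸ hz⟩, hφ⟩
    refine (Set.encard_le_encard hsub).trans ((Set.encard_image_le _ _).trans ?_)
    refine count_all (1 - γ) ((1 - γ) * (a ^ 2 - b ^ 2) - 4 * a * b) (1 + γ)
      (-(1 + γ) * (a ^ 2 - b ^ 2) - 4 * a * b) w.re w.im ?_ ?_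
      (nonvanish a b γ w.re w.im hb hab) W ?_ ?_
    · by_cases h : 1 - γ = 0
      · right; rw [h]; intro h'; nlinarith
      · exact Or.inl h
    · by_cases h : 1 + γ = 0
      · right; rw [h]; intro h'; nlinarith
      · exact Or.inl h
    · rintro hp hq v ⟨hv, -⟩ ⟨hE, hG⟩
      have hT := sumsq_pos (hne _ hv)
      simp only at hT
      set T := v.1 ^ 2 + v.2 ^ 2 with hTd
      have hnorm : ∀ x y : ℝ, ‖(⟨x, y⟩ : ℂ)‖ = √(x ^ 2 + y ^ 2) := by
        intro x y
        rw [Complex.norm_def, Complex.normSq_apply]; congr 1; ring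
      let ψ : ℝ → ℂ := fun x => φ (x, √(T - x ^ 2))
      have hcirc : ∀ x ∈ Set.Icc 0 (√T), x ^ 2 + √(T - x ^ 2) ^ 2 = T := by
        intro x hx
        have : x ^ 2 ≤ T := by
          rw [← Real.sq_sqrt hT.le]; exact pow_le_pow_left₀ hx.1 hx.2 2
        rw [Real.sq_sqrt (by linarith)]; ring
      have hbig : ∀ x ∈ Set.Icc 0 (√T), a + b < ‖(⟨x, √(T - x ^ 2)⟩ : ℂ)‖ := by
        intro x hx
        rw [hnorm, hcirc x hx]
        rwa [hnorm] at hv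
      have hmaps : Set.MapsTo ψ (Set.Icc 0 (√T)) S := by
        intro x hx
        refine (memV ⟨x, √(T - x ^ 2)⟩ (ψ x) (hbig x hx) (phi_root _ _ (hne _ (hbig x hx)))).2 ?_
        simp only [hcirc x hx, hE, hG, hp, hq]
        simp
      have hinj : Set.InjOn ψ (Set.Icc 0 (√T)) := by
        have hre : ∀ x ∈ Set.Icc 0 (√T), 2 * T * (ψ x).re = (T + (a ^ 2 - b ^ 2)) * x := by
          intro x hx
          have := phi_mul (a ^ 2 - b ^ 2) ⟨x, √(T - x ^ 2)⟩ (hne _ (hbig x hx)) (ψ x)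
            (phi_root _ _ (hne _ (hbig x hx)))
          simp only [hcirc x hx] at this
          have h := congrArg Complex.re this
          rw [show (2 * (T : ℂ)) = ((2 * T : ℝ) : ℂ) by push_cast; rfl, Complex.add_re] at h
          simp only [Complex.re_ofReal_mul, Complex.conj_re] at h
          rw [h]; ring
        intro x hx x' hx' h
        have h1 := hre x hx
        have h2 := hre x' hx'
        rw [h, h2] at h1
        exact (mul_left_cancel₀ (by positivity : T + (a ^ 2 - b ^ 2) ≠ 0) h1).symm
      exact Set.infinite_of_injOn_mapsTo hinj hmaps
        (Set.Icc_infinite (Real.sqrt_pos.2 hT)) hfin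
    · rintro v ⟨hv, hvS⟩
      have h := (memV ⟨v.1, v.2⟩ (φ v) hv (phi_root _ _ (hne _ hv))).1 hvS
      exact ⟨sumsq_pos (hne _ hv), h⟩
  have hOutF : {z ∈ S | z ∉ Ω}.ncard ≤ 4 := by
    have hf : {z ∈ S | z ∉ Ω}.Finite := hfin.subset fun z hz => hz.1
    rw [← hf.cast_ncard_eq] at hOut
    exact_mod_cast hOut
  have hIn : {z ∈ S | z ∈ intΩ}.ncard ≤ 1 := by
    rw [Set.ncard_le_one (hfin.subset fun z hz => hz.1)]
    rintro z ⟨hz, hzi⟩ z' ⟨hz', hzi'⟩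
    have h1 := (memI z hzi).1 hz
    have h2 := (memI z' hzi').1 hz'
    by_cases h0 : (((a - b) / (a + b) - γ : ℝ) : ℂ) = 0
    · exfalso
      have hmaps : Set.MapsTo (fun x : ℝ => (x : ℂ)) (Set.Ioo 0 a) S := by
        intro x hx
        refine (memI _ ?_).2 ?_
        · rw [hintΩ]
          have : x ^ 2 < a ^ 2 := pow_lt_pow_left₀ hx.2 hx.1.le two_ne_zero
          simp
          rw [div_lt_one (by positivity)]
          exact this
        · rw [← h1, h0]; simp
      exact Set.infinite_of_injOn_mapsTo Complex.ofReal_injective.injOn hmaps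
        (Set.Ioo_infinite ha) hfin
    · exact mul_left_cancel₀ h0 (h1.trans h2.symm)
  refine ⟨?_, hOutF, hIn⟩
  have hcover : S ⊆ {z ∈ S | z ∉ Ω} ∪ {z ∈ S | z ∈ intΩ} := by
    intro z hz
    have hzb : z ∉ bdry := by rw [hS] at hz; exact hz.1
    by_cases h : z ∈ Ω
    · right
      refine ⟨hz, ?_⟩
      rw [hΩ] at h
      rw [hbdry] at hzb
      rw [hintΩ]
      exact lt_of_le_of_ne h hzb
    · exact Or.inl ⟨hz, h⟩
  have hfu : ({z ∈ S | z ∉ Ω} ∪ {z ∈ S | z ∈ intΩ}).Finite :=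
    hfin.subset (by rintro z (h | h) <;> exact h.1)
  calc S.ncard ≤ _ := Set.ncard_le_ncard hcover hfu
    _ ≤ _ := Set.ncard_union_le _ _
    _ ≤ 5 := by omega
end

section
/- Let a > b > 0, c = √(a² − b²), and Ω = { x + iy : x²/a² + y²/b² ≤ 1 } ⊂ ℂ. Let ρ : ℂ → ℝ be nonnegative, integrable, vanishing outside Ω, and constant on each confocal ellipse E_λ = { x + iy : x²/(a² + λ) + y²/(b² + λ) = 1 }, −b² < λ < 0 (i.e. there is m : ℝ → ℝ with ρ(ζ) = m(λ) whenever ζ ∈ E_λ). Let γ ∈ ℝ and w ∈ ℂ, and consider S = { z ∈ ℂ : z ∉ Ω and conj(z) − ∫_Ω ρ(ζ)/(z − ζ) dA(ζ) − γ z = conj(w) }. If S is finite, then S has at most 4 elements. -/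
open Complex MeasureTheory

lemma cl_cosh_re (ξ : ℂ) : (cosh ξ).re = Real.cosh ξ.re * Real.cos ξ.im := by
  conv_lhs => rw [← re_add_im ξ]
  rw [cosh_add, cosh_mul_I, sinh_mul_I]
  simp [← ofReal_cosh, ← ofReal_sinh, ← ofReal_cos, ← ofReal_sin]

lemma cl_cosh_im (ξ : ℂ) : (cosh ξ).im = Real.sinh ξ.re * Real.sin ξ.im := by
  conv_lhs => rw [← re_add_im ξ]
  rw [cosh_add, cosh_mul_I, sinh_mul_I]
  simp [← ofReal_cosh, ← ofReal_sinh, ← ofReal_cos, ← ofReal_sin]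

lemma cl_cosh_eq {x y : ℂ} (h : cosh x = cosh y) :
    ∃ k : ℤ, y = x + 2 * k * Real.pi * I ∨ y = -x + 2 * k * Real.pi * I := by
  rw [← cos_mul_I, ← cos_mul_I, cos_eq_cos_iff] at h
  obtain ⟨k, h | h⟩ := h
  · refine ⟨-k, Or.inl ?_⟩
    have := congrArg (· * (-I)) h
    push_cast
    linear_combination this + (y-x) * I_mul_I
  · refine ⟨-k, Or.inr ?_⟩
    have := congrArg (· * (-I)) h
    push_cast
    linear_combination this + (y+x) * I_mul_I

lemma cl_cosh_inj {x y : ℂ} (hx : 0 < x.re) (hy : 0 < y.re)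
    (hx1 : -Real.pi < x.im) (hx2 : x.im ≤ Real.pi)
    (hy1 : -Real.pi < y.im) (hy2 : y.im ≤ Real.pi) (h : cosh x = cosh y) : x = y := by
  have hpi := Real.pi_pos
  obtain ⟨k, h | h⟩ := cl_cosh_eq h
  · have him : y.im = x.im + 2 * k * Real.pi := by
      rw [h]; simp
    have h1 : (k : ℝ) < 1 := by
      by_contra hk
      push Not at hk
      nlinarith
    have h2 : (-1 : ℝ) < k := by
      by_contra hk
      push Not at hk
      nlinarith
    have : k = 0 := by
      have h1' : k < 1 := by exact_mod_cast h1
      have h2' : -1 < k := by exact_mod_cast h2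
      omega
    subst this
    simpa using h.symm
  · have : y.re = - x.re := by rw [h]; simp
    linarith

lemma cl_cosh_surj (z : ℂ) : ∃ ξ : ℂ, 0 ≤ ξ.re ∧ -Real.pi < ξ.im ∧ ξ.im ≤ Real.pi ∧ cosh ξ = z := by
  obtain ⟨y, hy⟩ := cos_surjective z
  have key : ∀ x : ℂ, cosh x = z → 0 ≤ x.re →
      ∃ ξ : ℂ, 0 ≤ ξ.re ∧ -Real.pi < ξ.im ∧ ξ.im ≤ Real.pi ∧ cosh ξ = z := by
    intro x hx hre
    have hm := toIocMod_mem_Ioc Real.two_pi_pos (-Real.pi) x.im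
    have hd := toIocMod_add_toIocDiv_zsmul Real.two_pi_pos (-Real.pi) x.im
    set k := toIocDiv Real.two_pi_pos (-Real.pi) x.im
    set m := toIocMod Real.two_pi_pos (-Real.pi) x.im
    refine ⟨x - 2 * k * Real.pi * I, by simpa using hre, ?_, ?_, ?_⟩
    · have : x.im - 2 * k * Real.pi = m := by
        rw [← hd]; simp; ring
      simp [this]; exact hm.1
    · have : x.im - 2 * k * Real.pi = m := by
        rw [← hd]; simp; ring
      simp [this]; linarith [hm.2]
    · rw [← hx, ← cos_mul_I, ← cos_mul_I, cos_eq_cos_iff]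
      refine ⟨-k, Or.inl ?_⟩
      push_cast
      linear_combination (2 * k * Real.pi) * I_mul_I
  rcases le_total 0 (y * I).re with h | h
  · exact key (y * I) (by rw [cosh_mul_I, hy]) h
  · exact key (-(y * I)) (by rw [cosh_neg, cosh_mul_I, hy]) (by simpa using h)

lemma cl_param (a b c : ℝ) (hb : 0 < b) (hab : b < a) (hc : c = Real.sqrt (a ^ 2 - b ^ 2)) :
    0 < c ∧ ∃ s : ℝ, 0 < s ∧ a = c * Real.cosh s ∧ b = c * Real.sinh s := by
  have h1 : 0 < a ^ 2 - b ^ 2 := by nlinarith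
  have hc0 : 0 < c := by rw [hc]; exact Real.sqrt_pos.mpr h1
  have hc2 : c ^ 2 = a ^ 2 - b ^ 2 := by rw [hc]; exact Real.sq_sqrt h1.le
  refine ⟨hc0, Real.arsinh (b / c), ?_, ?_, ?_⟩
  · rw [Real.arsinh_pos_iff]; positivity
  · rw [Real.cosh_arsinh]
    have : 1 + (b / c) ^ 2 = (a / c) ^ 2 := by
      field_simp; linarith
    rw [this, Real.sqrt_sq (by apply div_nonneg <;> linarith)]
    field_simp
  · rw [Real.sinh_arsinh]; field_simp

lemma cl_mem_iff (c s : ℝ) (hc : 0 < c) (hs : 0 < s) (ξ : ℂ) (hξ : 0 ≤ ξ.re) :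
    (((c : ℂ) * cosh ξ).re ^ 2 / (c * Real.cosh s) ^ 2 +
      ((c : ℂ) * cosh ξ).im ^ 2 / (c * Real.sinh s) ^ 2 ≤ 1) ↔ ξ.re ≤ s := by
  have e1 : ((c : ℂ) * cosh ξ).re = c * (Real.cosh ξ.re * Real.cos ξ.im) := by
    rw [re_ofReal_mul, cl_cosh_re]
  have e2 : ((c : ℂ) * cosh ξ).im = c * (Real.sinh ξ.re * Real.sin ξ.im) := by
    rw [im_ofReal_mul, cl_cosh_im]
  rw [e1, e2]
  have hsh : 0 < Real.sinh s := Real.sinh_pos_iff.mpr hs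
  have hch : 0 < Real.cosh s := Real.cosh_pos s
  have hA : (c * (Real.cosh ξ.re * Real.cos ξ.im)) ^ 2 / (c * Real.cosh s) ^ 2
      = (Real.cosh ξ.re / Real.cosh s) ^ 2 * Real.cos ξ.im ^ 2 := by field_simp
  have hB : (c * (Real.sinh ξ.re * Real.sin ξ.im)) ^ 2 / (c * Real.sinh s) ^ 2
      = (Real.sinh ξ.re / Real.sinh s) ^ 2 * Real.sin ξ.im ^ 2 := by field_simp
  rw [hA, hB]
  have hsc := Real.sin_sq_add_cos_sq ξ.im
  have hsr : 0 ≤ Real.sinh ξ.re := Real.sinh_nonneg_iff.mpr hξ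
  constructor
  · intro h
    by_contra hlt
    push Not at hlt
    have h1 : 1 < (Real.cosh ξ.re / Real.cosh s) ^ 2 := by
      have : Real.cosh s < Real.cosh ξ.re := by
        rw [Real.cosh_lt_cosh, abs_of_pos hs, abs_of_nonneg hξ]; exact hlt
      exact one_lt_pow₀ ((one_lt_div hch).mpr this) (by norm_num)
    have h2 : 1 < (Real.sinh ξ.re / Real.sinh s) ^ 2 := by
      have : Real.sinh s < Real.sinh ξ.re := Real.sinh_lt_sinh.mpr hlt
      exact one_lt_pow₀ ((one_lt_div hsh).mpr this) (by norm_num)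
    rcases eq_or_lt_of_le (sq_nonneg (Real.cos ξ.im)) with h0 | h0
    · rw [← h0] at h hsc
      have : Real.sin ξ.im ^ 2 = 1 := by linarith
      rw [this] at h; linarith
    · nlinarith [sq_nonneg (Real.sin ξ.im)]
  · intro hle
    have h1 : (Real.cosh ξ.re / Real.cosh s) ^ 2 ≤ 1 := by
      have : Real.cosh ξ.re ≤ Real.cosh s := by
        rw [Real.cosh_le_cosh, abs_of_pos hs, abs_of_nonneg hξ]; exact hle
      exact pow_le_one₀ (by positivity) ((div_le_one hch).mpr this)
    have h2 : (Real.sinh ξ.re / Real.sinh s) ^ 2 ≤ 1 := by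
      have : Real.sinh ξ.re ≤ Real.sinh s := Real.sinh_le_sinh.mpr hle
      exact pow_le_one₀ (by positivity) ((div_le_one hsh).mpr this)
    nlinarith [sq_nonneg (Real.sin ξ.im), sq_nonneg (Real.cos ξ.im)]

/-- The mean value property in the shape needed below. -/
lemma cl_mean (f : ℂ → ℂ) (R : ℝ) (hR : 0 < R) (hf : DifferentiableOn ℂ f (Metric.closedBall 0 R)) :
    ∫ θ in (-Real.pi)..Real.pi, f (circleMap 0 R θ) = 2 * Real.pi * f 0 := by
  have h : DiffContOnCl ℂ f (Metric.ball 0 |R|) := by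
    rw [abs_of_pos hR]
    refine DifferentiableOn.diffContOnCl ?_
    rw [closure_ball _ hR.ne']
    exact hf
  have h1 := h.circleAverage
  rw [Real.circleAverage_def] at h1
  have hp : Function.Periodic (fun θ => f (circleMap 0 R θ)) (2 * Real.pi) := by
    intro θ
    simp only [periodic_circleMap 0 R θ]
  have h2 := hp.intervalIntegral_add_eq 0 (-Real.pi)
  rw [zero_add] at h2
  rw [h2, show -Real.pi + 2 * Real.pi = Real.pi by ring] at h1
  rw [← h1, real_smul]
  have : (Real.pi : ℂ) ≠ 0 := by exact_mod_cast Real.pi_ne_zero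
  push_cast
  field_simp

lemma cl_inner (s : ℝ) (hs : 0 < s) (η : ℂ) (h : s < η.re) :
    ∫ θ in (-Real.pi)..Real.pi, ((normSq (sinh (s + θ * I)) : ℝ) : ℂ) / (cosh η - cosh (s + θ * I))
      = 2 * Real.pi * (Real.cosh (2 * s) : ℝ) * exp (-η) := by
  set t : ℝ := Real.exp s with ht
  have ht0 : 0 < t := Real.exp_pos s
  have ht1 : 1 < t := Real.one_lt_exp_iff.mpr hs
  set u : ℂ := exp η with hu
  have hu0 : u ≠ 0 := exp_ne_zero η
  have hut : t < ‖u‖ := by rw [hu, norm_exp, ht]; exact Real.exp_lt_exp.mpr h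
  have htc : (t : ℂ) ≠ 0 := by exact_mod_cast ht0.ne'
  set f1 : ℂ → ℂ := fun v => (t ^ 2 - v ^ 2 / t ^ 2) / (2 * (u - v)) with hf1
  set f2 : ℂ → ℂ := fun x => (1 / t ^ 2 - t ^ 2 * x ^ 2) / (2 * (u - x)) with hf2
  have ne1 : ∀ v : ℂ, ‖v‖ ≤ t → u - v ≠ 0 := by
    intro v hv h0
    rw [sub_eq_zero] at h0
    rw [h0] at hut; linarith
  have d1 : DifferentiableOn ℂ f1 (Metric.closedBall 0 t) := by
    intro v hv
    have := ne1 v (by simpa using hv)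
    apply DifferentiableAt.differentiableWithinAt
    have h2 : 2 * (u - v) ≠ 0 := mul_ne_zero two_ne_zero this
    fun_prop (disch := assumption)
  have htinv : t⁻¹ < t := by
    have : t⁻¹ < 1 := inv_lt_one_of_one_lt₀ ht1
    linarith
  have d2 : DifferentiableOn ℂ f2 (Metric.closedBall 0 t⁻¹) := by
    intro v hv
    have := ne1 v (by have : ‖v‖ ≤ t⁻¹ := by simpa using hv
                      linarith)
    apply DifferentiableAt.differentiableWithinAt
    have h2 : 2 * (u - v) ≠ 0 := mul_ne_zero two_ne_zero this
    fun_prop (disch := assumption)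
  have i1 := cl_mean f1 t ht0 d1
  have i2 := cl_mean f2 t⁻¹ (by positivity) d2
  have c1 : Continuous (fun θ : ℝ => f1 (circleMap 0 t θ)) := by
    apply d1.continuousOn.comp_continuous (continuous_circleMap 0 t)
    intro θ
    exact circleMap_mem_closedBall 0 ht0.le θ
  have c2 : Continuous (fun θ : ℝ => f2 (circleMap 0 t⁻¹ (-θ))) := by
    apply d2.continuousOn.comp_continuous ((continuous_circleMap 0 t⁻¹).comp continuous_neg)
    intro θ
    exact circleMap_mem_closedBall 0 (by positivity) (-θ)
  have i2' : ∫ θ in (-Real.pi)..Real.pi, f2 (circleMap 0 t⁻¹ (-θ)) = 2 * Real.pi * f2 0 := by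
    rw [← i2]
    have := intervalIntegral.integral_comp_neg (a := -Real.pi) (b := Real.pi)
      (fun θ => f2 (circleMap 0 t⁻¹ θ))
    simpa using this
  have hpt : ∀ θ : ℝ, ((normSq (sinh (s + θ * I)) : ℝ) : ℂ) / (cosh η - cosh (s + θ * I))
      = f1 (circleMap 0 t θ) + f2 (circleMap 0 t⁻¹ (-θ)) := by
    intro θ
    set v : ℂ := circleMap 0 t θ with hv
    have hve : v = exp (s + θ * I) := by
      rw [hv, circleMap_zero, ht, exp_add, ofReal_exp]
    have hv0 : v ≠ 0 := by rw [hve]; exact exp_ne_zero _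
    have hx : circleMap 0 t⁻¹ (-θ) = v⁻¹ := by
      rw [hve, ← exp_neg, circleMap_zero, ht, neg_add, exp_add]
      push_cast
      rw [exp_neg, neg_mul]
    have hvn : ‖v‖ = t := by rw [hv, norm_circleMap_zero, abs_of_pos ht0]
    have hn1 := ne1 v hvn.le
    have hn2 := ne1 v⁻¹ (by rw [norm_inv, hvn]; exact htinv.le)
    have hn2' : u * v - 1 ≠ 0 := by
      intro h0
      apply hn2
      field_simp
      linear_combination h0
    have hns : ((normSq (sinh (s + θ * I)) : ℝ) : ℂ) = (v - v⁻¹) / 2 * ((t ^ 2 * v⁻¹ - v / t ^ 2) / 2) := by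
      rw [← mul_conj, ← sinh_conj]
      have e : (starRingEnd ℂ) (s + θ * I) = s - θ * I := by
        simp [sub_eq_add_neg]
      rw [e, sinh, sinh, exp_neg, ← hve]
      have e1 : exp (s - θ * I) = t ^ 2 * v⁻¹ := by
        rw [hve, ← exp_neg, ht, ofReal_exp, ← exp_nat_mul, ← exp_add]
        congr 1; push_cast; ring
      rw [exp_neg, e1]
      field_simp
    rw [hns, hx, hf1, hf2]
    have hce : cosh η - cosh (s + θ * I) = (u - v) * (u * v - 1) / (2 * u * v) := by
      rw [cosh, cosh, exp_neg, exp_neg, ← hve, ← hu]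
      field_simp
      ring
    rw [hce]
    have hn3 : u - v⁻¹ = (u * v - 1) / v := by field_simp
    simp only [hn3]
    have hn4 : v * u - 1 ≠ 0 := by rwa [mul_comm]
    field_simp
    ring
  simp_rw [hpt]
  rw [intervalIntegral.integral_add (c1.intervalIntegrable _ _) (c2.intervalIntegrable _ _), i1, i2',
    hf1, hf2]
  have hch : ((Real.cosh (2 * s) : ℝ) : ℂ) = (t ^ 2 + 1 / t ^ 2) / 2 := by
    rw [Real.cosh_eq, ht]
    push_cast
    rw [exp_neg, two_mul, exp_add]
    field_simp
  rw [hch, exp_neg, ← hu]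
  field_simp
  ring

lemma cl_det (z : ℂ) : (z • (1 : ℂ →L[ℝ] ℂ)).det = normSq z := by
  rw [← Algebra.norm_complex_apply, Algebra.norm_apply, ContinuousLinearMap.det]
  congr 1

lemma cl_real_null : volume {z : ℂ | z.im = 0} = 0 := by
  have h := Measure.addHaar_submodule (volume : Measure ℂ) (LinearMap.ker imLm) (by
    intro h
    have : I ∈ LinearMap.ker imLm := by rw [h]; trivial
    simp at this)
  convert h using 2
  ext z
  simp

lemma cl_cauchy (c s0 : ℝ) (hc : 0 < c) (hs0 : 0 < s0) (Ω : Set ℂ)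
    (hΩ : Ω = {p : ℂ | p.re ^ 2 / (c * Real.cosh s0) ^ 2 + p.im ^ 2 / (c * Real.sinh s0) ^ 2 ≤ 1})
    (ρ : ℂ → ℝ) (hnonneg : ∀ ζ, 0 ≤ ρ ζ) (hinteg : Integrable ρ)
    (hconf : ∀ s : ℝ, 0 < s → s < s0 → ∀ θ : ℝ,
      ρ ((c : ℂ) * cosh (s + θ * I)) = ρ ((c : ℂ) * cosh (s : ℂ))) :
    ∃ C : ℝ, 0 ≤ C ∧ ∀ η : ℂ, s0 < η.re →
      ∫ ζ in Ω, (ρ ζ : ℂ) / ((c : ℂ) * cosh η - ζ) = C * exp (-η) := by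
  refine ⟨∫ s in Set.Ioo 0 s0, ρ ((c : ℂ) * cosh (s : ℂ)) * (2 * Real.pi * c * Real.cosh (2 * s)),
    ?_, ?_⟩
  · apply integral_nonneg
    intro s
    have h1 := hnonneg ((c : ℂ) * cosh (s : ℂ))
    have h2 := Real.cosh_pos (2 * s)
    have h3 := Real.pi_pos
    positivity
  intro η hη
  have hmem : ∀ ξ : ℂ, 0 ≤ ξ.re → ((c : ℂ) * cosh ξ ∈ Ω ↔ ξ.re ≤ s0) := by
    intro ξ hξ
    rw [hΩ]
    exact cl_mem_iff c s0 hc hs0 ξ hξ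
  set z : ℂ := (c : ℂ) * cosh η with hz
  have hzΩ : z ∉ Ω := by
    rw [hz, hmem η (by linarith)]
    linarith
  have hclosed : IsClosed Ω := by
    rw [hΩ]
    apply isClosed_le <;> fun_prop
  set g : ℂ → ℂ := fun ζ => (ρ ζ : ℂ) / (z - ζ) with hg
  have hgi : IntegrableOn g Ω := by
    have hne : Ω.Nonempty := ⟨(c : ℂ) * cosh 0, by rw [hmem 0 (by simp)]; simpa using hs0.le⟩
    have hd : 0 < Metric.infDist z Ω := (hclosed.notMem_iff_infDist_pos hne).mp hzΩ
    have h1 : Integrable (fun ζ => (ρ ζ : ℂ)) (volume.restrict Ω) := hinteg.ofReal.restrict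
    have h2 := h1.mul_bdd (g := fun ζ => (z - ζ)⁻¹) (c := (Metric.infDist z Ω)⁻¹)
      (by apply Measurable.aestronglyMeasurable; fun_prop) (by
        refine (ae_restrict_iff' hclosed.measurableSet).mpr (Filter.Eventually.of_forall ?_)
        intro ζ hζ
        rw [norm_inv]
        apply inv_anti₀ hd
        rw [← dist_eq_norm]
        exact Metric.infDist_le_dist_of_mem hζ)
    simpa [hg, div_eq_mul_inv, IntegrableOn] using h2
  set Q : Set (ℝ × ℝ) := Set.Ioc 0 s0 ×ˢ Set.Ioc (-Real.pi) Real.pi with hQ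
  have hQm : MeasurableSet Q := measurableSet_Ioc.prod measurableSet_Ioc
  set R : Set ℂ := Set.preimage measurableEquivRealProd Q with hR
  have hRm : MeasurableSet R := measurableEquivRealProd.measurable hQm
  have hRmem : ∀ ξ : ℂ, ξ ∈ R ↔ (0 < ξ.re ∧ ξ.re ≤ s0) ∧ (-Real.pi < ξ.im ∧ ξ.im ≤ Real.pi) := by
    intro ξ
    rfl
  set F : ℂ → ℂ := fun ξ => (c : ℂ) * cosh ξ with hF
  have hcC : (c : ℂ) ≠ 0 := by exact_mod_cast hc.ne'
  have hinj : Set.InjOn F R := by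
    intro x hx y hy hxy
    rw [hRmem] at hx hy
    exact cl_cosh_inj hx.1.1 hy.1.1 hx.2.1 hx.2.2 hy.2.1 hy.2.2 (mul_left_cancel₀ hcC hxy)
  have hder : ∀ ξ ∈ R, HasFDerivWithinAt F (((c : ℂ) * sinh ξ) • (1 : ℂ →L[ℝ] ℂ)) R ξ := by
    intro ξ _
    exact (((hasDerivAt_cosh ξ).const_mul (c : ℂ)).complexToReal_fderiv).hasFDerivWithinAt
  have hae : Set.image F R =ᵐ[volume] Ω := by
    have hsub : Set.image F R ⊆ Ω := by
      rintro _ ⟨ξ, hξ, rfl⟩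
      rw [hRmem] at hξ
      exact (hmem ξ hξ.1.1.le).mpr hξ.1.2
    refine Filter.EventuallyLE.antisymm (Filter.Eventually.of_forall hsub) ?_
    rw [ae_le_set]
    refine measure_mono_null ?_ cl_real_null
    rintro ζ ⟨hζ, hn⟩
    obtain ⟨ξ, h0, h1, h2, h3⟩ := cl_cosh_surj (ζ / c)
    have hζe : ζ = (c : ℂ) * cosh ξ := by rw [h3]; field_simp
    have hle : ξ.re ≤ s0 := by rw [hζe] at hζ; exact (hmem ξ h0).mp hζ
    rcases eq_or_lt_of_le h0 with h | h
    · show ζ.im = 0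
      rw [hζe, im_ofReal_mul, cl_cosh_im, ← h]
      simp
    · exact absurd ⟨ξ, (hRmem ξ).mpr ⟨⟨h, hle⟩, h1, h2⟩, hζe.symm⟩ hn
  rw [← setIntegral_congr_set hae,
    integral_image_eq_integral_abs_det_fderiv_smul volume hRm hder hinj]
  have hgi2 : IntegrableOn g (Set.image F R) := hgi.congr_set_ae hae
  rw [integrableOn_image_iff_integrableOn_abs_det_fderiv_smul volume hRm hder hinj] at hgi2
  simp only [cl_det] at hgi2 ⊢
  set G : ℝ × ℝ → ℂ := fun p => |normSq ((c : ℂ) * sinh (p.1 + p.2 * I))| • g (F (p.1 + p.2 * I))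
    with hG
  have hGe : (fun ξ : ℂ => |normSq ((c : ℂ) * sinh ξ)| • g (F ξ)) = G ∘ measurableEquivRealProd := by
    funext ξ
    simp [hG, measurableEquivRealProd_apply, re_add_im]
  have hmp := volume_preserving_equiv_real_prod
  have hemb := measurableEquivRealProd.measurableEmbedding
  rw [hGe] at hgi2 ⊢
  rw [hR, hmp.integrableOn_comp_preimage hemb] at hgi2
  have hset : integral (volume.restrict (Set.preimage measurableEquivRealProd Q))
      (G ∘ measurableEquivRealProd) = ∫ y in Q, G y := hmp.setIntegral_preimage_emb hemb G Q
  rw [hR, hset, hQ, Measure.volume_eq_prod, setIntegral_prod]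
  swap
  · exact hgi2
  rw [integral_Ioc_eq_integral_Ioo, ← integral_complex_ofReal, ← integral_mul_const]
  apply setIntegral_congr_fun measurableSet_Ioo
  intro s hs
  have hpt : ∀ θ : ℝ, G (s, θ) = ((ρ ((c : ℂ) * cosh (s : ℂ)) * c : ℝ) : ℂ) *
      (((normSq (sinh (s + θ * I)) : ℝ) : ℂ) / (cosh η - cosh (s + θ * I))) := by
    intro θ
    simp only [hG, hg, hF, hz]
    rw [hconf s hs.1 hs.2 θ, abs_of_nonneg (normSq_nonneg _), normSq_mul, normSq_ofReal, real_smul,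
      ← mul_sub]
    push_cast
    field_simp
  beta_reduce
  rw [show (fun θ : ℝ => G (s, θ)) = _ from funext hpt]
  rw [integral_const_mul, ← intervalIntegral.integral_of_le (by linarith [Real.pi_pos]),
    cl_inner s hs.1 η (hs.2.trans hη)]
  push_cast
  ring

lemma cl_quartic (S : Set ℂ) (g : ℂ → ℂ) (e4 e3 e2 e1 e0 : ℂ)
    (hne : ¬ (e4 = 0 ∧ e3 = 0 ∧ e2 = 0 ∧ e1 = 0 ∧ e0 = 0))
    (h : ∀ z ∈ S, ∃ u, g u = z ∧ e4 * u ^ 4 + e3 * u ^ 3 + e2 * u ^ 2 + e1 * u + e0 = 0) :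
    S.ncard ≤ 4 := by
  classical
  set p : Polynomial ℂ := Polynomial.C e4 * Polynomial.X ^ 4 + Polynomial.C e3 * Polynomial.X ^ 3
    + Polynomial.C e2 * Polynomial.X ^ 2 + Polynomial.C e1 * Polynomial.X + Polynomial.C e0 with hp
  have hp0 : p ≠ 0 := by
    intro h0
    apply hne
    have hc : ∀ n, p.coeff n = 0 := by intro n; rw [h0]; simp
    refine ⟨?_, ?_, ?_, ?_, ?_⟩
    · simpa [hp, Polynomial.coeff_X, Polynomial.coeff_C] using hc 4
    · simpa [hp, Polynomial.coeff_X, Polynomial.coeff_C] using hc 3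
    · simpa [hp, Polynomial.coeff_X, Polynomial.coeff_C] using hc 2
    · simpa [hp, Polynomial.coeff_X, Polynomial.coeff_C] using hc 1
    · simpa [hp, Polynomial.coeff_X, Polynomial.coeff_C] using hc 0
  have hdeg : p.natDegree ≤ 4 := by
    rw [hp]; compute_degree
  have hsub : S ⊆ ((p.roots.toFinset.image g : Finset ℂ) : Set ℂ) := by
    intro z hz
    obtain ⟨u, hu, hu2⟩ := h z hz
    rw [Finset.mem_coe, Finset.mem_image]
    refine ⟨u, ?_, hu⟩
    rw [Multiset.mem_toFinset, Polynomial.mem_roots hp0, Polynomial.IsRoot]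
    simpa [hp] using hu2
  calc S.ncard ≤ ((p.roots.toFinset.image g : Finset ℂ) : Set ℂ).ncard :=
        Set.ncard_le_ncard hsub (Finset.finite_toSet _)
    _ = (p.roots.toFinset.image g).card := Set.ncard_coe_finset _
    _ ≤ p.roots.toFinset.card := Finset.card_image_le
    _ ≤ Multiset.card p.roots := Multiset.toFinset_card_le _
    _ ≤ p.natDegree := Polynomial.card_roots' p
    _ ≤ 4 := hdeg

lemma cl_quartic_eq (d r s C u U V W w wb z zb : ℂ) (hU : u * U = 1) (hV : V * W = 1)
    (hds : d * s = d * r + C) (hz : z = d * (u + U)) (hzb : zb = d * (V + W))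
    (E1 : zb - C * U - r * z = wb) (E2 : z - C * W - r * zb = w) :
    (d ^ 2 * ((1 - r ^ 2) * (1 - r * s))) * u ^ 4
      + (-(d * (1 - r ^ 2) * (w + s * wb)) - d * (1 - r * s) * (w + r * wb)) * u ^ 3
      + (d ^ 2 * (1 - r ^ 2) * (1 - s ^ 2) + (w + r * wb) * (w + s * wb) + d ^ 2 * (1 - r * s) ^ 2
        + C ^ 2) * u ^ 2
      + (-(d * (1 - s ^ 2) * (w + r * wb)) - d * (1 - r * s) * (w + s * wb)) * u
      + (d ^ 2 * ((1 - r * s) * (1 - s ^ 2))) = 0 := by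
  have h1 : d * (1 - r ^ 2) * u ^ 2 - (w + r * wb) * u + d * (1 - r * s) = u * (C * W) := by
    rw [← E1, ← E2, hz, hzb]
    linear_combination (-((1 - r ^ 2) * d - r * C)) * hU + (-r) * hds
  have h2 : d * (1 - r * s) * u ^ 2 - (w + s * wb) * u + d * (1 - s ^ 2) = -(u * C * V) := by
    rw [← E1, ← E2, hz, hzb]
    linear_combination (-((1 - s * r) * d - s * C)) * hU + (-s - (V + W) * u) * hds
  have h3 : u * (C * W) * (-(u * C * V)) = - (C ^ 2 * u ^ 2) := by
    linear_combination (-(u ^ 2 * C ^ 2)) * hV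
  rw [← h1, ← h2] at h3
  linear_combination h3

lemma cl_degenerate (d r s C : ℝ) (w : ℂ) (hd : 0 < d) (hC : 0 ≤ C) (hds : d * s = d * r + C)
    (e4 : (d : ℂ) ^ 2 * ((1 - (r : ℂ) ^ 2) * (1 - r * s)) = 0)
    (e3 : -((d : ℂ) * (1 - (r : ℂ) ^ 2) * (w + s * starRingEnd ℂ w))
      - d * (1 - r * s) * (w + r * starRingEnd ℂ w) = 0)
    (e2 : (d : ℂ) ^ 2 * (1 - (r : ℂ) ^ 2) * (1 - (s : ℂ) ^ 2)
      + (w + r * starRingEnd ℂ w) * (w + s * starRingEnd ℂ w) + (d : ℂ) ^ 2 * (1 - r * s) ^ 2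
        + (C : ℂ) ^ 2 = 0)
    (e1 : -((d : ℂ) * (1 - (s : ℂ) ^ 2) * (w + r * starRingEnd ℂ w))
      - d * (1 - r * s) * (w + s * starRingEnd ℂ w) = 0)
    (e0 : (d : ℂ) ^ 2 * ((1 - (r : ℂ) * s) * (1 - (s : ℂ) ^ 2)) = 0) :
    (C = 0 ∧ (r = 1 ∨ r = -1)) ∨ (w = 0 ∧ r * s = 1 ∧ r ^ 2 ≠ 1) := by
  have hdC : (d : ℂ) ≠ 0 := by exact_mod_cast hd.ne'
  have hsr : r ≤ s := by
    have : d * r ≤ d * s := by linarith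
    exact le_of_mul_le_mul_left this hd
  have e4' : (1 - r ^ 2) * (1 - r * s) = 0 := by
    have : (1 - (r : ℂ) ^ 2) * (1 - r * s) = 0 := by
      simpa [hdC] using e4
    exact_mod_cast this
  have e0' : (1 - r * s) * (1 - s ^ 2) = 0 := by
    have : (1 - (r : ℂ) * s) * (1 - (s : ℂ) ^ 2) = 0 := by
      simpa [hdC] using e0
    exact_mod_cast this
  by_cases hrs : r * s = 1
  · by_cases hr : r ^ 2 = 1
    · left
      have hr' : r = 1 ∨ r = -1 := by
        have h : (r - 1) * (r + 1) = 0 := by linarith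
        rcases mul_eq_zero.mp h with h | h
        · left; linarith
        · right; linarith
      refine ⟨?_, hr'⟩
      have : s = r := by
        rcases hr' with h | h <;> subst h <;> linarith
      rw [this] at hds; linarith
    · right
      refine ⟨?_, hrs, hr⟩
      have hrsC : (r : ℂ) * s = 1 := by exact_mod_cast hrs
      have hrC : 1 - (r : ℂ) ^ 2 ≠ 0 := by
        intro h
        apply hr
        have : 1 - r ^ 2 = 0 := by exact_mod_cast h
        linarith
      rw [hrsC] at e3
      have e3' : w + s * starRingEnd ℂ w = 0 := by
        have : (d : ℂ) * (1 - (r : ℂ) ^ 2) * (w + s * starRingEnd ℂ w) = 0 := by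
          linear_combination -e3
        exact (mul_eq_zero.mp this).resolve_left (mul_ne_zero hdC hrC)
      have hre := congrArg re e3'
      have him := congrArg im e3'
      simp at hre him
      have h1 : (1 + s) * w.re = 0 := by linarith
      have h2 : (1 - s) * w.im = 0 := by linarith
      apply Complex.ext
      · rcases mul_eq_zero.mp h1 with h | h
        · exfalso; apply hr
          have : s = -1 := by linarith
          rw [this] at hrs; nlinarith
        · simpa using h
      · rcases mul_eq_zero.mp h2 with h | h
        · exfalso; apply hr
          have : s = 1 := by linarith
          rw [this] at hrs; nlinarith
        · simpa using h
  · exfalso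
    have hrs' : 1 - r * s ≠ 0 := fun h => hrs (by linarith)
    have hr2 : 1 - r ^ 2 = 0 := (mul_eq_zero.mp e4').resolve_right hrs'
    have hs2 : 1 - s ^ 2 = 0 := (mul_eq_zero.mp e0').resolve_left hrs'
    have hr : (r - 1) * (r + 1) = 0 := by linarith
    have hs : (s - 1) * (s + 1) = 0 := by linarith
    have hr1 : r = -1 := by
      rcases mul_eq_zero.mp hr with h | h
      · have hr1 : r = 1 := by linarith
        rcases mul_eq_zero.mp hs with h' | h'
        · exact absurd (by rw [hr1]; linarith) hrs
        · linarith
      · linarith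
    have hs1 : s = 1 := by
      rcases mul_eq_zero.mp hs with h' | h'
      · linarith
      · exact absurd (by rw [hr1]; linarith) hrs
    have hC2 : C = 2 * d := by rw [hr1, hs1] at hds; linarith
    subst hr1 hs1 hC2
    push_cast at e3 e2 e1
    have k1 : w - starRingEnd ℂ w = 0 := by
      have : (d : ℂ) * (w - starRingEnd ℂ w) = 0 := by linear_combination (-1/2) * e3
      exact (mul_eq_zero.mp this).resolve_left hdC
    have k2 : w + starRingEnd ℂ w = 0 := by
      have : (d : ℂ) * (w + starRingEnd ℂ w) = 0 := by linear_combination (-1/2) * e1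
      exact (mul_eq_zero.mp this).resolve_left hdC
    have : (d : ℂ) ^ 2 = 0 := by
      linear_combination (1/8) * e2 - (1/8) * (w + starRingEnd ℂ w) * k1
    exact hdC (by simpa using this)

/-- An elliptic lens whose mass density is constant on the ellipses confocal with the
boundary produces at most 4 bright images outside the ellipse. -/
theorem confocal_density_lens_at_most_four_bright_images
    (a b : ℝ) (hb : 0 < b) (hab : b < a)
    (c : ℝ) (hc : c = Real.sqrt (a ^ 2 - b ^ 2))
    (Ω : Set ℂ) (hΩ : Ω = {p : ℂ | p.re ^ 2 / a ^ 2 + p.im ^ 2 / b ^ 2 ≤ 1})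
    (ρ : ℂ → ℝ) (hnonneg : ∀ ζ, 0 ≤ ρ ζ) (hinteg : Integrable ρ)
    (hvanish : ∀ ζ ∉ Ω, ρ ζ = 0)
    (hconfocal : ∃ m : ℝ → ℝ, ∀ lam : ℝ, -b ^ 2 < lam → lam < 0 →
      ∀ ζ : ℂ, ζ.re ^ 2 / (a ^ 2 + lam) + ζ.im ^ 2 / (b ^ 2 + lam) = 1 → ρ ζ = m lam)
    (γ : ℝ) (w : ℂ)
    (S : Set ℂ)
    (hS : S = {z : ℂ | z ∉ Ω ∧
      starRingEnd ℂ z - (∫ ζ in Ω, (ρ ζ : ℂ) / (z - ζ)) - (γ : ℂ) * z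
        = starRingEnd ℂ w})
    (hfin : S.Finite) :
    S.ncard ≤ 4 := by
  obtain ⟨hc0, s0, hs0, ha', hb'⟩ := cl_param a b c hb hab hc
  obtain ⟨m, hm⟩ := hconfocal
  have ha0 : 0 < a := hb.trans hab
  have hconf : ∀ s : ℝ, 0 < s → s < s0 → ∀ θ : ℝ,
      ρ ((c : ℂ) * cosh (s + θ * I)) = m (c ^ 2 * Real.sinh s ^ 2 - b ^ 2) := by
    intro s hs hss θ
    have hsh : 0 < Real.sinh s := Real.sinh_pos_iff.mpr hs
    have hch : 0 < Real.cosh s := Real.cosh_pos s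
    have hlt : Real.sinh s < Real.sinh s0 := Real.sinh_lt_sinh.mpr hss
    apply hm
    · have : 0 < c ^ 2 * Real.sinh s ^ 2 := by positivity
      linarith
    · rw [hb', mul_pow]
      have : Real.sinh s ^ 2 < Real.sinh s0 ^ 2 := pow_lt_pow_left₀ hlt hsh.le (by norm_num)
      have : c ^ 2 * Real.sinh s ^ 2 < c ^ 2 * Real.sinh s0 ^ 2 :=
        mul_lt_mul_of_pos_left this (by positivity)
      linarith
    · have h1 : a ^ 2 + (c ^ 2 * Real.sinh s ^ 2 - b ^ 2) = c ^ 2 * Real.cosh s ^ 2 := by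
        rw [ha', hb', mul_pow, mul_pow, Real.cosh_sq s0, Real.cosh_sq s]; ring
      have h2 : b ^ 2 + (c ^ 2 * Real.sinh s ^ 2 - b ^ 2) = c ^ 2 * Real.sinh s ^ 2 := by ring
      rw [h1, h2, re_ofReal_mul, im_ofReal_mul, cl_cosh_re, cl_cosh_im]
      have e1 : ((s : ℂ) + θ * I).re = s := by simp
      have e2 : ((s : ℂ) + θ * I).im = θ := by simp
      rw [e1, e2]
      field_simp
      exact Real.cos_sq_add_sin_sq θ
  have hΩ' := hΩ
  rw [ha', hb'] at hΩ'
  obtain ⟨C, hC0, hC⟩ := cl_cauchy c s0 hc0 hs0 Ω hΩ' ρ hnonneg hinteg (by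
    intro s hs hss θ
    rw [hconf s hs hss θ]
    have := hconf s hs hss 0
    simp only [ofReal_zero, zero_mul, add_zero] at this
    exact this.symm)
  have hcC : (c : ℂ) ≠ 0 := by exact_mod_cast hc0.ne'
  have hrep : ∀ z : ℂ, z ∉ Ω → ∃ η : ℂ, s0 < η.re ∧ (c : ℂ) * cosh η = z := by
    intro z hz
    obtain ⟨ξ, h0, -, -, h3⟩ := cl_cosh_surj (z / c)
    have hze : (c : ℂ) * cosh ξ = z := by rw [h3]; field_simp
    refine ⟨ξ, ?_, hze⟩
    by_contra hlt
    push Not at hlt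
    apply hz
    rw [hΩ', ← hze]
    exact (cl_mem_iff c s0 hc0 hs0 ξ h0).mpr hlt
  have hout : ∀ η : ℂ, s0 < η.re → (c : ℂ) * cosh η ∉ Ω := by
    intro η hη hmem
    rw [hΩ'] at hmem
    have := (cl_mem_iff c s0 hc0 hs0 η (by linarith)).mp hmem
    linarith
  have hSmem : ∀ η : ℂ, s0 < η.re → ((c : ℂ) * cosh η ∈ S ↔
      starRingEnd ℂ ((c : ℂ) * cosh η) - C * exp (-η) - γ * ((c : ℂ) * cosh η)
        = starRingEnd ℂ w) := by
    intro η hη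
    rw [hS, Set.mem_ofPred_eq, hC η hη]
    exact ⟨fun h => h.2, fun h => ⟨hout η hη, h⟩⟩
  have hSrep : ∀ z ∈ S, ∃ η : ℂ, s0 < η.re ∧ (c : ℂ) * cosh η = z := by
    intro z hz
    rw [hS] at hz
    exact hrep z hz.1
  -- abbreviations for the algebra
  set d : ℝ := c / 2 with hd
  have hd0 : 0 < d := by positivity
  set s : ℝ := γ + C / d with hs
  have hds : d * s = d * γ + C := by rw [hs]; field_simp
  have hdsC : (d : ℂ) * s = d * γ + C := by exact_mod_cast hds
  have hzeq : ∀ η : ℂ, (c : ℂ) * cosh η = d * (exp η + exp (-η)) := by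
    intro η
    rw [hd, cosh]; push_cast; ring
  have hzbeq : ∀ η : ℂ, starRingEnd ℂ ((c : ℂ) * cosh η) =
      d * (starRingEnd ℂ (exp η) + starRingEnd ℂ (exp (-η))) := by
    intro η
    rw [hzeq]; simp
  have huU : ∀ η : ℂ, exp η * exp (-η) = 1 := by
    intro η; rw [← exp_add]; simp
  have hVW : ∀ η : ℂ, starRingEnd ℂ (exp η) * starRingEnd ℂ (exp (-η)) = 1 := by
    intro η; rw [← map_mul, huU]; simp
  by_contra hcard
  have hdeg := fun hne => hcard (cl_quartic S (fun u => d * (u + u⁻¹))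
    ((d : ℂ) ^ 2 * ((1 - (γ : ℂ) ^ 2) * (1 - γ * s)))
    (-((d : ℂ) * (1 - (γ : ℂ) ^ 2) * (w + s * starRingEnd ℂ w))
      - d * (1 - γ * s) * (w + γ * starRingEnd ℂ w))
    ((d : ℂ) ^ 2 * (1 - (γ : ℂ) ^ 2) * (1 - (s : ℂ) ^ 2)
      + (w + γ * starRingEnd ℂ w) * (w + s * starRingEnd ℂ w) + (d : ℂ) ^ 2 * (1 - γ * s) ^ 2
        + (C : ℂ) ^ 2)
    (-((d : ℂ) * (1 - (s : ℂ) ^ 2) * (w + γ * starRingEnd ℂ w))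
      - d * (1 - γ * s) * (w + s * starRingEnd ℂ w))
    ((d : ℂ) ^ 2 * ((1 - (γ : ℂ) * s) * (1 - (s : ℂ) ^ 2))) hne (by
      intro z hz
      obtain ⟨η, hη, rfl⟩ := hSrep z hz
      refine ⟨exp η, by rw [hzeq, exp_neg], ?_⟩
      have E1 := (hSmem η hη).mp hz
      have E2 := congrArg (starRingEnd ℂ) E1
      simp only [map_sub, map_mul, conj_conj, conj_ofReal] at E2
      refine cl_quartic_eq d γ s C (exp η) (exp (-η)) (starRingEnd ℂ (exp η))
        (starRingEnd ℂ (exp (-η))) w (starRingEnd ℂ w) _ _ (huU η) (hVW η) hdsC (hzeq η) (hzbeq η)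
        E1 ?_
      simpa only [map_mul, conj_ofReal] using E2))
  replace hdeg := Classical.not_not.mp hdeg
  obtain ⟨e4, e3, e2, e1, e0⟩ := hdeg
  have hne : S.Nonempty := by
    rw [Set.nonempty_iff_ne_empty]
    rintro h
    apply hcard
    rw [h]; simp
  obtain ⟨z0, hz0⟩ := hne
  rcases cl_degenerate d γ s C w hd0 hC0 hds e4 e3 e2 e1 e0 with ⟨hCz, hγ⟩ | ⟨hw, hγs, hγ2⟩
  · -- no mass, and a singular linear map: the solutions form a line
    have hint : ∀ z : ℂ, z ∉ Ω → (∫ ζ in Ω, (ρ ζ : ℂ) / (z - ζ)) = 0 := by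
      intro z hz
      obtain ⟨η, hη, rfl⟩ := hrep z hz
      rw [hC η hη, hCz]; simp
    have hmem : ∀ z : ℂ, z ∈ S ↔ z ∉ Ω ∧ starRingEnd ℂ z - γ * z = starRingEnd ℂ w := by
      intro z
      rw [hS, Set.mem_ofPred_eq]
      constructor
      · rintro ⟨h1, h2⟩
        rw [hint z h1, sub_zero] at h2
        exact ⟨h1, h2⟩
      · rintro ⟨h1, h2⟩
        refine ⟨h1, ?_⟩
        rw [hint z h1, sub_zero]
        exact h2
    obtain ⟨hz1, hz2⟩ := (hmem z0).mp hz0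
    rw [hΩ, Set.mem_ofPred_eq, not_le] at hz1
    have hre := congrArg re hz2
    have him := congrArg im hz2
    simp at hre him
    rcases hγ with rfl | rfl
    · refine (Set.infinite_of_injOn_mapsTo (s := Set.Ici |z0.re|) (t := S)
        (f := fun x : ℝ => (⟨x, z0.im⟩ : ℂ)) ?_ ?_ (Set.Ici_infinite _)) hfin
      · intro x _ y _ hxy
        exact congrArg re hxy
      · intro x hx
        rw [hmem]
        constructor
        · rw [hΩ, Set.mem_ofPred_eq, not_le]
          have h1 : z0.re ^ 2 ≤ x ^ 2 := by
            rw [← sq_abs z0.re]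
            exact pow_le_pow_left₀ (abs_nonneg _) hx 2
          have h2 : z0.re ^ 2 / a ^ 2 ≤ x ^ 2 / a ^ 2 := by gcongr
          simp only
          linarith
        · apply Complex.ext
          · simp; linarith
          · simp; linarith
    · refine (Set.infinite_of_injOn_mapsTo (s := Set.Ici |z0.im|) (t := S)
        (f := fun y : ℝ => (⟨z0.re, y⟩ : ℂ)) ?_ ?_ (Set.Ici_infinite _)) hfin
      · intro x _ y _ hxy
        exact congrArg im hxy
      · intro x hx
        rw [hmem]
        constructor
        · rw [hΩ, Set.mem_ofPred_eq, not_le]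
          have h1 : z0.im ^ 2 ≤ x ^ 2 := by
            rw [← sq_abs z0.im]
            exact pow_le_pow_left₀ (abs_nonneg _) hx 2
          have h2 : z0.im ^ 2 / b ^ 2 ≤ x ^ 2 / b ^ 2 := by gcongr
          simp only
          linarith
        · apply Complex.ext
          · simp; linarith
          · simp; linarith
  · -- the solutions form a whole confocal ellipse
    obtain ⟨η, hη, rfl⟩ := hSrep z0 hz0
    have hγsC : (γ : ℂ) * s = 1 := by exact_mod_cast hγs
    have hdC : (d : ℂ) ≠ 0 := by exact_mod_cast hd0.ne'
    have E1 := (hSmem η hη).mp hz0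
    have hkey : γ * normSq (exp η) = 1 := by
      rw [hzbeq, hzeq, hw, map_zero] at E1
      have hU := huU η
      have hV := hVW η
      set u := exp η
      set U := exp (-η)
      set V := starRingEnd ℂ u with hVdef
      set W := starRingEnd ℂ U
      have h1 : (d : ℂ) * (V + W - γ * u - s * U) = 0 := by
        linear_combination E1 - U * hdsC
      have h1' : V + W - γ * u - s * U = 0 := (mul_eq_zero.mp h1).resolve_left hdC
      have h2 : (V - γ * u) * (γ * (u * V) - 1) = 0 := by
        linear_combination (γ * u * V) * h1' - γ * u * hV + γ * s * V * hU + V * hγsC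
      rcases mul_eq_zero.mp h2 with h | h
      · exfalso
        apply hγ2
        have h3 : normSq V = normSq (γ * u) := by rw [sub_eq_zero.mp h]
        rw [hVdef, normSq_conj, normSq_mul, normSq_ofReal] at h3
        have h4 : 0 < normSq u := normSq_pos.mpr (exp_ne_zero η)
        have h5 : (γ ^ 2 - 1) * normSq u = 0 := by linarith
        have := (mul_eq_zero.mp h5).resolve_right h4.ne'
        linarith
      · rw [hVdef, mul_conj] at h
        have : γ * normSq u - 1 = 0 := by exact_mod_cast h
        linarith
    refine (Set.infinite_of_injOn_mapsTo (s := Set.Ioc (-Real.pi) Real.pi) (t := S)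
      (f := fun φ : ℝ => (c : ℂ) * cosh (η.re + φ * I)) ?_ ?_
      (Set.Ioc_infinite (by linarith [Real.pi_pos]))) hfin
    · intro x hx y hy hxy
      have h := cl_cosh_inj (x := η.re + x * I) (y := η.re + y * I) (by simp; linarith)
        (by simp; linarith) (by simpa using hx.1) (by simpa using hx.2) (by simpa using hy.1)
        (by simpa using hy.2) (mul_left_cancel₀ hcC hxy)
      simpa using congrArg im h
    · intro φ _
      have hre : ((η.re : ℂ) + φ * I).re = η.re := by simp
      set η' : ℂ := (η.re : ℂ) + φ * I with hη'
      show (c : ℂ) * cosh η' ∈ S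
      rw [hSmem η' (by rw [hre]; exact hη), hzbeq, hzeq, hw, map_zero]
      have hk : (γ : ℂ) * (exp η' * starRingEnd ℂ (exp η')) = 1 := by
        rw [mul_conj]
        have : normSq (exp η') = normSq (exp η) := by
          rw [normSq_eq_norm_sq, normSq_eq_norm_sq, norm_exp, norm_exp, hre]
        rw [this]
        exact_mod_cast hkey
      have hU := huU η'
      have hV := hVW η'
      set u := exp η'
      set U := exp (-η')
      set V := starRingEnd ℂ u with hVdef
      set W := starRingEnd ℂ U
      have hVs : V = s * U := by
        linear_combination (s * U) * hk - s * γ * V * hU - V * hγsC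
      have hWs : W = γ * u := by
        linear_combination (-W) * hk + γ * u * hV
      linear_combination d * hVs + d * hWs + U * hdsC
end

section
/- (MacLaurin's theorem, planar version.) Let a > b > 0 and −b² < λ < 0. Let Ω = { x + iy : x²/a² + y²/b² ≤ 1 } and Ω_λ = { x + iy : x²/(a² + λ) + y²/(b² + λ) ≤ 1 } be confocal ellipses. Then for every z ∈ ℂ with z ∉ Ω, (1/(π√((a² + λ)(b² + λ)))) ∫_{Ω_λ} 1/(ζ − z) dA(ζ) = (1/(π a b)) ∫_Ω 1/(ζ − z) dA(ζ). -/
open Complex MeasureTheory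

/-- The ellipse parametrization in terms of the Joukowski map. -/
lemma jouk_eq (p q s θ : ℝ) (hs : s ≠ 0) :
    (p : ℂ) * (s * exp (θ * I)) + q / (s * exp (θ * I)) =
      ((p * s + q / s : ℝ) : ℂ) * (Real.cos θ : ℝ)
        + ((p * s - q / s : ℝ) : ℂ) * (Real.sin θ : ℝ) * I := by
  have hs' : (s : ℂ) ≠ 0 := by exact_mod_cast hs
  have h1 : (q : ℂ) / (s * exp (θ * I)) = q / s * exp (-(θ * I)) := by
    rw [exp_neg]; field_simp
  have h2 : exp (-(θ * I)) = cos θ - sin θ * I := by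
    have := exp_mul_I (-(θ : ℂ))
    rw [Complex.cos_neg, Complex.sin_neg] at this
    rw [← neg_mul, this]; ring
  rw [h1, h2, exp_mul_I]
  push_cast
  ring

lemma circle_angular (f : ℂ → ℂ) (R : ℝ) (hR : 0 < R) :
    (∮ w in C(0, R), (w - 0)⁻¹ • f w) =
      I * ∫ θ in Set.Ioo (-Real.pi) Real.pi, f (R * exp (θ * I)) := by
  have hper : Function.Periodic (fun θ : ℝ => f (R * exp (θ * I))) (2 * Real.pi) := by
    intro θ
    have : exp (((θ + 2 * Real.pi : ℝ) : ℂ) * I) = exp (θ * I) := by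
      push_cast
      rw [add_mul]
      exact Complex.exp_periodic _
    simp only [this]
  have h := hper.intervalIntegral_add_eq 0 (-Real.pi)
  rw [← integral_Ioc_eq_integral_Ioo, ← intervalIntegral.integral_of_le (by linarith [Real.pi_pos])]
  rw [show -Real.pi + 2 * Real.pi = Real.pi by ring, zero_add] at h
  rw [← h, circleIntegral, ← intervalIntegral.integral_const_mul]
  refine intervalIntegral.integral_congr fun θ _ => ?_
  have hne : (R : ℂ) * exp (θ * I) ≠ 0 :=
    mul_ne_zero (by exact_mod_cast hR.ne') (exp_ne_zero _)
  simp only [deriv_circleMap, circleMap_zero, sub_zero, smul_eq_mul]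
  generalize (R : ℂ) * exp (θ * I) = u at hne ⊢
  field_simp

lemma angular_eq (a b a' b' : ℝ) (hb' : 0 < b') (hb : b' < b) (hab : b < a) (ha' : 0 < a')
    (hc : a ^ 2 - b ^ 2 = a' ^ 2 - b' ^ 2) (z : ℂ)
    (hz : ¬ (z.re ^ 2 / a ^ 2 + z.im ^ 2 / b ^ 2 ≤ 1)) :
    (∫ θ in Set.Ioo (-Real.pi) Real.pi,
      ((a : ℂ) * (Real.cos θ : ℝ) + (b : ℂ) * (Real.sin θ : ℝ) * I - z)⁻¹) =
    ∫ θ in Set.Ioo (-Real.pi) Real.pi,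
      ((a' : ℂ) * (Real.cos θ : ℝ) + (b' : ℂ) * (Real.sin θ : ℝ) * I - z)⁻¹ := by
  have haa : a' < a := by nlinarith
  have hab' : b' < a' := by nlinarith
  obtain ⟨p, hp⟩ : ∃ p, p = (a + b) / 2 := ⟨_, rfl⟩
  obtain ⟨q, hq⟩ : ∃ q, q = (a - b) / 2 := ⟨_, rfl⟩
  obtain ⟨t, ht⟩ : ∃ t, t = (a' + b') / (a + b) := ⟨_, rfl⟩
  have hsum : 0 < a + b := by linarith
  have hp0 : 0 < p := by linarith
  have hq0 : 0 < q := by linarith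
  have ht0 : 0 < t := by rw [ht]; apply div_pos <;> linarith
  have ht1 : t ≤ 1 := by rw [ht, div_le_one hsum]; linarith
  have hpt : p * t = (a' + b') / 2 := by rw [hp, ht]; field_simp
  have hqt : q / t = (a' - b') / 2 := by
    rw [div_eq_iff ht0.ne', hq, ht]; field_simp; nlinarith
  have key : ∀ w : ℂ, t ≤ ‖w‖ → ‖w‖ ≤ 1 → w ≠ 0 ∧ (p : ℂ) * w + q / w - z ≠ 0 := by
    intro w h1 h2
    have hs : 0 < ‖w‖ := ht0.trans_le h1
    refine ⟨norm_pos_iff.mp hs, fun h0 => hz ?_⟩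
    have hw := jouk_eq p q ‖w‖ w.arg hs.ne'
    rw [norm_mul_exp_arg_mul_I, sub_eq_zero.mp h0] at hw
    set s := ‖w‖
    have hre : z.re = (p * s + q / s) * Real.cos w.arg := by
      rw [hw, ← ofReal_mul, ← ofReal_mul]; simp [-ofReal_cos, -ofReal_sin]
    have him : z.im = (p * s - q / s) * Real.sin w.arg := by
      rw [hw, ← ofReal_mul, ← ofReal_mul]; simp [-ofReal_cos, -ofReal_sin]
    have hps : p * t ≤ p * s := by gcongr
    have hqs : q / s ≤ q / t := by gcongr
    have hqs1 : q ≤ q / s := by rw [le_div_iff₀ hs]; nlinarith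
    have hps1 : p * s ≤ p := by nlinarith
    have hB0 : 0 ≤ p * s - q / s := by linarith
    have hB : p * s - q / s ≤ b := by linarith
    have hA0 : 0 ≤ p * s + q / s := by positivity
    have hA : p * s + q / s ≤ a := by
      have hmul : (p * s) * (q / s) = p * q := by field_simp
      have h3 : (p * s + q / s) ^ 2 = (p * s - q / s) ^ 2 + 4 * (p * q) := by
        rw [← hmul]; ring
      have h4 : a ^ 2 = b ^ 2 + 4 * (p * q) := by rw [hp, hq]; ring
      have h5 : (p * s - q / s) ^ 2 ≤ b ^ 2 := by gcongr
      exact le_of_sq_le_sq (by linarith) (by linarith)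
    rw [hre, him, mul_pow, mul_pow]
    have e1 : (p * s + q / s) ^ 2 * Real.cos w.arg ^ 2 / a ^ 2 ≤ Real.cos w.arg ^ 2 := by
      rw [div_le_iff₀ (by nlinarith), mul_comm]; gcongr
    have e2 : (p * s - q / s) ^ 2 * Real.sin w.arg ^ 2 / b ^ 2 ≤ Real.sin w.arg ^ 2 := by
      rw [div_le_iff₀ (by nlinarith), mul_comm]; gcongr
    linarith [Real.sin_sq_add_cos_sq w.arg]
  have hdiff : ∀ w : ℂ, t ≤ ‖w‖ → ‖w‖ ≤ 1 →
      DifferentiableAt ℂ (fun w : ℂ => ((p : ℂ) * w + q / w - z)⁻¹) w := by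
    intro w h1 h2
    obtain ⟨h3, h4⟩ := key w h1 h2
    fun_prop (disch := assumption)
  have main := circleIntegral_sub_center_inv_smul_eq_of_differentiable_on_annulus_off_countable
    (c := 0) ht0 ht1 (f := fun w : ℂ => ((p : ℂ) * w + q / w - z)⁻¹) Set.countable_empty
    (by
      intro w hw
      simp only [Set.mem_sdiff, Metric.mem_closedBall, Metric.mem_ball, dist_zero_right,
        not_lt] at hw
      exact (hdiff w hw.2 hw.1).continuousAt.continuousWithinAt)
    (by
      intro w hw
      simp only [Set.mem_sdiff, Metric.mem_closedBall, Metric.mem_ball, dist_zero_right,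
        not_le] at hw
      exact hdiff w hw.1.2.le hw.1.1.le)
  rw [circle_angular _ _ one_pos, circle_angular _ _ ht0] at main
  have main := mul_left_cancel₀ I_ne_zero main
  simp only [jouk_eq p q 1 _ one_ne_zero, jouk_eq p q t _ ht0.ne', hpt, hqt] at main
  convert main using 8
  · rw [hp, hq]; ring
  · rw [hp, hq]; ring
  · ring
  · ring

/-- Cartesian to elliptic coordinates. -/
lemma scale_integral (a b : ℝ) (ha : 0 < a) (hb : 0 < b) (g : ℝ × ℝ → ℂ) :
    ∫ v, g v = ((a * b : ℝ) : ℂ) * ∫ v : ℝ × ℝ, g (a * v.1, b * v.2) := by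
  let L : ℝ × ℝ →L[ℝ] ℝ × ℝ :=
    (a • ContinuousLinearMap.id ℝ ℝ).prodMap (b • ContinuousLinearMap.id ℝ ℝ)
  have hL : ∀ v, L v = (a * v.1, b * v.2) := fun v => rfl
  have hdet : L.det = a * b := by
    have : (L : ℝ × ℝ →ₗ[ℝ] ℝ × ℝ) =
      (a • LinearMap.id (R := ℝ) (M := ℝ)).prodMap (b • LinearMap.id (R := ℝ) (M := ℝ)) := rfl
    rw [ContinuousLinearMap.det, this, LinearMap.det_prodMap]
    simp
  have himg : L '' Set.univ = Set.univ := by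
    rw [Set.image_univ, Set.range_eq_univ]
    intro v
    refine ⟨(v.1 / a, v.2 / b), ?_⟩
    rw [hL]; ext <;> simp <;> field_simp
  have h := integral_image_eq_integral_abs_det_fderiv_smul (volume : Measure (ℝ × ℝ))
    MeasurableSet.univ (f := L) (f' := fun _ => L)
    (fun x _ => L.hasFDerivWithinAt) (by
      intro v _ w _ hvw
      rw [hL, hL] at hvw
      simp only [Prod.mk.injEq, mul_eq_mul_left_iff, ha.ne', hb.ne', or_false] at hvw
      exact Prod.ext hvw.1 hvw.2) g
  rw [himg, setIntegral_univ, setIntegral_univ, integral_smul, hdet,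
    abs_of_pos (mul_pos ha hb)] at h
  rw [h]
  simp only [hL]
  rw [real_smul]

lemma ellipse_integral (a b : ℝ) (ha : 0 < a) (hb : 0 < b) (z : ℂ)
    (hz : ¬ (z.re ^ 2 / a ^ 2 + z.im ^ 2 / b ^ 2 ≤ 1)) :
    (∫ ζ in {p : ℂ | p.re ^ 2 / a ^ 2 + p.im ^ 2 / b ^ 2 ≤ 1}, (ζ - z)⁻¹) =
    ((a * b : ℝ) : ℂ) * ∫ r in Set.Ioc (0 : ℝ) 1, ∫ θ in Set.Ioo (-Real.pi) Real.pi,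
      (r : ℂ) * (((r * a : ℝ) : ℂ) * (Real.cos θ : ℝ) +
        ((r * b : ℝ) : ℂ) * (Real.sin θ : ℝ) * I - z)⁻¹ := by
  have hmeas : MeasurableSet {p : ℂ | p.re ^ 2 / a ^ 2 + p.im ^ 2 / b ^ 2 ≤ 1} :=
    (isClosed_le (by fun_prop) continuous_const).measurableSet
  rw [← integral_indicator hmeas,
    ← (Complex.volume_preserving_equiv_real_prod.symm).integral_comp
      measurableEquivRealProd.symm.measurableEmbedding,
    scale_integral a b ha hb, ← integral_comp_polarCoord_symm]
  congr 1
  set G : ℝ × ℝ → ℂ := fun v => (v.1 : ℂ) * (((v.1 * a : ℝ) : ℂ) * (Real.cos v.2 : ℝ) +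
        ((v.1 * b : ℝ) : ℂ) * (Real.sin v.2 : ℝ) * I - z)⁻¹ with hG
  have hcont : ContinuousOn G (Set.Icc (0 : ℝ) 1 ×ˢ Set.Icc (-Real.pi) Real.pi) := by
    have hne : ∀ v ∈ Set.Icc (0 : ℝ) 1 ×ˢ Set.Icc (-Real.pi) Real.pi,
        ((v.1 * a : ℝ) : ℂ) * (Real.cos v.2 : ℝ) +
        ((v.1 * b : ℝ) : ℂ) * (Real.sin v.2 : ℝ) * I - z ≠ 0 := by
      rintro ⟨r, θ⟩ ⟨⟨hr0, hr1⟩, -⟩ h0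
      apply hz
      have hw := (sub_eq_zero.mp h0).symm
      simp only at hw hr0 hr1
      have hre : z.re = r * a * Real.cos θ := by
        rw [hw, ← ofReal_mul, ← ofReal_mul]; simp [-ofReal_cos, -ofReal_sin]
      have him : z.im = r * b * Real.sin θ := by
        rw [hw, ← ofReal_mul, ← ofReal_mul]; simp [-ofReal_cos, -ofReal_sin]
      have : z.re ^ 2 / a ^ 2 + z.im ^ 2 / b ^ 2 = r ^ 2 := by
        rw [hre, him]; field_simp; rw [Real.cos_sq_add_sin_sq, mul_one]
      rw [this]; nlinarith
    apply ContinuousOn.mul (by fun_prop)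
    exact ContinuousOn.inv₀ (by fun_prop) hne
  have hint : IntegrableOn G (Set.Ioc (0 : ℝ) 1 ×ˢ Set.Ioo (-Real.pi) Real.pi)
      (volume.prod volume) := by
    have := hcont.integrableOn_compact (μ := volume) (isCompact_Icc.prod isCompact_Icc)
    exact this.mono_set (Set.prod_mono Set.Ioc_subset_Icc_self Set.Ioo_subset_Icc_self)
  have h2 := setIntegral_prod G hint
  rw [show (∫ r in Set.Ioc (0 : ℝ) 1, ∫ θ in Set.Ioo (-Real.pi) Real.pi,
      (r : ℂ) * (((r * a : ℝ) : ℂ) * (Real.cos θ : ℝ) +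
        ((r * b : ℝ) : ℂ) * (Real.sin θ : ℝ) * I - z)⁻¹) = _ from h2.symm,
    ← Measure.volume_eq_prod,
    ← integral_indicator (measurableSet_Ioc.prod measurableSet_Ioo),
    ← integral_indicator polarCoord.open_target.measurableSet]
  congr 1
  ext ⟨r, θ⟩
  by_cases hr : (r, θ) ∈ polarCoord.target
  · rw [Set.indicator_of_mem hr]
    have hr' : 0 < r ∧ θ ∈ Set.Ioo (-Real.pi) Real.pi := hr
    have hmem : (r * (a * Real.cos θ)) ^ 2 / a ^ 2 + (r * (b * Real.sin θ)) ^ 2 / b ^ 2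
        = r ^ 2 := by
      field_simp; rw [Real.cos_sq_add_sin_sq, mul_one]
    by_cases h1 : r ≤ 1
    · rw [Set.indicator_of_mem (show (r, θ) ∈ Set.Ioc (0 : ℝ) 1 ×ˢ Set.Ioo (-Real.pi) Real.pi from
        ⟨⟨hr'.1, h1⟩, hr'.2⟩), Set.indicator_of_mem]
      · simp only [hG, polarCoord_symm_apply, measurableEquivRealProd_symm_apply, real_smul]
        congr 2
        apply Complex.ext <;> simp [-ofReal_cos, -ofReal_sin] <;> ring
      · simp only [polarCoord_symm_apply, measurableEquivRealProd_symm_apply, Set.mem_ofPred_eq]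
        rw [mul_left_comm a, mul_left_comm b, hmem]
        nlinarith
    · rw [Set.indicator_of_notMem (s := Set.Ioc (0 : ℝ) 1 ×ˢ Set.Ioo (-Real.pi) Real.pi)
        (fun h => h1 h.1.2), Set.indicator_of_notMem, smul_zero]
      simp only [polarCoord_symm_apply, measurableEquivRealProd_symm_apply, Set.mem_ofPred_eq]
      rw [mul_left_comm a, mul_left_comm b, hmem]
      nlinarith
  · rw [Set.indicator_of_notMem hr, Set.indicator_of_notMem]
    exact fun h => hr ⟨h.1.1, h.2⟩

/-- MacLaurin's theorem (planar version): the normalized Cauchy potentials of two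
confocal ellipses agree outside the larger one. -/
theorem maclaurin_confocal_ellipses
    (a b lam : ℝ) (hb : 0 < b) (hab : b < a) (hlam1 : -b ^ 2 < lam) (hlam2 : lam < 0)
    (Ω : Set ℂ) (hΩ : Ω = {p : ℂ | p.re ^ 2 / a ^ 2 + p.im ^ 2 / b ^ 2 ≤ 1})
    (Ωlam : Set ℂ)
    (hΩlam : Ωlam = {p : ℂ | p.re ^ 2 / (a ^ 2 + lam) + p.im ^ 2 / (b ^ 2 + lam) ≤ 1})
    (z : ℂ) (hz : z ∉ Ω) :
    ((Real.pi * Real.sqrt ((a ^ 2 + lam) * (b ^ 2 + lam)) : ℝ) : ℂ)⁻¹ *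
        (∫ ζ in Ωlam, (ζ - z)⁻¹)
      = ((Real.pi * a * b : ℝ) : ℂ)⁻¹ * (∫ ζ in Ω, (ζ - z)⁻¹) := by
  have hA0 : 0 < a ^ 2 + lam := by nlinarith
  have hB0 : 0 < b ^ 2 + lam := by linarith
  rw [Real.sqrt_mul hA0.le]
  obtain ⟨a', ha'⟩ : ∃ x, x = Real.sqrt (a ^ 2 + lam) := ⟨_, rfl⟩
  obtain ⟨b', hb'⟩ : ∃ x, x = Real.sqrt (b ^ 2 + lam) := ⟨_, rfl⟩
  have ha2 : a ^ 2 + lam = a' ^ 2 := by rw [ha', Real.sq_sqrt hA0.le]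
  have hb2 : b ^ 2 + lam = b' ^ 2 := by rw [hb', Real.sq_sqrt hB0.le]
  have ha'0 : 0 < a' := by rw [ha']; exact Real.sqrt_pos.mpr hA0
  have hb'0 : 0 < b' := by rw [hb']; exact Real.sqrt_pos.mpr hB0
  have ha0 : 0 < a := hb.trans hab
  have hbb : b' < b := by nlinarith
  have haa : a' < a := by nlinarith
  rw [← ha', ← hb']
  rw [ha2, hb2] at hΩlam
  have hz1 : ¬ (z.re ^ 2 / a ^ 2 + z.im ^ 2 / b ^ 2 ≤ 1) := by
    rw [hΩ] at hz; exact hz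
  have hz2 : ¬ (z.re ^ 2 / a' ^ 2 + z.im ^ 2 / b' ^ 2 ≤ 1) := by
    intro h
    apply hz1
    refine le_trans ?_ h
    gcongr
  rw [hΩ, hΩlam, ellipse_integral a b ha0 hb z hz1, ellipse_integral a' b' ha'0 hb'0 z hz2]
  have heq : (∫ r in Set.Ioc (0 : ℝ) 1, ∫ θ in Set.Ioo (-Real.pi) Real.pi,
      (r : ℂ) * (((r * a' : ℝ) : ℂ) * (Real.cos θ : ℝ) +
        ((r * b' : ℝ) : ℂ) * (Real.sin θ : ℝ) * I - z)⁻¹) =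
      ∫ r in Set.Ioc (0 : ℝ) 1, ∫ θ in Set.Ioo (-Real.pi) Real.pi,
      (r : ℂ) * (((r * a : ℝ) : ℂ) * (Real.cos θ : ℝ) +
        ((r * b : ℝ) : ℂ) * (Real.sin θ : ℝ) * I - z)⁻¹ := by
    refine setIntegral_congr_fun measurableSet_Ioc fun r hr => ?_
    obtain ⟨hr0, hr1⟩ := hr
    simp only [integral_const_mul]
    congr 1
    symm
    refine angular_eq (r * a) (r * b) (r * a') (r * b') (by positivity) (by gcongr)
      (by gcongr) (by positivity) ?_ z ?_
    · have : a ^ 2 - b ^ 2 = a' ^ 2 - b' ^ 2 := by linarith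
      linear_combination r ^ 2 * this
    · intro h
      apply hz1
      refine le_trans ?_ h
      have : ∀ x : ℝ, 0 < x → r * x ≤ x := fun x hx => by nlinarith
      gcongr
      · exact this a ha0
      · exact this b hb
  rw [heq]
  generalize (∫ r in Set.Ioc (0 : ℝ) 1, _ : ℂ) = J
  have h1 : (a : ℂ) ≠ 0 := by exact_mod_cast ha0.ne'
  have h2 : (b : ℂ) ≠ 0 := by exact_mod_cast hb.ne'
  have h3 : (a' : ℂ) ≠ 0 := by exact_mod_cast ha'0.ne'
  have h4 : (b' : ℂ) ≠ 0 := by exact_mod_cast hb'0.ne'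
  have h5 : (Real.pi : ℂ) ≠ 0 := by exact_mod_cast Real.pi_ne_zero
  push_cast
  field_simp
end

section
/- Let a > b > 0 and Ω = { x + iy : x²/a² + y²/b² ≤ 1 } ⊂ ℂ. Then for every z in the open interior { x + iy : x²/a² + y²/b² < 1 }, (1/π) ∫_Ω 1/(z − ζ) dA(ζ) = conj(z) − ((a − b)/(a + b)) z. -/
open Complex MeasureTheory
lemma Apos (a b : ℝ) (ha : 0 < a) (hb : 0 < b) (t : ℝ) :
    0 < Real.cos t ^ 2 / a ^ 2 + Real.sin t ^ 2 / b ^ 2 := by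
  have h := Real.sin_sq_add_cos_sq t
  by_cases hc : Real.cos t = 0
  · have : Real.sin t ^ 2 = 1 := by rw [hc] at h; linarith
    rw [hc, this]; positivity
  · positivity

lemma J0 (a b : ℝ) (ha : 0 < a) (hb : 0 < b) :
    ∫ t in (-Real.pi)..Real.pi, (Real.cos t ^ 2 / a ^ 2 + Real.sin t ^ 2 / b ^ 2)⁻¹
      = 2 * Real.pi * (a * b) := by
  have key : ∀ t ∈ Set.uIcc (-Real.pi) Real.pi, HasDerivAt (fun t => (a * b) * (t + Real.arctan
      ((a - b) * (Real.sin t * Real.cos t) / (b * Real.cos t ^ 2 + a * Real.sin t ^ 2))))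
      ((Real.cos t ^ 2 / a ^ 2 + Real.sin t ^ 2 / b ^ 2)⁻¹) t := by
    intro t _
    have h := Real.sin_sq_add_cos_sq t
    have hA := Apos a b ha hb t
    have hD : 0 < b * Real.cos t ^ 2 + a * Real.sin t ^ 2 := by
      by_cases hc : Real.cos t = 0
      · have : Real.sin t ^ 2 = 1 := by rw [hc] at h; linarith
        rw [hc, this]; simpa using ha
      · positivity
    have hn := (((Real.hasDerivAt_sin t).mul (Real.hasDerivAt_cos t)).const_mul (a - b))
    have hd := (((Real.hasDerivAt_cos t).pow 2).const_mul b).add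
      (((Real.hasDerivAt_sin t).pow 2).const_mul a)
    have := ((hasDerivAt_id t).add ((hn.div hd hD.ne').arctan)).const_mul (a * b)
    refine this.congr_deriv ?_
    simp only [Pi.mul_apply, Pi.add_apply, Pi.pow_apply, Pi.div_apply]
    have hE : 0 < b ^ 2 * Real.cos t ^ 2 + a ^ 2 * Real.sin t ^ 2 := by
      have := mul_pos hA (by positivity : 0 < a ^ 2 * b ^ 2)
      field_simp at this; nlinarith
    have e1 : (Real.cos t ^ 2 / a ^ 2 + Real.sin t ^ 2 / b ^ 2)⁻¹ =
      a ^ 2 * b ^ 2 / (b ^ 2 * Real.cos t ^ 2 + a ^ 2 * Real.sin t ^ 2) := by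
      field_simp
      
    have e2 : (b * Real.cos t ^ 2 + a * Real.sin t ^ 2) ^ 2 +
       ((a - b) * (Real.sin t * Real.cos t)) ^ 2 =
        b ^ 2 * Real.cos t ^ 2 + a ^ 2 * Real.sin t ^ 2 := by
      have : Real.cos t ^ 2 = 1 - Real.sin t ^ 2 := by linarith
      rw [mul_pow, mul_pow, this]; ring
    have e3 : 1 + ((a - b) * (Real.sin t * Real.cos t) / (b * Real.cos t ^ 2 + a * Real.sin t ^ 2)) ^ 2
       = (b ^ 2 * Real.cos t ^ 2 + a ^ 2 * Real.sin t ^ 2) / (b * Real.cos t ^ 2 + a * Real.sin t ^ 2) ^ 2 := by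
      rw [← e2]; field_simp
    rw [e1, e3]
    field_simp
    have h2 : Real.cos t ^ 2 = 1 - Real.sin t ^ 2 := by linarith
    have h4 : Real.cos t ^ 4 = (1 - Real.sin t ^ 2) ^ 2 := by rw [← h2]; ring
    ring_nf
    simp only [h2, h4]
    ring
  rw [intervalIntegral.integral_eq_sub_of_hasDerivAt key]
  · simp; ring
  · apply Continuous.intervalIntegrable
    exact Continuous.inv₀ (by fun_prop) (fun t => (Apos a b ha hb t).ne')

lemma Jc (a b : ℝ) (ha : 0 < a) (hb : 0 < b) (hab : b < a) :
    ∫ t in (-Real.pi)..Real.pi, Real.cos t ^ 2 * (Real.cos t ^ 2 / a ^ 2 + Real.sin t ^ 2 / b ^ 2)⁻¹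
      = 2 * Real.pi * (a ^ 2 * b) / (a + b) := by
  have hne : a ^ 2 - b ^ 2 ≠ 0 := by nlinarith
  have : ∀ t, Real.cos t ^ 2 * (Real.cos t ^ 2 / a ^ 2 + Real.sin t ^ 2 / b ^ 2)⁻¹ =
     (a ^ 2 / (a ^ 2 - b ^ 2)) * (Real.cos t ^ 2 / a ^ 2 + Real.sin t ^ 2 / b ^ 2)⁻¹
      - (a ^ 2 * b ^ 2 / (a ^ 2 - b ^ 2)) := by
    intro t
    have hA := (Apos a b ha hb t).ne'
    have h2 : Real.sin t ^ 2 = 1 - Real.cos t ^ 2 := by linarith [Real.sin_sq_add_cos_sq t]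
    rw [h2] at hA ⊢
    have : (Real.cos t ^ 2 / a ^ 2 + (1 - Real.cos t ^ 2) / b ^ 2) * (Real.cos t ^ 2 / a ^ 2 + (1 - Real.cos t ^ 2) / b ^ 2)⁻¹ = 1 := mul_inv_cancel₀ hA
    generalize (Real.cos t ^ 2 / a ^ 2 + (1 - Real.cos t ^ 2) / b ^ 2)⁻¹ = u at *
    field_simp
    field_simp at this
    linear_combination -this
  simp_rw [this]
  rw [intervalIntegral.integral_sub, intervalIntegral.integral_const_mul, J0 a b ha hb]
  · have : a + b ≠ 0 := by positivity
    have : a - b ≠ 0 := by linarith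
    simp
    field_simp
    ring
  · apply Continuous.intervalIntegrable
    exact continuous_const.mul (Continuous.inv₀ (by fun_prop) (fun t => (Apos a b ha hb t).ne'))
  · simp

lemma Js (a b : ℝ) (ha : 0 < a) (hb : 0 < b) (hab : b < a) :
    ∫ t in (-Real.pi)..Real.pi, Real.sin t ^ 2 * (Real.cos t ^ 2 / a ^ 2 + Real.sin t ^ 2 / b ^ 2)⁻¹
      = 2 * Real.pi * (a * b ^ 2) / (a + b) := by
  have : ∀ t, Real.sin t ^ 2 * (Real.cos t ^ 2 / a ^ 2 + Real.sin t ^ 2 / b ^ 2)⁻¹ =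
     (Real.cos t ^ 2 / a ^ 2 + Real.sin t ^ 2 / b ^ 2)⁻¹ - 
     Real.cos t ^ 2 * (Real.cos t ^ 2 / a ^ 2 + Real.sin t ^ 2 / b ^ 2)⁻¹ := by
    intro t
    rw [Real.sin_sq t]; ring
  simp_rw [this]
  have hc : Continuous fun t => (Real.cos t ^ 2 / a ^ 2 + Real.sin t ^ 2 / b ^ 2)⁻¹ :=
    (Continuous.inv₀ (by fun_prop) (fun t => (Apos a b ha hb t).ne'))
  rw [intervalIntegral.integral_sub, Jc a b ha hb hab, J0 a b ha hb]
  · have : a + b ≠ 0 := by positivity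
    field_simp
    ring
  · apply Continuous.intervalIntegrable hc
  · exact Continuous.intervalIntegrable (by fun_prop) _ _

lemma Jsc (a b : ℝ) :
    ∫ t in (-Real.pi)..Real.pi, Real.sin t * Real.cos t * (Real.cos t ^ 2 / a ^ 2 + Real.sin t ^ 2 / b ^ 2)⁻¹
      = 0 := by
  have := intervalIntegral.integral_comp_neg (a := -Real.pi) (b := Real.pi) (fun t => Real.sin t * Real.cos t * (Real.cos t ^ 2 / a ^ 2 + Real.sin t ^ 2 / b ^ 2)⁻¹)
  simp [-intervalIntegral.integral_comp_neg] at this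
  linarith

lemma anti (g : ℝ → ℂ) (hg : ∀ t, g (t + Real.pi) = - g t) :
    ∫ t in (-Real.pi)..Real.pi, g t = 0 := by
  have hp : Function.Periodic g (2 * Real.pi) := by
    intro t
    rw [two_mul, ← add_assoc, hg, hg, neg_neg]
  have h1 := hp.intervalIntegral_add_eq (-Real.pi) 0
  have h2 := intervalIntegral.integral_comp_add_right (a := -Real.pi) (b := Real.pi) g Real.pi
  simp_rw [hg] at h2
  rw [intervalIntegral.integral_neg] at h2
  rw [show -Real.pi + 2 * Real.pi = Real.pi by ring] at h1
  rw [show -Real.pi + Real.pi = 0 by ring, show Real.pi + Real.pi = 0 + 2 * Real.pi by ring, ← h1] at h2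
  exact self_eq_neg.mp h2.symm

lemma polar_part (R : ℝ → ℝ) (hR : Continuous R) (hpos : ∀ t, 0 ≤ R t) (g : ℝ → ℂ) (hg : Continuous g) :
    ∫ p in polarCoord.target, ({p : ℝ × ℝ | p.1 ≤ R p.2}.indicator (fun p => g p.2) p)
      = ∫ t in (-Real.pi)..Real.pi, (R t : ℂ) * g t := by
  obtain ⟨M, hM⟩ := (isCompact_Icc (a := -Real.pi) (b := Real.pi)).exists_bound_of_continuousOn
    hR.continuousOn
  obtain ⟨K, hK⟩ := (isCompact_Icc (a := -Real.pi) (b := Real.pi)).exists_bound_of_continuousOn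
    hg.continuousOn
  have hS : MeasurableSet {p : ℝ × ℝ | p.1 ≤ R p.2} :=
    (isClosed_le (by fun_prop) (by fun_prop)).measurableSet
  have hint : IntegrableOn ({p : ℝ × ℝ | p.1 ≤ R p.2}.indicator (fun p => g p.2))
      (Set.Ioi 0 ×ˢ Set.Ioo (-Real.pi) Real.pi) (volume.prod volume) := by
    have h1 : IntegrableOn ({p : ℝ × ℝ | p.1 ≤ R p.2}.indicator (fun p => g p.2))
      (Set.Ioc 0 M ×ˢ Set.Ioo (-Real.pi) Real.pi) (volume.prod volume) := by
      refine Measure.integrableOn_of_bounded (M := K) ?_ ?_ ?_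
      · rw [Measure.prod_prod]; simp [ENNReal.mul_eq_top]
      · exact ((by fun_prop : Continuous fun p : ℝ × ℝ => g p.2).stronglyMeasurable.indicator
          hS).aestronglyMeasurable
      · refine (ae_restrict_iff' (measurableSet_Ioc.prod measurableSet_Ioo)).2
          (Filter.Eventually.of_forall ?_)
        rintro ⟨r, t⟩ ⟨_, ht⟩
        exact (norm_indicator_le_norm_self _ _).trans (hK t ⟨ht.1.le, ht.2.le⟩)
    refine h1.of_forall_sdiff_eq_zero (measurableSet_Ioi.prod measurableSet_Ioo) ?_
    rintro ⟨r, t⟩ ⟨⟨hr, ht⟩, hn⟩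
    apply Set.indicator_of_notMem
    intro h
    refine hn ⟨⟨hr, ?_⟩, ht⟩
    exact le_trans h ((le_abs_self _).trans (hM t ⟨ht.1.le, ht.2.le⟩))
  rw [polarCoord_target, Measure.volume_eq_prod, ← Measure.prod_restrict, integral_prod_symm _ (by
    rw [Measure.prod_restrict]; exact hint),
    intervalIntegral.integral_of_le (by linarith [Real.pi_pos]), integral_Ioc_eq_integral_Ioo]
  congr 1
  ext t
  have : (fun r : ℝ => ({p : ℝ × ℝ | p.1 ≤ R p.2}.indicator (fun p => g p.2) (r, t)))
     = (Set.Iic (R t)).indicator (fun _ => g t) := by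
    ext r; simp [Set.indicator]
  rw [this, integral_indicator measurableSet_Iic, Measure.restrict_restrict measurableSet_Iic,
    Set.inter_comm, Set.Ioi_inter_Iic, setIntegral_const]
  simp [hpos t]

/-- The Cauchy transform of the uniform density `1/π` on the ellipse with semi-axes
`a > b > 0`, evaluated at an interior point `z`, equals `conj z - ((a-b)/(a+b)) z`. -/
theorem cauchy_transform_ellipse_inside
    (a b : ℝ) (hb : 0 < b) (hab : b < a)
    (Ω : Set ℂ) (hΩ : Ω = {p : ℂ | p.re ^ 2 / a ^ 2 + p.im ^ 2 / b ^ 2 ≤ 1})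
    (z : ℂ) (hz : z.re ^ 2 / a ^ 2 + z.im ^ 2 / b ^ 2 < 1) :
    (Real.pi : ℂ)⁻¹ * (∫ ζ in Ω, (z - ζ)⁻¹)
      = starRingEnd ℂ z - (((a - b) / (a + b) : ℝ) : ℂ) * z := by
  have ha : 0 < a := hb.trans hab
  have hΩm : MeasurableSet Ω := by
    rw [hΩ]
    exact (isClosed_le (by fun_prop) (by fun_prop)).measurableSet
  set A : ℝ → ℝ := fun t => Real.cos t ^ 2 / a ^ 2 + Real.sin t ^ 2 / b ^ 2 with hAdef
  set B : ℝ → ℝ := fun t => z.re * Real.cos t / a ^ 2 + z.im * Real.sin t / b ^ 2 with hBdef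
  set C : ℝ := z.re ^ 2 / a ^ 2 + z.im ^ 2 / b ^ 2 - 1 with hCdef
  have hC : C < 0 := by rw [hCdef]; linarith
  have hA : ∀ t, 0 < A t := Apos a b ha hb
  set R : ℝ → ℝ := fun t => (-B t + √(B t ^ 2 - A t * C)) * (A t)⁻¹ with hRdef
  have hAc : Continuous A := by fun_prop
  have hBc : Continuous B := by fun_prop
  have hAi : Continuous fun t => (A t)⁻¹ := hAc.inv₀ (fun t => (hA t).ne')
  have hRc : Continuous R := by fun_prop
  have hdisc : ∀ t, B t ^ 2 < B t ^ 2 - A t * C := fun t => by nlinarith [hA t]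
  have hsq : ∀ t, |B t| < √(B t ^ 2 - A t * C) := fun t => by
    rw [← Real.sqrt_sq_eq_abs]
    exact Real.sqrt_lt_sqrt (sq_nonneg _) (hdisc t)
  have hRpos : ∀ t, 0 ≤ R t := fun t =>
    mul_nonneg (by linarith [hsq t, le_abs_self (B t)]) (inv_nonneg.2 (hA t).le)
  have hmem : ∀ r t : ℝ, 0 < r →
      (z + r * (Real.cos t + Real.sin t * I) ∈ Ω ↔ r ≤ R t) := by
    intro r t hr
    have e1 : (z + r * (Real.cos t + Real.sin t * I)).re = z.re + r * Real.cos t := by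
      simp [-ofReal_cos, -ofReal_sin]
    have e2 : (z + r * (Real.cos t + Real.sin t * I)).im = z.im + r * Real.sin t := by
      simp [-ofReal_cos, -ofReal_sin]
    rw [hΩ, Set.mem_ofPred_eq, e1, e2]
    have e3 : (z.re + r * Real.cos t) ^ 2 / a ^ 2 + (z.im + r * Real.sin t) ^ 2 / b ^ 2
        = A t * r ^ 2 + 2 * B t * r + C + 1 := by
      simp only [hAdef, hBdef, hCdef]; ring
    rw [e3]
    have hs := Real.sq_sqrt ((sq_nonneg (B t)).trans (hdisc t).le)
    have hs0 := hsq t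
    have hAt := hA t
    simp only [hRdef]
    rw [← div_eq_mul_inv, le_div_iff₀ hAt]
    set s := √(B t ^ 2 - A t * C)
    have hab' := abs_lt.1 hs0
    have e4 : A t * (A t * r ^ 2 + 2 * B t * r + C) = (r * A t + B t - s) * (r * A t + B t + s) := by
      linear_combination hs
    have hp : 0 < r * A t + B t + s := by nlinarith [mul_pos hr hAt]
    constructor
    · intro h
      have : (r * A t + B t - s) * (r * A t + B t + s) ≤ 0 := by
        rw [← e4]; exact mul_nonpos_of_nonneg_of_nonpos hAt.le (by linarith)
      by_contra hcon
      have : 0 < (r * A t + B t - s) * (r * A t + B t + s) := mul_pos (by linarith) hp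
      linarith
    · intro h
      have : A t * (A t * r ^ 2 + 2 * B t * r + C) ≤ 0 := by
        rw [e4]; exact mul_nonpos_of_nonpos_of_nonneg (by linarith) hp.le
      have := nonpos_of_mul_nonpos_right this hAt
      linarith
  -- polar coordinates
  have step1 : (∫ ζ in Ω, (z - ζ)⁻¹) = ∫ t in (-Real.pi)..Real.pi,
      (R t : ℂ) * (-((Real.cos t : ℂ) - Real.sin t * I)) := by
    rw [← integral_indicator hΩm, ← integral_add_left_eq_self _ z,
      ← Complex.integral_comp_polarCoord_symm,
      ← polar_part R hRc hRpos (fun t => -((Real.cos t : ℂ) - Real.sin t * I)) (by fun_prop)]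
    refine setIntegral_congr_fun polarCoord.open_target.measurableSet ?_
    rintro ⟨r, t⟩ ⟨hr, _⟩
    have hr : 0 < r := hr
    simp only [Complex.polarCoord_symm_apply]
    by_cases h : r ≤ R t
    · rw [Set.indicator_of_mem ((hmem r t hr).2 h), Set.indicator_of_mem (by exact h)]
      have hcs : ((Real.cos t : ℂ) + Real.sin t * I) * (Real.cos t - Real.sin t * I) = 1 := by
        have : (Real.cos t : ℂ) ^ 2 + (Real.sin t : ℂ) ^ 2 = 1 := by
          exact_mod_cast Real.cos_sq_add_sin_sq t
        linear_combination this - (Real.sin t : ℂ) ^ 2 * I_sq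
      have hrc : (r : ℂ) ≠ 0 := by exact_mod_cast hr.ne'
      have hi : ((Real.cos t : ℂ) + Real.sin t * I)⁻¹ = (Real.cos t - Real.sin t * I) :=
        inv_eq_of_mul_eq_one_right hcs
      rw [sub_add_cancel_left, inv_neg, mul_inv, hi, Complex.real_smul]
      field_simp
    · rw [Set.indicator_of_notMem (fun h' => h ((hmem r t hr).1 h')),
        Set.indicator_of_notMem (by exact h), smul_zero]
  have step2 : ∀ t, (R t : ℂ) * (-((Real.cos t : ℂ) - Real.sin t * I)) =
      ((z.re / a ^ 2 * (Real.cos t ^ 2 * (A t)⁻¹)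
        + z.im / b ^ 2 * (Real.sin t * Real.cos t * (A t)⁻¹) : ℝ) : ℂ)
      - I * ((z.re / a ^ 2 * (Real.sin t * Real.cos t * (A t)⁻¹)
        + z.im / b ^ 2 * (Real.sin t ^ 2 * (A t)⁻¹) : ℝ) : ℂ)
      + ((√(B t ^ 2 - A t * C) * (A t)⁻¹ : ℝ) : ℂ) * (-((Real.cos t : ℂ) - Real.sin t * I)) := by
    intro t
    simp only [hRdef, hBdef]
    generalize (A t)⁻¹ = u
    generalize √_ = s
    push_cast
    ring
  have hi : ∀ f : ℝ → ℂ, Continuous f → IntervalIntegrable f volume (-Real.pi) Real.pi :=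
    fun f hf => hf.intervalIntegrable _ _
  have hi' : ∀ f : ℝ → ℝ, Continuous f → IntervalIntegrable f volume (-Real.pi) Real.pi :=
    fun f hf => hf.intervalIntegrable _ _
  have z3 : ∫ t in (-Real.pi)..Real.pi, ((√(B t ^ 2 - A t * C) * (A t)⁻¹ : ℝ) : ℂ) *
      (-((Real.cos t : ℂ) - Real.sin t * I)) = 0 := by
    apply anti
    intro t
    have h1 : A (t + Real.pi) = A t := by simp [hAdef]
    have h2 : B (t + Real.pi) ^ 2 = B t ^ 2 := by
      simp only [hBdef, Real.cos_add_pi, Real.sin_add_pi]; ring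
    rw [h1, h2, Real.cos_add_pi, Real.sin_add_pi]
    push_cast
    ring
  have jc : ∫ t in (-Real.pi)..Real.pi, Real.cos t ^ 2 * (A t)⁻¹ = _ := Jc a b ha hb hab
  have js : ∫ t in (-Real.pi)..Real.pi, Real.sin t ^ 2 * (A t)⁻¹ = _ := Js a b ha hb hab
  have jsc : ∫ t in (-Real.pi)..Real.pi, Real.sin t * Real.cos t * (A t)⁻¹ = _ := Jsc a b
  rw [step1]
  simp_rw [step2]
  rw [intervalIntegral.integral_add (hi _ (by fun_prop)) (hi _ (by fun_prop)), z3,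
    intervalIntegral.integral_sub (hi _ (by fun_prop)) (hi _ (by fun_prop)),
    intervalIntegral.integral_const_mul, intervalIntegral.integral_ofReal,
    intervalIntegral.integral_ofReal,
    intervalIntegral.integral_add (hi' _ (by fun_prop)) (hi' _ (by fun_prop)),
    intervalIntegral.integral_add (hi' _ (by fun_prop)) (hi' _ (by fun_prop)),
    intervalIntegral.integral_const_mul, intervalIntegral.integral_const_mul,
    intervalIntegral.integral_const_mul, intervalIntegral.integral_const_mul, jc, js, jsc]
  have e1 : z.re / a ^ 2 * (2 * Real.pi * (a ^ 2 * b) / (a + b)) + z.im / b ^ 2 * 0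
      = Real.pi * (z.re * (1 - (a - b) / (a + b))) := by
    have : a + b ≠ 0 := by positivity
    field_simp; ring
  have e2 : z.re / a ^ 2 * 0 + z.im / b ^ 2 * (2 * Real.pi * (a * b ^ 2) / (a + b))
      = Real.pi * (z.im * (1 + (a - b) / (a + b))) := by
    have : a + b ≠ 0 := by positivity
    field_simp; ring
  rw [e1, e2]
  generalize (a - b) / (a + b) = k
  have hpi : (Real.pi : ℂ) ≠ 0 := by exact_mod_cast Real.pi_ne_zero
  rw [ofReal_mul Real.pi, ofReal_mul Real.pi, add_zero, mul_left_comm I, ← mul_sub, inv_mul_cancel_left₀ hpi]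
  apply Complex.ext
  · simp; ring
  · simp; ring
end
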